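/- There exists ε₀ > 0 such that for every z ∈ U with 0 < ‖z‖ ≤ ε₀ and f(z) ≠ 0, the two vectors z and grad log f(z) are either linearly independent over ℂ, or else grad log f(z) = λ•z where λ is a non-zero complex number whose principal argument has absolute value less than π/4. -/

import Mathlib

/-!
Suppose there are points `z → 0` with `f z ≠ 0` at which `grad log f = λ z` with `Re λ ≤ |Im λ|`. In
real coordinates they form a semianalytic set, so by curve selection (`exists_isCurve`) it contains a
germ of analytic curve ending at `0`. Let `w` be a tangent field of this curve pointing away from `0`.
Along the curve every analytic `φ` with `φ 0 = 0` moves almost radially: `conj φ * dφ(w)` lies in an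
arbitrarily narrow sector around the positive real axis (`IsCurve.sector`). For `φ = f` this concerns
`conj f * Df(z)(w)`; for the coordinates it concerns `⟪z, w⟫`. Since the gradient is parallel to `z`,
`Df(z)(w) ‖z‖² = Df(z)(z) ⟪z, w⟫`, hence `Df(z)(z) * conj f`, a positive multiple of `conj λ`, also
lies in a narrow sector, which contradicts `Re λ ≤ |Im λ|`.

Curve selection is proved from scratch. The set of germs vanishing at the given points is enlarged to
a maximal one by Zorn's lemma (`exists_isGood`); the resulting filter is the generic point of an
irreducible germ. Weierstrass division (`weierstrass_division`), obtained by inverting a linear map on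
the disc algebra, puts the germ in Noether normal position (`exists_normal`), and off a discriminant
`N` it is an étale cover of an affine space of dimension `d` (`exists_isCover`). By maximality `d = 1`
(`IsCover.eq_one`): if `d ≥ 2`, a function divisible by `N` attains a maximum on the part of the cover
over a small circle, so its derivative along the rotation vanishes at points tending to `0`, hence
along the whole germ; this cannot hold for both `N` and `N x₀`. The flow along the one-dimensional
cover (`IsCover.isCurve`) then replaces a parametrization of the curve.

That holomorphic functions of several variables are analytic is derived from Cauchy's formula on
polydiscs (`analyticAt_of_differentiable_pi`).
-/

/-- `grad log f (x) = grad f(x) / conj (f x)`, where `grad f(x)` is the Hermitian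
gradient of `f` at `x`: the unique vector with `⟪grad f x, v⟫ = Df(x)(v)` for all `v`. -/
noncomputable def gradLog {n : ℕ} (f : EuclideanSpace ℂ (Fin n) → ℂ)
    (x : EuclideanSpace ℂ (Fin n)) : EuclideanSpace ℂ (Fin n) :=
  ((starRingEnd ℂ) (f x))⁻¹ • gradient f x

/-! ### Holomorphic functions of several variables are analytic -/

section

open Set Filter Topology Metric MeasureTheory

lemma norm_torusMap_apply {n : ℕ} {ρ : ℝ} (hρ : 0 < ρ) (θ : Fin n → ℝ) (i : Fin n) :
    ‖torusMap (0 : Fin n → ℂ) (fun _ => ρ) θ i‖ = ρ := by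
  simp [torusMap, abs_of_pos hρ]

lemma torusMap_mem_closedBall {n : ℕ} {ρ : ℝ} (hρ : 0 < ρ) (θ : Fin n → ℝ) :
    torusMap (0 : Fin n → ℂ) (fun _ => ρ) θ ∈ closedBall (0 : Fin n → ℂ) ρ := by
  rw [mem_closedBall_zero_iff, pi_norm_le_iff_of_nonneg hρ.le]
  exact fun i => (norm_torusMap_apply hρ θ i).le

lemma continuous_torusMap {n : ℕ} (ρ : ℝ) :
    Continuous (torusMap (0 : Fin n → ℂ) (fun _ => ρ)) := by
  unfold torusMap; fun_prop

/-- The Cauchy kernel has no poles on the torus. -/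
lemma torus_sub_ne_zero {n : ℕ} {ρ : ℝ} (hρ : 0 < ρ) (θ : Fin n → ℝ) {z : Fin n → ℂ}
    (hz : z ∈ ball (0 : Fin n → ℂ) ρ) (i : Fin n) :
    torusMap (0 : Fin n → ℂ) (fun _ => ρ) θ i - z i ≠ 0 := by
  intro h
  have h1 := norm_torusMap_apply hρ θ i
  rw [sub_eq_zero.1 h] at h1
  have := (norm_le_pi_norm z i).trans_lt (mem_ball_zero_iff.1 hz)
  linarith

/-- Cauchy's formula on a polydisc. -/
lemma cauchy_torus {ρ : ℝ} (hρ : 0 < ρ) : ∀ (n : ℕ) (f : (Fin n → ℂ) → ℂ)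
    (_ : ∀ x ∈ closedBall (0 : Fin n → ℂ) ρ, DifferentiableAt ℂ f x)
    (z : Fin n → ℂ) (_ : z ∈ ball (0 : Fin n → ℂ) ρ),
    torusIntegral (fun ζ => (∏ i, (ζ i - z i)⁻¹) * f ζ) 0 (fun _ => ρ) =
      (2 * Real.pi * Complex.I) ^ n * f z := by
  intro n
  induction n with
  | zero =>
    intro f _ z _
    rw [torusIntegral_dim0]
    simp [Subsingleton.elim z 0]
  | succ n ih =>
    intro f hf z hz
    have hz' : ∀ i, ‖z i‖ < ρ := fun i =>
      (norm_le_pi_norm z i).trans_lt (mem_ball_zero_iff.1 hz)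
    have hinteg : TorusIntegrable (fun ζ => (∏ i, (ζ i - z i)⁻¹) * f ζ) 0 (fun _ => ρ) := by
      refine Continuous.integrableOn_Icc ?_
      refine Continuous.mul ?_ ?_
      · refine continuous_finsetProd _ fun i _ => Continuous.inv₀ ?_ ?_
        · exact ((continuous_apply i).comp (continuous_torusMap ρ)).sub continuous_const
        · exact fun θ => torus_sub_ne_zero hρ θ hz i
      · rw [continuous_iff_continuousAt]
        intro θ
        exact ContinuousAt.comp (hf _ (torusMap_mem_closedBall hρ θ)).continuousAt
          (continuous_torusMap ρ).continuousAt
    rw [torusIntegral_succ hinteg]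
    have hcons : ∀ x : ℂ, ‖x‖ ≤ ρ → ∀ y : Fin n → ℂ, y ∈ closedBall (0 : Fin n → ℂ) ρ →
        (Fin.cons x y : Fin (n + 1) → ℂ) ∈ closedBall (0 : Fin (n + 1) → ℂ) ρ := by
      intro x hx y hy
      rw [mem_closedBall_zero_iff, pi_norm_le_iff_of_nonneg hρ.le] at hy ⊢
      intro i
      refine Fin.cases ?_ ?_ i
      · simpa using hx
      · intro j; simpa using hy j
    have hinner : ∀ x ∈ sphere (0 : ℂ) ρ,
        (torusIntegral (fun y : Fin n → ℂ =>
          (∏ i, ((Fin.cons x y : Fin (n + 1) → ℂ) i - z i)⁻¹) * f (Fin.cons x y)) 0 (fun _ => ρ)) =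
        (2 * Real.pi * Complex.I) ^ n * ((x - z 0)⁻¹ • f (Fin.cons x (Fin.tail z))) := by
      intro x hx
      have hx' : ‖x‖ ≤ ρ := by simpa using (mem_sphere_zero_iff_norm.1 hx).le
      have := ih (fun y => f (Fin.cons x y)) (fun y hy => by
        refine DifferentiableAt.comp y (hf _ (hcons x hx' y hy)) ?_
        rw [differentiableAt_pi]
        intro i
        refine Fin.cases ?_ ?_ i
        · simp
        · intro j; simp; fun_prop) (Fin.tail z) (by
          rw [mem_ball_zero_iff, pi_norm_lt_iff hρ]
          exact fun i => hz' i.succ)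
      have h2 : (fun y : Fin n → ℂ =>
          (∏ i, ((Fin.cons x y : Fin (n + 1) → ℂ) i - z i)⁻¹) * f (Fin.cons x y)) =
          fun y => (x - z 0)⁻¹ * ((∏ i, (y i - Fin.tail z i)⁻¹) * f (Fin.cons x y)) := by
        funext y
        rw [Fin.prod_univ_succ]
        simp [Fin.tail, mul_assoc]
      rw [h2, torusIntegral_const_mul, this, smul_eq_mul]
      ring
    have hcirc := circleIntegral.integral_congr (f := fun x => torusIntegral (fun y : Fin n → ℂ =>
          (∏ i, ((Fin.cons x y : Fin (n + 1) → ℂ) i - z i)⁻¹) * f (Fin.cons x y)) 0 (fun _ => ρ))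
          hρ.le hinner
    refine hcirc.trans ?_
    have hd : DiffContOnCl ℂ (fun x : ℂ => f (Fin.cons x (Fin.tail z))) (ball 0 ρ) := by
      refine DifferentiableOn.diffContOnCl ?_
      intro x hx
      rw [closure_ball _ hρ.ne'] at hx
      refine DifferentiableAt.differentiableWithinAt ?_
      refine DifferentiableAt.comp x (hf _ (hcons x (by simpa using hx) _ ?_)) ?_
      · rw [mem_closedBall_zero_iff, pi_norm_le_iff_of_nonneg hρ.le]
        exact fun i => (hz' i.succ).le
      · rw [differentiableAt_pi]
        intro i
        refine Fin.cases ?_ ?_ i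
        · simp
        · intro j; simp
    have hc := hd.circleIntegral_sub_inv_smul (w := z 0) (by simpa using hz' 0)
    have : ∀ F : ℂ → ℂ, ∀ a : ℂ, (∮ x in C(0, ρ), a * F x) = a * ∮ x in C(0, ρ), F x :=
      fun F a => circleIntegral.integral_const_mul a F 0 ρ
    rw [this, hc, Fin.cons_self_tail, smul_eq_mul]
    ring

/-- A holomorphic function of several variables is analytic: by Cauchy's formula it is a
continuous linear functional applied to the Cauchy kernel, which depends analytically on the
point as an element of the Banach algebra of continuous functions on the torus. -/
theorem analyticAt_of_differentiable_pi {n : ℕ} {f : (Fin n → ℂ) → ℂ}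
    (hf : ∀ᶠ x in 𝓝 0, DifferentiableAt ℂ f x) : AnalyticAt ℂ f 0 := by
  obtain ⟨ρ, hρ, hball⟩ := Metric.nhds_basis_closedBall.eventually_iff.1 hf
  let K : Set (Fin n → ℝ) := Icc 0 (fun _ => 2 * Real.pi)
  have hK : IsCompact K := isCompact_Icc
  have : CompactSpace K := isCompact_iff_compactSpace.1 hK
  let μ : Measure K := volume.comap Subtype.val
  have hKm : MeasurableSet K := measurableSet_Icc
  have : IsFiniteMeasure μ := by
    refine ⟨?_⟩
    rw [comap_subtype_coe_apply hKm]
    simpa using! measure_Icc_lt_top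
  let wt : C(K, ℂ) := ⟨fun θ => (∏ i, (ρ : ℂ) * Complex.exp ((θ.1 i : ℂ) * Complex.I) * Complex.I) *
    f (torusMap (0 : Fin n → ℂ) (fun _ => ρ) θ.1), by
      refine Continuous.mul (continuous_finsetProd _ fun i _ => ?_) ?_
      · have : Continuous fun θ : K => ((θ.1 i : ℝ) : ℂ) :=
          Complex.continuous_ofReal.comp ((continuous_apply i).comp continuous_subtype_val)
        fun_prop
      rw [continuous_iff_continuousAt]
      intro θ
      exact ContinuousAt.comp (hball (torusMap_mem_closedBall hρ θ.1)).continuousAt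
          ((continuous_torusMap ρ).comp continuous_subtype_val).continuousAt⟩
  let ev : Fin n → C(K, ℂ) := fun i =>
    ⟨fun θ => torusMap (0 : Fin n → ℂ) (fun _ => ρ) θ.1 i,
      (continuous_apply i).comp ((continuous_torusMap ρ).comp continuous_subtype_val)⟩
  let ker : (Fin n → ℂ) → C(K, ℂ) := fun z =>
    ∏ i, Ring.inverse (ev i - algebraMap ℂ C(K, ℂ) (z i))
  have hinteg : ∀ φ : C(K, ℂ), Integrable (fun θ => φ θ) μ := fun φ =>
    Integrable.of_bound φ.continuous.aestronglyMeasurable ‖φ‖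
      (Eventually.of_forall φ.norm_coe_le_norm)
  let L₀ : C(K, ℂ) →ₗ[ℂ] ℂ :=
    { toFun := fun φ => ∫ θ, φ θ ∂μ
      map_add' := fun φ ψ => integral_add (hinteg φ) (hinteg ψ)
      map_smul' := fun c φ => integral_smul c _ }
  let Lc : C(K, ℂ) →L[ℂ] ℂ := L₀.mkContinuous (μ.real univ) fun φ => by
    rw [mul_comm]
    exact norm_integral_le_of_norm_le_const (Eventually.of_forall φ.norm_coe_le_norm)
  -- The kernel is a product of inverses of affine functions of the point.
  have hker : AnalyticAt ℂ ker 0 := by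
    refine Finset.analyticAt_fun_prod _ fun i _ => ?_
    have hu : IsUnit (ev i - algebraMap ℂ C(K, ℂ) ((0 : Fin n → ℂ) i)) := by
      rw [ContinuousMap.isUnit_iff_forall_ne_zero]
      intro θ
      exact torus_sub_ne_zero hρ θ.1 (z := 0) (mem_ball_self hρ) i
    have h1 : AnalyticAt ℂ (fun z : Fin n → ℂ => ev i - algebraMap ℂ C(K, ℂ) (z i)) 0 := by
      refine analyticAt_const.sub ?_
      exact (((Algebra.linearMap ℂ C(K, ℂ)).toContinuousLinearMap).comp
        (ContinuousLinearMap.proj (R := ℂ) (φ := fun _ : Fin n => ℂ) i)).analyticAt 0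
    obtain ⟨u, hu⟩ := hu
    exact AnalyticAt.fun_comp (by rw [← hu]; exact analyticAt_inverse u) h1
  have hcomp : AnalyticAt ℂ (fun z => ((2 * Real.pi * Complex.I) ^ n)⁻¹ * Lc (wt * ker z)) 0 :=
    analyticAt_const.mul ((Lc.analyticAt _).comp (analyticAt_const.mul hker))
  refine hcomp.congr ?_
  filter_upwards [ball_mem_nhds 0 hρ] with z hz
  have hc := cauchy_torus hρ n f (fun x hx => hball hx) z hz
  have hval : Lc (wt * ker z) = torusIntegral (fun ζ => (∏ i, (ζ i - z i)⁻¹) * f ζ) 0 (fun _ => ρ) := by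
    change ∫ θ : K, (wt * ker z) θ ∂μ = _
    rw [torusIntegral, ← integral_subtype_comap hKm]
    refine integral_congr_ae (Eventually.of_forall fun θ => ?_)
    have hk : ∀ i, (Ring.inverse (ev i - algebraMap ℂ C(K, ℂ) (z i))) θ = (ev i θ - z i)⁻¹ := by
      intro i
      have hu : IsUnit (ev i - algebraMap ℂ C(K, ℂ) (z i)) := by
        rw [ContinuousMap.isUnit_iff_forall_ne_zero]
        intro θ
        exact torus_sub_ne_zero hρ θ.1 hz i
      have := congrArg (fun φ : C(K, ℂ) => φ θ) (Ring.inverse_mul_cancel _ hu)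
      exact eq_inv_of_mul_eq_one_left this
    simp only [ker, ContinuousMap.mul_apply, ContinuousMap.prod_apply, hk]
    simp only [wt, ev, ContinuousMap.coe_mk, smul_eq_mul]
    ring
  rw [hval, hc, ← mul_assoc, inv_mul_cancel₀, one_mul]
  exact pow_ne_zero _ (by simp [Real.pi_ne_zero])

end

open Set Filter Topology Metric

/-! ### Power series with values in Banach algebras -/

/-- The power series `∑ₙ ∑ᵢ c n i ∏ₖ u (i k)` in `m` commuting variables, with values in an
arbitrary commutative Banach algebra `Y`. -/
noncomputable def coefSeries {m : ℕ} (c : (n : ℕ) → (Fin n → Fin m) → ℂ) (Y : Type)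
    [NormedCommRing Y] [NormedAlgebra ℂ Y] : FormalMultilinearSeries ℂ (Fin m → Y) Y :=
  fun n => ∑ i : Fin n → Fin m, c n i •
    (ContinuousMultilinearMap.mkPiAlgebra ℂ (Fin n) Y).compContinuousLinearMap
      (fun k => ContinuousLinearMap.proj (R := ℂ) (φ := fun _ : Fin m => Y) (i k))

lemma coefSeries_apply {m : ℕ} (c : (n : ℕ) → (Fin n → Fin m) → ℂ) (Y : Type)
    [NormedCommRing Y] [NormedAlgebra ℂ Y] (n : ℕ) (u : Fin m → Y) :
    coefSeries c Y n (fun _ => u) = ∑ i : Fin n → Fin m, c n i • ∏ k, u (i k) := by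
  simp [coefSeries]

lemma coefSeries_radius {m : ℕ} {c : (n : ℕ) → (Fin n → Fin m) → ℂ} {C : ℝ} {r : NNReal}
    (hc : ∀ n, (∑ i, ‖c n i‖) * (r : ℝ) ^ n ≤ C) (Y : Type)
    [NormedCommRing Y] [NormedAlgebra ℂ Y] [NormOneClass Y] :
    (r : ENNReal) ≤ (coefSeries c Y).radius := by
  refine FormalMultilinearSeries.le_radius_of_bound _ C fun n => ?_
  refine le_trans ?_ (hc n)
  gcongr
  refine (norm_sum_le _ _).trans (Finset.sum_le_sum fun i _ => ?_)
  rw [norm_smul]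
  refine mul_le_of_le_one_right (norm_nonneg _) ?_
  refine (ContinuousMultilinearMap.norm_compContinuousLinearMap_le _ _).trans ?_
  rw [ContinuousMultilinearMap.norm_mkPiAlgebra, one_mul]
  refine Finset.prod_le_one (fun _ _ => norm_nonneg _) fun k _ => ?_
  refine ContinuousLinearMap.opNorm_le_bound _ zero_le_one fun u => ?_
  simpa using norm_le_pi_norm u (i k)

/-- Naturality of the power series under continuous algebra homomorphisms. -/
lemma coefSeries_map {m : ℕ} {c : (n : ℕ) → (Fin n → Fin m) → ℂ} {C : ℝ} {r : NNReal}
    (hc : ∀ n, (∑ i, ‖c n i‖) * (r : ℝ) ^ n ≤ C) {Y Z : Type}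
    [NormedCommRing Y] [NormedAlgebra ℂ Y] [NormOneClass Y] [CompleteSpace Y]
    [NormedCommRing Z] [NormedAlgebra ℂ Z] (φ : Y →ₐ[ℂ] Z) (hφ : Continuous φ)
    {u : Fin m → Y} (hu : ‖u‖ < r) :
    φ ((coefSeries c Y).sum u) = (coefSeries c Z).sum (fun i => φ (u i)) := by
  have hs : Summable fun n => coefSeries c Y n (fun _ => u) := by
    refine FormalMultilinearSeries.summable _ ?_
    refine Metric.eball_subset_eball (coefSeries_radius hc Y) ?_
    rw [Metric.eball_coe, mem_ball_zero_iff]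
    exact hu
  have h1 := (hs.hasSum.map φ hφ).tsum_eq
  rw [FormalMultilinearSeries.sum, ← h1, FormalMultilinearSeries.sum]
  congr 1
  funext n
  simp [coefSeries_apply, map_sum, map_smul, map_prod]

lemma coefSeries_analyticAt {m : ℕ} {c : (n : ℕ) → (Fin n → Fin m) → ℂ} {C : ℝ} {r : NNReal}
    (hr : 0 < r) (hc : ∀ n, (∑ i, ‖c n i‖) * (r : ℝ) ^ n ≤ C) {Y : Type}
    [NormedCommRing Y] [NormedAlgebra ℂ Y] [NormOneClass Y] [CompleteSpace Y]
    {u : Fin m → Y} (hu : ‖u‖ < r) : AnalyticAt ℂ (coefSeries c Y).sum u := by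
  have hrad := coefSeries_radius hc Y
  have hpos : 0 < (coefSeries c Y).radius := lt_of_lt_of_le (by exact_mod_cast hr) hrad
  refine ((coefSeries c Y).hasFPowerSeriesOnBall hpos).analyticAt_of_mem ?_
  refine Metric.eball_subset_eball hrad ?_
  rw [Metric.eball_coe, mem_ball_zero_iff]
  exact hu

/-- The complexified Taylor expansion of a real analytic germ, with a geometric bound on its
coefficients. -/
lemma exists_coef {m : ℕ} {h : (Fin m → ℝ) → ℝ} (hh : AnalyticAt ℝ h 0) :
    ∃ (c : (n : ℕ) → (Fin n → Fin m) → ℂ) (C : ℝ) (r : NNReal), 0 < r ∧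
      (∀ n, (∑ i, ‖c n i‖) * (r : ℝ) ^ n ≤ C) ∧
      ∀ᶠ x in 𝓝 (0 : Fin m → ℝ), ((h x : ℝ) : ℂ) = (coefSeries c ℂ).sum fun i => (x i : ℂ) := by
  obtain ⟨p, ρ, hp⟩ := hh
  obtain ⟨C, s, hC, hs, hb⟩ := p.le_mul_pow_of_radius_pos hp.radius_pos
  let c : (n : ℕ) → (Fin n → Fin m) → ℂ := fun n i =>
    ((p n (fun k => Pi.single (i k) 1) : ℝ) : ℂ)
  have hcb : ∀ n i, ‖c n i‖ ≤ C * s ^ n := by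
    intro n i
    simp only [c, Complex.norm_real]
    refine ((p n).le_opNorm _).trans ?_
    refine le_trans (mul_le_of_le_one_right (norm_nonneg _) ?_) (hb n)
    refine Finset.prod_le_one (fun _ _ => norm_nonneg _) fun k _ => ?_
    rw [Pi.norm_single, norm_one]
  refine ⟨c, C, Real.toNNReal (m * s + 1)⁻¹, ?_, ?_, ?_⟩
  · rw [Real.toNNReal_pos]; positivity
  · intro n
    rw [Real.coe_toNNReal _ (by positivity)]
    have h1 : (∑ i, ‖c n i‖) ≤ (m : ℝ) ^ n * (C * s ^ n) := by
      refine (Finset.sum_le_card_nsmul _ _ _ fun i _ => hcb n i).trans ?_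
      simp
    have h2 : (m * s) ^ n * ((m * s + 1)⁻¹) ^ n ≤ (1 : ℝ) := by
      rw [← mul_pow]
      refine pow_le_one₀ (by positivity) ?_
      rw [← div_eq_mul_inv, div_le_one (by positivity)]
      linarith
    calc (∑ i, ‖c n i‖) * ((m * s + 1)⁻¹ : ℝ) ^ n
        ≤ (m : ℝ) ^ n * (C * s ^ n) * ((m * s + 1)⁻¹ : ℝ) ^ n := by gcongr
      _ = C * ((m * s) ^ n * ((m * s + 1)⁻¹) ^ n) := by rw [mul_pow]; ring
      _ ≤ C := mul_le_of_le_one_right hC.le h2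
  · filter_upwards [hp.eventually_hasSum] with x hx
    rw [zero_add] at hx
    have h1 := (Complex.hasSum_ofReal.2 hx).tsum_eq
    rw [← h1, FormalMultilinearSeries.sum]
    congr 1
    funext n
    rw [coefSeries_apply]
    have hx' : x = ∑ i, x i • (Pi.single i (1 : ℝ) : Fin m → ℝ) := by
      ext k; simp [Finset.sum_apply, Pi.single_apply]
    have h2 : p n (fun _ => x) =
        ∑ i : Fin n → Fin m, (∏ k, x (i k)) * p n (fun k => Pi.single (i k) 1) := by
      conv_lhs => rw [hx']
      have := (p n).map_sum (fun (_ : Fin n) (i : Fin m) => x i • (Pi.single i (1 : ℝ) : Fin m → ℝ))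
      rw [this]
      refine Finset.sum_congr rfl fun i _ => ?_
      rw [(p n).map_smul_univ]
      rfl
    rw [h2]
    push_cast
    refine Finset.sum_congr rfl fun i _ => ?_
    simp [c, mul_comm]

/-! ### The disc algebra -/

/-- The disc algebra: continuous functions on the closed disc of radius `δ` which are holomorphic
in its interior. -/
noncomputable def discAlg (δ : ℝ) : Subalgebra ℂ C(closedBall (0 : ℂ) δ, ℂ) where
  carrier := {φ | DifferentiableOn ℂ (Function.extend Subtype.val φ 0) (ball 0 δ)}
  mul_mem' {a b} ha hb := (ha.mul hb).congr fun t ht => by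
    have ht' := ball_subset_closedBall ht
    have := fun φ : closedBall (0 : ℂ) δ → ℂ =>
      Subtype.val_injective.extend_apply φ (0 : ℂ → ℂ) ⟨t, ht'⟩
    simp only at this
    simp [this]
  add_mem' {a b} ha hb := (ha.add hb).congr fun t ht => by
    have ht' := ball_subset_closedBall ht
    have := fun φ : closedBall (0 : ℂ) δ → ℂ =>
      Subtype.val_injective.extend_apply φ (0 : ℂ → ℂ) ⟨t, ht'⟩
    simp only at this
    simp [this]
  algebraMap_mem' c := (differentiableOn_const c).congr fun t ht => by
    have ht' := ball_subset_closedBall ht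
    have := fun φ : closedBall (0 : ℂ) δ → ℂ =>
      Subtype.val_injective.extend_apply φ (0 : ℂ → ℂ) ⟨t, ht'⟩
    simp only at this
    simp [this]

namespace discAlg

variable {δ : ℝ}

lemma extend_apply (φ : closedBall (0 : ℂ) δ → ℂ) {t : ℂ} (ht : t ∈ closedBall (0 : ℂ) δ) :
    Function.extend Subtype.val φ (0 : ℂ → ℂ) t = φ ⟨t, ht⟩ :=
  Subtype.val_injective.extend_apply φ (0 : ℂ → ℂ) ⟨t, ht⟩

/-- The element of the disc algebra given by a function on the plane. -/
noncomputable def mk (F : ℂ → ℂ) (hc : ContinuousOn F (closedBall 0 δ))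
    (hd : DifferentiableOn ℂ F (ball 0 δ)) : discAlg δ :=
  ⟨⟨fun t => F t, continuousOn_iff_continuous_domRestrict.1 hc⟩, hd.congr fun _ ht =>
    extend_apply _ (ball_subset_closedBall ht)⟩

lemma mk_apply (F : ℂ → ℂ) (hc : ContinuousOn F (closedBall 0 δ))
    (hd : DifferentiableOn ℂ F (ball 0 δ)) (t : closedBall (0 : ℂ) δ) :
    (mk F hc hd).1 t = F t := rfl

lemma ext_iff' {a b : discAlg δ} : a = b ↔ ∀ t, a.1 t = b.1 t :=
  ⟨fun h t => by rw [h], fun h => Subtype.ext (ContinuousMap.ext h)⟩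

lemma isClosed : IsClosed (discAlg δ : Set C(closedBall (0 : ℂ) δ, ℂ)) := by
  refine IsSeqClosed.isClosed fun φ ψ hφ hlim => ?_
  have h1 : TendstoUniformlyOn (fun n => Function.extend Subtype.val (φ n) (0 : ℂ → ℂ))
      (Function.extend Subtype.val ψ (0 : ℂ → ℂ)) atTop (ball 0 δ) := by
    rw [Metric.tendstoUniformlyOn_iff]
    intro ε hε
    filter_upwards [Metric.tendsto_nhds.1 hlim ε hε] with n hn t ht
    rw [extend_apply _ (ball_subset_closedBall ht), extend_apply _ (ball_subset_closedBall ht),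
      dist_comm]
    exact (ContinuousMap.dist_apply_le_dist _).trans_lt hn
  exact h1.tendstoLocallyUniformlyOn.differentiableOn (Eventually.of_forall hφ) isOpen_ball

instance : CompleteSpace (discAlg δ) := isClosed.completeSpace_coe

/-- Evaluation at a point of the disc. -/
noncomputable def eval (t : closedBall (0 : ℂ) δ) : discAlg δ →ₐ[ℂ] ℂ :=
  (ContinuousMap.evalAlgHom ℂ ℂ t).comp (discAlg δ).val

lemma eval_apply (t : closedBall (0 : ℂ) δ) (a : discAlg δ) : eval t a = a.1 t := rfl

lemma continuous_eval (t : closedBall (0 : ℂ) δ) : Continuous (eval t) :=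
  (continuous_eval_const t).comp continuous_subtype_val

/-- The coordinate function. -/
noncomputable def X : discAlg δ := mk id continuousOn_id differentiableOn_id

lemma X_apply (t : closedBall (0 : ℂ) δ) : (X : discAlg δ).1 t = t := rfl

lemma normOneClass (hδ : 0 ≤ δ) : NormOneClass (discAlg δ) := by
  have : Nonempty (closedBall (0 : ℂ) δ) := ⟨⟨0, by simpa using hδ⟩⟩
  exact ⟨norm_one (α := C(closedBall (0 : ℂ) δ, ℂ))⟩

lemma norm_X_le (hδ : 0 ≤ δ) : ‖(X : discAlg δ)‖ ≤ δ := by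
  refine (ContinuousMap.norm_le _ hδ).2 fun t => ?_
  exact mem_closedBall_zero_iff.1 t.2

lemma X_mul_eq_zero (hδ : 0 < δ) {a : discAlg δ} (h : X * a = 0) : a = 0 := by
  have h1 : ∀ t ∈ closedBall (0 : ℂ) δ, t ≠ 0 → Function.extend Subtype.val a.1 (0 : ℂ → ℂ) t = 0 := by
    intro t ht ht0
    have := ext_iff'.1 h ⟨t, ht⟩
    rw [extend_apply _ ht]
    simpa [X_apply, ht0] using! this
  rw [ext_iff']
  rintro ⟨t, ht⟩
  by_cases ht0 : t = 0
  · subst ht0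
    have hc : ContinuousAt (Function.extend Subtype.val a.1 (0 : ℂ → ℂ)) 0 :=
      (a.2.differentiableAt (ball_mem_nhds 0 hδ)).continuousAt
    have h2 : Function.extend Subtype.val a.1 (0 : ℂ → ℂ) 0 = 0 := by
      refine tendsto_nhds_unique (hc.mono_left (nhdsWithin_le_nhds (s := {0}ᶜ))) ?_
      refine tendsto_const_nhds.congr' ?_
      filter_upwards [self_mem_nhdsWithin, nhdsWithin_le_nhds (closedBall_mem_nhds (0 : ℂ) hδ)]
        with t ht0 ht
      exact (h1 t ht ht0).symm
    rw [extend_apply _ ht] at h2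
    exact h2
  · have := h1 t ht ht0
    rwa [extend_apply _ ht] at this

lemma exists_div_X (hδ : 0 < δ) (a : discAlg δ) :
    ∃ (b : discAlg δ) (c : ℂ), a = X * b + algebraMap ℂ _ c := by
  set F := Function.extend Subtype.val a.1 (0 : ℂ → ℂ) with hF
  have hFc : ContinuousOn F (closedBall 0 δ) := by
    rw [continuousOn_iff_continuous_domRestrict]
    refine a.1.continuous.congr fun t => ?_
    rw [domRestrict_apply, hF, extend_apply _ t.2]
  have hd : DifferentiableAt ℂ F 0 := a.2.differentiableAt (ball_mem_nhds 0 hδ)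
  refine ⟨mk (dslope F 0) ((continuousOn_dslope (closedBall_mem_nhds 0 hδ)).2 ⟨hFc, hd⟩)
    ((Complex.differentiableOn_dslope (ball_mem_nhds 0 hδ)).2 a.2), F 0, ?_⟩
  rw [ext_iff']
  intro t
  have := sub_smul_dslope F 0 t
  rw [sub_zero, smul_eq_mul] at this
  have h2 : a.1 t = F t := by rw [hF, extend_apply _ t.2]
  rw [h2]
  change F t = (t : ℂ) * dslope F 0 t + F 0
  rw [this]; ring

lemma isUnit_mk {F : ℂ → ℂ} (hc : ContinuousOn F (closedBall 0 δ))
    (hd : DifferentiableOn ℂ F (ball 0 δ)) (h0 : ∀ t ∈ closedBall (0 : ℂ) δ, F t ≠ 0) :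
    IsUnit (mk F hc hd) := by
  refine IsUnit.of_mul_eq_one (mk (fun t => (F t)⁻¹) (hc.inv₀ h0)
    (hd.inv fun t ht => h0 t (ball_subset_closedBall ht))) ?_
  rw [ext_iff']
  intro t
  exact mul_inv_cancel₀ (h0 t t.2)

lemma exists_div_pow (hδ : 0 < δ) (k : ℕ) (a : discAlg δ) :
    ∃ (b : discAlg δ) (c : Fin k → ℂ), a = b * X ^ k + ∑ l, c l • X ^ (l : ℕ) := by
  induction k generalizing a with
  | zero => exact ⟨a, Fin.elim0, by simp⟩
  | succ k ih =>
    obtain ⟨b, c, h⟩ := exists_div_X hδ a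
    obtain ⟨b', c', h'⟩ := ih b
    refine ⟨b', Fin.cons c c', ?_⟩
    rw [Fin.sum_univ_succ]
    simp only [Fin.cons_zero, Fin.cons_succ, Fin.val_zero, pow_zero, Fin.val_succ]
    rw [h, h', mul_add, Finset.mul_sum, Algebra.algebraMap_eq_smul_one]
    have : ∀ l : Fin k, X * c' l • (X : discAlg δ) ^ (l : ℕ) = c' l • X ^ ((l : ℕ) + 1) := by
      intro l; rw [mul_smul_comm, pow_succ']
    simp only [this]
    ring

lemma div_pow_unique (hδ : 0 < δ) (k : ℕ) (b : discAlg δ) (c : Fin k → ℂ)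
    (h : b * X ^ k + ∑ l, c l • X ^ (l : ℕ) = 0) : b = 0 ∧ c = 0 := by
  induction k with
  | zero => exact ⟨by simpa using h, Subsingleton.elim _ _⟩
  | succ k ih =>
    rw [Fin.sum_univ_succ] at h
    simp only [Fin.val_zero, pow_zero, Fin.val_succ] at h
    have hc0 : c 0 = 0 := by
      have := congrArg (eval ⟨0, by simpa using hδ.le⟩) h
      simp [eval_apply, X_apply] at this
      simpa [map_sum, map_smul, eval_apply, X_apply, ← eval_apply] using this
    have h2 : X * (b * X ^ k + ∑ l : Fin k, c l.succ • X ^ (l : ℕ)) = 0 := by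
      rw [← h, hc0, mul_add, Finset.mul_sum]
      have : ∀ l : Fin k, X * c l.succ • (X : discAlg δ) ^ (l : ℕ) = c l.succ • X ^ ((l : ℕ) + 1) := by
        intro l; rw [mul_smul_comm, pow_succ']
      simp only [this]
      rw [zero_smul]; ring
    obtain ⟨hb, hc⟩ := ih (fun l => c l.succ) (X_mul_eq_zero hδ h2)
    refine ⟨hb, funext fun l => Fin.cases hc0 (fun j => congrFun hc j) l⟩

end discAlg

/-! ### Weierstrass division -/

/-- The point of the `m`-th power of the disc algebra with `j`-th coordinate `X` and the
other coordinates constants. -/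
noncomputable def discPoint {m : ℕ} (δ : ℝ) (j : Fin m) (x : Fin m → ℂ) : Fin m → discAlg δ :=
  fun i => if i = j then discAlg.X else algebraMap ℂ _ (x i)

lemma discPoint_update {m : ℕ} (δ : ℝ) (j : Fin m) (x : Fin m → ℂ) (s : ℂ) :
    discPoint δ j (Function.update x j s) = discPoint δ j x := by
  funext i
  by_cases h : i = j <;> simp [discPoint, h]

lemma discPoint_analyticAt {m : ℕ} (δ : ℝ) (j : Fin m) (x : Fin m → ℂ) :
    AnalyticAt ℂ (discPoint δ j) x := by
  rw [show discPoint δ j = fun x i => discPoint δ j x i from rfl, analyticAt_pi_iff]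
  intro i
  by_cases h : i = j
  · simp only [discPoint, h, if_true]; exact analyticAt_const
  · simp only [discPoint, h, if_false]
    exact (((Algebra.linearMap ℂ (discAlg δ)).toContinuousLinearMap).comp
        (ContinuousLinearMap.proj (R := ℂ) (φ := fun _ : Fin m => ℂ) i)).analyticAt x

lemma norm_discPoint_lt {m : ℕ} {δ r : ℝ} (hδ : 0 ≤ δ) (hr : δ < r) (j : Fin m) {x : Fin m → ℂ}
    (hx : ‖x‖ < r) : ‖discPoint δ j x‖ < r := by
  have := discAlg.normOneClass hδ
  rw [pi_norm_lt_iff (hδ.trans_lt hr)]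
  intro i
  by_cases h : i = j
  · simp only [discPoint, h, if_true]; exact (discAlg.norm_X_le hδ).trans_lt hr
  · simp only [discPoint, h, if_false]
    rw [norm_algebraMap']
    exact (norm_le_pi_norm x i).trans_lt hx

lemma eval_discPoint {m : ℕ} {δ : ℝ} (j : Fin m) (x : Fin m → ℂ) (t : closedBall (0 : ℂ) δ) :
    (fun i => discAlg.eval t (discPoint δ j x i)) = Function.update x j t := by
  funext i
  by_cases h : i = j
  · subst h; simp [discPoint, discAlg.eval_apply, discAlg.X_apply]
  · simp [discPoint, h]

lemma discPoint_series_analyticAt {m : ℕ} {c : (n : ℕ) → (Fin n → Fin m) → ℂ} {C : ℝ}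
    {ρ : NNReal} (hρ : 0 < ρ) (hc : ∀ n, (∑ i, ‖c n i‖) * (ρ : ℝ) ^ n ≤ C) {δ : ℝ} (hδ : 0 ≤ δ)
    (hδρ : δ < ρ) (j : Fin m) :
    AnalyticAt ℂ (fun x => (coefSeries c (discAlg δ)).sum (discPoint δ j x)) 0 := by
  have := discAlg.normOneClass hδ
  exact AnalyticAt.fun_comp (g := (coefSeries c (discAlg δ)).sum) (f := discPoint δ j)
    (coefSeries_analyticAt hρ hc (norm_discPoint_lt hδ hδρ j (by simpa using hρ)))
    (discPoint_analyticAt δ j 0)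

lemma discPoint_series_apply {m : ℕ} {c : (n : ℕ) → (Fin n → Fin m) → ℂ} {C : ℝ}
    {ρ : NNReal} (hc : ∀ n, (∑ i, ‖c n i‖) * (ρ : ℝ) ^ n ≤ C) {δ : ℝ} (hδ : 0 ≤ δ)
    (hδρ : δ < ρ) (j : Fin m) {x : Fin m → ℂ} (hx : ‖x‖ < ρ) (t : closedBall (0 : ℂ) δ) :
    ((coefSeries c (discAlg δ)).sum (discPoint δ j x)).1 t =
      (coefSeries c ℂ).sum (Function.update x j t) := by
  have := discAlg.normOneClass hδ
  have h := coefSeries_map (Y := discAlg δ) (Z := ℂ) hc (discAlg.eval (δ := δ) t)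
    (discAlg.continuous_eval (δ := δ) t) (norm_discPoint_lt hδ hδρ j hx)
  rw [eval_discPoint] at h
  exact h

/-- If division by `G₀` with remainder of the form `∑ rₗ Xˡ` is possible and unique in a Banach
algebra, then the same holds for all `G` near `G₀`, and quotient and remainder are analytic
functions of `G` and of the element to be divided. -/
lemma banach_division {D : Type} [NormedCommRing D] [NormedAlgebra ℂ D] [CompleteSpace D]
    (k : ℕ) (X G₀ : D)
    (hinj : ∀ q : D, ∀ r : Fin k → ℂ, G₀ * q + ∑ l, r l • X ^ (l : ℕ) = 0 → q = 0 ∧ r = 0)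
    (hsurj : ∀ a : D, ∃ q : D, ∃ r : Fin k → ℂ, G₀ * q + ∑ l, r l • X ^ (l : ℕ) = a) :
    ∃ sol : D → D → D × (Fin k → ℂ),
      (∀ A, AnalyticAt ℂ (fun p : D × D => sol p.1 p.2) (G₀, A)) ∧
      ∀ᶠ G in 𝓝 G₀, ∀ A, G * (sol G A).1 + ∑ l, (sol G A).2 l • X ^ (l : ℕ) = A := by
  let S : (Fin k → ℂ) →L[ℂ] D := LinearMap.toContinuousLinearMap
    (Fintype.linearCombination ℂ fun l : Fin k => X ^ (l : ℕ))
  have hS : ∀ r, S r = ∑ l, r l • X ^ (l : ℕ) := fun r => by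
    simp [S, Fintype.linearCombination_apply]
  let Φ : D → ((D × (Fin k → ℂ)) →L[ℂ] D) := fun G =>
    ((ContinuousLinearMap.mul ℂ D G).comp (ContinuousLinearMap.fst ℂ D (Fin k → ℂ))) +
      S.comp (ContinuousLinearMap.snd ℂ D (Fin k → ℂ))
  have hΦ : ∀ G p, Φ G p = G * p.1 + ∑ l, p.2 l • X ^ (l : ℕ) := fun G p => by
    simp only [Φ, ← hS]; rfl
  have hΦan : ∀ G₀, AnalyticAt ℂ Φ G₀ := by
    intro G₀
    refine AnalyticAt.add ?_ analyticAt_const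
    exact (((ContinuousLinearMap.compL ℂ (D × (Fin k → ℂ)) D D).flip
      (ContinuousLinearMap.fst ℂ D (Fin k → ℂ))).comp (ContinuousLinearMap.mul ℂ D)).analyticAt G₀
  have hinj' : Function.Injective (Φ G₀) := (injective_iff_map_eq_zero _).2 fun p hp => by
    rw [hΦ] at hp
    exact Prod.ext (hinj _ _ hp).1 (hinj _ _ hp).2
  have hsurj' : Function.Surjective (Φ G₀) := fun a => by
    obtain ⟨q, r, h⟩ := hsurj a
    exact ⟨(q, r), by rw [hΦ, h]⟩
  let e : (D × (Fin k → ℂ)) ≃L[ℂ] D := ContinuousLinearEquiv.ofBijective (Φ G₀)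
    (LinearMap.ker_eq_bot.2 hinj') (LinearMap.range_eq_top.2 hsurj')
  have he : (e : (D × (Fin k → ℂ)) →L[ℂ] D) = Φ G₀ :=
    ContinuousLinearEquiv.coe_ofBijective _ _ _
  refine ⟨fun G A => ContinuousLinearMap.inverse (Φ G) A, fun A => ?_, ?_⟩
  · have h2 : AnalyticAt ℂ ContinuousLinearMap.inverse (Φ G₀) := by
      have := (contDiffAt_map_inverse (𝕜 := ℂ) (n := ⊤) e).analyticAt
      rwa [he] at this
    have h3 : AnalyticAt ℂ (fun p : D × D => Φ p.1) (G₀, A) :=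
      AnalyticAt.fun_comp (g := Φ) (hΦan G₀) analyticAt_fst
    have h4 : AnalyticAt ℂ (fun p : D × D => ContinuousLinearMap.inverse (Φ p.1)) (G₀, A) :=
      AnalyticAt.fun_comp (g := ContinuousLinearMap.inverse) (f := fun p : D × D => Φ p.1) h2 h3
    exact AnalyticAt.fun_comp (g := fun p : (D →L[ℂ] D × (Fin k → ℂ)) × D => p.1 p.2)
      (f := fun p : D × D => (ContinuousLinearMap.inverse (Φ p.1), p.2))
      (isBoundedBilinearMap_apply.contDiff (n := ⊤).contDiffAt.analyticAt)
      (h4.prod analyticAt_snd)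
  · have h1 : ∀ᶠ T in 𝓝 (Φ G₀), ∃ e' : (D × (Fin k → ℂ)) ≃L[ℂ] D, ↑e' = T := by
      rw [← he]; exact ContinuousLinearEquiv.nhds e
    filter_upwards [(hΦan G₀).continuousAt.eventually h1] with G ⟨e', he'⟩ A
    rw [← hΦ, ← he', ContinuousLinearMap.inverse_equiv]
    simp

/-- Division in the disc algebra, depending analytically on the parameters: the linear map
`(q, r) ↦ q G(x) + ∑ rₗ Xˡ` is bijective at `x = 0`, hence invertible near `0`. -/
lemma disc_division {m : ℕ} (j : Fin m) {g : (Fin m → ℝ) → ℝ} (hg : AnalyticAt ℝ g 0)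
    (hreg : ¬ ∀ᶠ t in 𝓝 (0 : ℝ), g (Pi.single j t) = 0) :
    ∃ k : ℕ, ∃ δ₀ > (0 : ℝ), ∀ δ > (0 : ℝ), δ ≤ δ₀ → ∀ A : (Fin m → ℂ) → discAlg δ,
      AnalyticAt ℂ A 0 → (∀ x s, A (Function.update x j s) = A x) →
      ∃ r : Fin k → (Fin m → ℂ) → ℂ, (∀ l, AnalyticAt ℂ (r l) 0) ∧
        (∀ l x s, r l (Function.update x j s) = r l x) ∧
        (∀ᶠ x in 𝓝 (0 : Fin m → ℝ), ∀ h : (x j : ℂ) ∈ closedBall (0 : ℂ) δ, g x = 0 →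
          (A fun i => (x i : ℂ)).1 ⟨x j, h⟩ = ∑ l, r l (fun i => (x i : ℂ)) * (x j : ℂ) ^ (l : ℕ)) ∧
        (A 0 = discAlg.X ^ k → ∀ l, r l 0 = 0) := by
  obtain ⟨c, C, ρ, hρ, hc, hgc⟩ := exists_coef hg
  let g₀ : ℂ → ℂ := fun t => (coefSeries c ℂ).sum (Pi.single j t)
  have hg₀ : AnalyticAt ℂ g₀ 0 := by
    refine AnalyticAt.fun_comp (g := (coefSeries c ℂ).sum) (f := fun t : ℂ => Pi.single j t) ?_ ?_
    · refine coefSeries_analyticAt hρ hc ?_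
      simpa using hρ
    · exact ((LinearMap.single ℂ (fun _ : Fin m => ℂ) j).toContinuousLinearMap).analyticAt 0
  have hne : ¬ ∀ᶠ t in 𝓝 (0 : ℂ), g₀ t = 0 := by
    intro h
    apply hreg
    have h1 : Tendsto (fun t : ℝ => (t : ℂ)) (𝓝 0) (𝓝 0) := by
      simpa using Complex.continuous_ofReal.tendsto 0
    have h2 : Tendsto (fun t : ℝ => (Pi.single j t : Fin m → ℝ)) (𝓝 0) (𝓝 0) := by
      have := (continuous_single (A := fun _ : Fin m => ℝ) j).tendsto 0
      simpa using this
    filter_upwards [h1.eventually h, h2.eventually hgc] with t ht1 ht2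
    have : (fun i => ((Pi.single j t : Fin m → ℝ) i : ℂ)) = Pi.single j (t : ℂ) := by
      funext i
      by_cases h : i = j
      · subst h; simp
      · simp [h]
    rw [this] at ht2
    have h3 : ((g (Pi.single j t) : ℝ) : ℂ) = 0 := ht2.trans ht1
    exact_mod_cast h3
  obtain ⟨k, v, hv, hv0, hgv⟩ := hg₀.exists_eventuallyEq_pow_smul_nonzero_iff.2 hne
  have hev : ∀ᶠ t in 𝓝 (0 : ℂ), AnalyticAt ℂ v t ∧ v t ≠ 0 ∧ g₀ t = t ^ k * v t := by
    filter_upwards [hv.eventually_analyticAt, hv.continuousAt.eventually_ne hv0, hgv]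
      with t h1 h2 h3
    exact ⟨h1, h2, by simpa using h3⟩
  obtain ⟨δ₁, hδ₁, hball⟩ := Metric.nhds_basis_closedBall.eventually_iff.1 hev
  refine ⟨k, min δ₁ (ρ / 2), lt_min hδ₁ (by positivity), ?_⟩
  intro δ hδ hδ' A hA hAj
  have hδ1 : δ ≤ δ₁ := hδ'.trans (min_le_left _ _)
  have hδρ : δ < ρ := by
    have := hδ'.trans (min_le_right _ _)
    have h0 : (0 : ℝ) < ρ := by exact_mod_cast hρ
    linarith
  have hb : ∀ t ∈ closedBall (0 : ℂ) δ, AnalyticAt ℂ v t ∧ v t ≠ 0 ∧ g₀ t = t ^ k * v t :=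
    fun t ht => hball (closedBall_subset_closedBall hδ1 ht)
  have := discAlg.normOneClass hδ.le
  let G : (Fin m → ℂ) → discAlg δ := fun x => (coefSeries c (discAlg δ)).sum (discPoint δ j x)
  have hGan : AnalyticAt ℂ G 0 := discPoint_series_analyticAt hρ hc hδ.le hδρ j
  have hGeval : ∀ x : Fin m → ℂ, ‖x‖ < ρ → ∀ t : closedBall (0 : ℂ) δ,
      (G x).1 t = (coefSeries c ℂ).sum (Function.update x j t) := fun x hx t =>
    discPoint_series_apply hc hδ.le hδρ j hx t
  have hvc : ContinuousOn v (closedBall 0 δ) := fun t ht =>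
    (hb t ht).1.continuousAt.continuousWithinAt
  have hvd : DifferentiableOn ℂ v (ball 0 δ) := fun t ht =>
    (hb t (ball_subset_closedBall ht)).1.differentiableAt.differentiableWithinAt
  let V : discAlg δ := discAlg.mk v hvc hvd
  obtain ⟨Vu, hVu⟩ : IsUnit V := discAlg.isUnit_mk hvc hvd fun t ht => (hb t ht).2.1
  have hG0 : G 0 = discAlg.X ^ k * V := by
    rw [discAlg.ext_iff']
    intro t
    rw [hGeval 0 (by simpa using hρ) t]
    have : Function.update (0 : Fin m → ℂ) j t = Pi.single j (t : ℂ) := rfl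
    rw [this]
    refine (hb t t.2).2.2.trans ?_
    simp only [← discAlg.eval_apply, map_mul, map_pow]
    rfl
  have hinj : ∀ (q : discAlg δ) (r : Fin k → ℂ),
      G 0 * q + ∑ l, r l • discAlg.X ^ (l : ℕ) = 0 → q = 0 ∧ r = 0 := by
    intro q r h
    rw [hG0] at h
    have := discAlg.div_pow_unique hδ k (V * q) r (by rw [← h]; ring)
    refine ⟨?_, this.2⟩
    rw [← hVu] at this
    exact (Units.mul_right_eq_zero Vu).1 this.1
  have hsurj : ∀ a : discAlg δ, ∃ (q : discAlg δ) (r : Fin k → ℂ),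
      G 0 * q + ∑ l, r l • discAlg.X ^ (l : ℕ) = a := by
    intro a
    obtain ⟨b, r, h⟩ := discAlg.exists_div_pow hδ k a
    refine ⟨↑Vu⁻¹ * b, r, ?_⟩
    rw [hG0, h, ← hVu, mul_assoc, Units.mul_inv_cancel_left, mul_comm b]
  obtain ⟨sol₀, hsol₀, hspec₀⟩ := banach_division k discAlg.X (G 0) hinj hsurj
  let sol : (Fin m → ℂ) → discAlg δ × (Fin k → ℂ) := fun x => sol₀ (G x) (A x)
  have hsol : AnalyticAt ℂ sol 0 :=
    AnalyticAt.fun_comp (g := fun p : discAlg δ × discAlg δ => sol₀ p.1 p.2)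
      (f := fun x => (G x, A x)) (hsol₀ (A 0)) (hGan.prod hA)
  have hsolspec : ∀ᶠ x in 𝓝 0,
      G x * (sol x).1 + ∑ l, (sol x).2 l • discAlg.X ^ (l : ℕ) = A x := by
    filter_upwards [hGan.continuousAt.eventually hspec₀] with x hx using hx (A x)
  refine ⟨fun l x => (sol x).2 l, ?_, ?_, ?_, ?_⟩
  · intro l
    exact ((ContinuousLinearMap.proj (R := ℂ) (φ := fun _ : Fin k => ℂ) l).comp
      (ContinuousLinearMap.snd ℂ (discAlg δ) (Fin k → ℂ))).analyticAt _ |>.fun_comp hsol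
  · intro l x s
    simp only [sol, G, discPoint_update, hAj]
  · have hcast : Tendsto (fun x : Fin m → ℝ => fun i => (x i : ℂ)) (𝓝 0) (𝓝 0) := by
      have : Continuous (fun x : Fin m → ℝ => fun i => (x i : ℂ)) := by fun_prop
      have h := this.tendsto 0
      have h0 : (fun i : Fin m => (((0 : Fin m → ℝ) i : ℝ) : ℂ)) = 0 := by funext i; simp
      rwa [h0] at h
    filter_upwards [hcast.eventually hsolspec, hgc,
      hcast.eventually (ball_mem_nhds (0 : Fin m → ℂ) (show (0 : ℝ) < ρ from hρ))]
      with x hx1 hx2 hx3 ht hgx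
    have h1 := congrArg (discAlg.eval ⟨x j, ht⟩) hx1
    rw [map_add, map_mul, discAlg.eval_apply, hGeval _ (mem_ball_zero_iff.1 hx3)] at h1
    simp only [Function.update_eq_self] at h1
    rw [← hx2, hgx] at h1
    rw [← discAlg.eval_apply, ← h1, map_sum]
    simp [map_smul, map_pow, discAlg.eval_apply, discAlg.X_apply]
  · intro hA0 l
    have h0 := hsolspec.self_of_nhds
    have h1 := hinj ((sol 0).1 - ↑Vu⁻¹) (sol 0).2 (by
      rw [mul_sub, sub_add_eq_add_sub, h0, hA0, hG0, ← hVu, mul_assoc, Units.mul_inv,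
        mul_one, sub_self])
    exact congrFun h1.2 l

/-- Weak form of the Weierstrass division theorem: modulo a function `g` regular in `x_j`, every
analytic function is a polynomial in `x_j` of degree less than a fixed `k`. -/
theorem weierstrass_division {m : ℕ} (j : Fin m) {g : (Fin m → ℝ) → ℝ} (hg : AnalyticAt ℝ g 0)
    (hreg : ¬ ∀ᶠ t in 𝓝 (0 : ℝ), g (Pi.single j t) = 0) :
    ∃ k : ℕ, (∀ a : (Fin m → ℝ) → ℝ, AnalyticAt ℝ a 0 → ∃ r : Fin k → (Fin m → ℝ) → ℝ,
      (∀ l, AnalyticAt ℝ (r l) 0) ∧ (∀ l x s, r l (Function.update x j s) = r l x) ∧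
      ∀ᶠ x in 𝓝 0, g x = 0 → a x = ∑ l, r l x * x j ^ (l : ℕ)) ∧
    ∃ r : Fin k → (Fin m → ℝ) → ℝ,
      (∀ l, AnalyticAt ℝ (r l) 0) ∧ (∀ l x s, r l (Function.update x j s) = r l x) ∧
      (∀ l, r l 0 = 0) ∧
      ∀ᶠ x in 𝓝 0, g x = 0 → x j ^ k = ∑ l, r l x * x j ^ (l : ℕ) := by
  obtain ⟨k, δ₀, hδ₀, H⟩ := disc_division j hg hreg
  let T : (Fin m → ℝ) →L[ℝ] (Fin m → ℂ) := ContinuousLinearMap.pi fun i =>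
    Complex.ofRealCLM.comp (ContinuousLinearMap.proj (R := ℝ) (φ := fun _ : Fin m => ℝ) i)
  have hT : ∀ x, T x = fun i => (x i : ℂ) := fun x => rfl
  -- Passage from the complex coefficients to their real parts.
  have key : ∀ δ > (0 : ℝ), ∀ (a : (Fin m → ℝ) → ℝ) (A : (Fin m → ℂ) → discAlg δ)
      (r : Fin k → (Fin m → ℂ) → ℂ), (∀ l, AnalyticAt ℂ (r l) 0) →
      (∀ l x s, r l (Function.update x j s) = r l x) →
      (∀ᶠ x in 𝓝 (0 : Fin m → ℝ), ∀ h : (x j : ℂ) ∈ closedBall (0 : ℂ) δ, g x = 0 →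
          (A fun i => (x i : ℂ)).1 ⟨x j, h⟩ = ∑ l, r l (fun i => (x i : ℂ)) * (x j : ℂ) ^ (l : ℕ)) →
      (∀ᶠ x in 𝓝 (0 : Fin m → ℝ), ∀ h : (x j : ℂ) ∈ closedBall (0 : ℂ) δ,
          (A fun i => (x i : ℂ)).1 ⟨x j, h⟩ = a x) →
      (∀ l, AnalyticAt ℝ (fun x => (r l (T x)).re) 0) ∧
      (∀ l x s, (r l (T (Function.update x j s))).re = (r l (T x)).re) ∧
      ∀ᶠ x in 𝓝 0, g x = 0 → a x = ∑ l, (r l (T x)).re * x j ^ (l : ℕ) := by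
    intro δ hδ a A r hr hrj hr1 ha
    refine ⟨fun l => ?_, fun l x s => ?_, ?_⟩
    · have h1 : AnalyticAt ℝ (r l) (T 0) := by rw [map_zero]; exact (hr l).restrictScalars
      exact AnalyticAt.fun_comp (Complex.reCLM.analyticAt _) (h1.fun_comp (T.analyticAt 0))
    · have : T (Function.update x j s) = Function.update (T x) j (s : ℂ) := by
        funext i
        by_cases h : i = j
        · subst h; simp [hT]
        · simp [hT, h]
      rw [this, hrj]
    · have hball : ∀ᶠ x in 𝓝 (0 : Fin m → ℝ), (x j : ℂ) ∈ closedBall (0 : ℂ) δ := by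
        filter_upwards [ball_mem_nhds (0 : Fin m → ℝ) hδ] with x hx
        rw [mem_closedBall_zero_iff, Complex.norm_real]
        exact (norm_le_pi_norm x j).trans (mem_ball_zero_iff.1 hx).le
      filter_upwards [hr1, ha, hball] with x h1 h2 h3 hgx
      have h4 := h1 h3 hgx
      rw [h2 h3] at h4
      have h5 := congrArg Complex.re h4
      rw [Complex.ofReal_re, Complex.re_sum] at h5
      rw [h5]
      refine Finset.sum_congr rfl fun l _ => ?_
      rw [← Complex.ofReal_pow, Complex.re_mul_ofReal]
      rfl
  refine ⟨k, ?_, ?_⟩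
  · intro a ha
    obtain ⟨c, C, ρ, hρ, hc, hac⟩ := exists_coef ha
    have hρ' : (0 : ℝ) < ρ := hρ
    have hδ : 0 < min δ₀ (ρ / 2 : ℝ) := lt_min hδ₀ (by positivity)
    have hδρ : min δ₀ (ρ / 2 : ℝ) < ρ := (min_le_right _ _).trans_lt (by linarith)
    set δ := min δ₀ (ρ / 2 : ℝ)
    have := discAlg.normOneClass hδ.le
    obtain ⟨r, hr1, hr2, hr3, -⟩ := H δ hδ (min_le_left _ _)
      (fun x => (coefSeries c (discAlg δ)).sum (discPoint δ j x))
      (discPoint_series_analyticAt hρ hc hδ.le hδρ j)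
      (fun x s => by simp only [discPoint_update])
    refine ⟨fun l x => (r l (T x)).re, key δ hδ a (fun x => (coefSeries c (discAlg δ)).sum (discPoint δ j x)) r hr1 hr2 hr3 ?_⟩
    filter_upwards [hac, ball_mem_nhds (0 : Fin m → ℝ) hρ'] with x hx1 hx2 ht
    rw [hx1, discPoint_series_apply hc hδ.le hδρ j ?_, Function.update_eq_self]
    rw [pi_norm_lt_iff hρ']
    intro i
    rw [Complex.norm_real]
    exact (norm_le_pi_norm x i).trans_lt (mem_ball_zero_iff.1 hx2)
  · obtain ⟨r, hr1, hr2, hr3, hr4⟩ := H δ₀ hδ₀ le_rfl (fun _ => discAlg.X ^ k) analyticAt_const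
      (fun _ _ => rfl)
    obtain ⟨h1, h2, h3⟩ := key δ₀ hδ₀ (fun x => x j ^ k) (fun _ => discAlg.X ^ k) r hr1 hr2 hr3 (by
      refine Eventually.of_forall fun x ht => ?_
      rw [← discAlg.eval_apply, map_pow, discAlg.eval_apply, discAlg.X_apply]
      simp)
    refine ⟨fun l x => (r l (T x)).re, h1, h2, fun l => ?_, h3⟩
    change (r l (T 0)).re = 0
    rw [map_zero, hr4 rfl l, Complex.zero_re]

/-! ### Generic filters of analytic germs -/

/-- A filter of points tending to `0` inside `B` which behaves like the generic point of an
irreducible analytic germ: every germ of analytic function is either zero or nowhere zero along it,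
and it is the largest filter inside `B` on which the same germs vanish. -/
structure IsGood {m : ℕ} (B : Set (Fin m → ℝ)) (F : Filter (Fin m → ℝ)) : Prop where
  neBot : F.NeBot
  le : F ≤ 𝓝 0
  mem : B ∈ F
  dich : ∀ a : (Fin m → ℝ) → ℝ, AnalyticAt ℝ a 0 → (∀ᶠ x in F, a x = 0) ∨ ∀ᶠ x in F, a x ≠ 0
  gen : ∀ G : Filter (Fin m → ℝ), G ≤ 𝓝 0 → B ∈ G →
    (∀ a : (Fin m → ℝ) → ℝ, AnalyticAt ℝ a 0 → (∀ᶠ x in F, a x = 0) → ∀ᶠ x in G, a x = 0) → G ≤ F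

/-- By Zorn's lemma there is a maximal set of analytic germs containing `Q₀` whose finite subsets
have common zeros in `B` arbitrarily close to `0`; the filter of these common zeros is good. -/
theorem exists_isGood {m : ℕ} (B : Set (Fin m → ℝ)) (Q₀ : Set ((Fin m → ℝ) → ℝ))
    (hQ₀ : ∀ a ∈ Q₀, AnalyticAt ℝ a 0) (h : ∃ᶠ x in 𝓝 0, x ∈ B ∧ ∀ a ∈ Q₀, a x = 0) :
    ∃ F, IsGood B F ∧ ∀ a ∈ Q₀, ∀ᶠ x in F, a x = 0 := by
  let Fl : Set ((Fin m → ℝ) → ℝ) → Filter (Fin m → ℝ) := fun Q =>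
    𝓝 0 ⊓ 𝓟 B ⊓ ⨅ a ∈ Q, 𝓟 {x | a x = 0}
  have hle1 : ∀ Q, Fl Q ≤ 𝓝 0 := fun Q => inf_le_left.trans inf_le_left
  have hle2 : ∀ Q, Fl Q ≤ 𝓟 B := fun Q => inf_le_left.trans inf_le_right
  have hle3 : ∀ Q, ∀ a ∈ Q, Fl Q ≤ 𝓟 {x | a x = 0} := fun Q a ha =>
    inf_le_right.trans (iInf₂_le a ha)
  have hge : ∀ Q G, G ≤ 𝓝 0 → G ≤ 𝓟 B → (∀ a ∈ Q, G ≤ 𝓟 {x | a x = 0}) → G ≤ Fl Q :=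
    fun Q G h1 h2 h3 => le_inf (le_inf h1 h2) (le_iInf₂ h3)
  have hanti : ∀ Q Q', Q ⊆ Q' → Fl Q' ≤ Fl Q := fun Q Q' hQ =>
    hge _ _ (hle1 _) (hle2 _) fun a ha => hle3 _ a (hQ ha)
  let S : Set (Set ((Fin m → ℝ) → ℝ)) := {Q | (∀ a ∈ Q, AnalyticAt ℝ a 0) ∧ (Fl Q).NeBot}
  have hS0 : Q₀ ∈ S := by
    refine ⟨hQ₀, ?_⟩
    have : (𝓝 0 ⊓ 𝓟 {x | x ∈ B ∧ ∀ a ∈ Q₀, a x = 0}).NeBot := frequently_mem_iff_neBot.1 h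
    refine this.mono (hge _ _ inf_le_left (inf_le_right.trans ?_) fun a ha => inf_le_right.trans ?_)
    · exact principal_mono.2 fun x hx => hx.1
    · exact principal_mono.2 fun x hx => hx.2 a ha
  obtain ⟨M, hM0, hM⟩ := zorn_subset_nonempty S (by
    intro c hcS hc hcn
    refine ⟨⋃₀ c, ⟨?_, ?_⟩, fun s hs => subset_sUnion_of_mem hs⟩
    · rintro a ⟨Q, hQ, ha⟩
      exact (hcS hQ).1 a ha
    · have : Nonempty c := hcn.to_subtype
      have hne : (⨅ Q : c, Fl Q).NeBot := by
        refine iInf_neBot_of_directed' ?_ fun Q => (hcS Q.2).2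
        rintro ⟨Q, hQ⟩ ⟨Q', hQ'⟩
        rcases hc.total hQ hQ' with h | h
        · exact ⟨⟨Q', hQ'⟩, hanti _ _ h, le_rfl⟩
        · exact ⟨⟨Q, hQ⟩, le_rfl, hanti _ _ h⟩
      obtain ⟨Q₁⟩ := this
      refine hne.mono (hge _ _ ((iInf_le _ Q₁).trans (hle1 _)) ((iInf_le _ Q₁).trans (hle2 _)) ?_)
      rintro a ⟨Q, hQ, ha⟩
      exact (iInf_le _ ⟨Q, hQ⟩).trans (hle3 _ a ha)) Q₀ hS0
  refine ⟨Fl M, ⟨hM.prop.2, hle1 _, le_principal_iff.1 (hle2 _), ?_, ?_⟩,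
    fun a ha => le_principal_iff.1 (hle3 _ a (hM0 ha))⟩
  · intro a ha
    by_cases hz : ∀ᶠ x in Fl M, a x ≠ 0
    · exact Or.inr hz
    · left
      have hz' : ∃ᶠ x in Fl M, x ∈ {x | a x = 0} := fun hn => hz hn
      have hne := frequently_mem_iff_neBot.1 hz'
      have hin : insert a M ∈ S := by
        refine ⟨?_, ?_⟩
        · rintro b (rfl | hb)
          · exact ha
          · exact hM.prop.1 b hb
        · refine hne.mono (hge _ _ (inf_le_left.trans (hle1 _)) (inf_le_left.trans (hle2 _)) ?_)
          rintro b (rfl | hb)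
          · exact inf_le_right
          · exact inf_le_left.trans (hle3 _ b hb)
      have : a ∈ M := hM.le_of_ge hin (subset_insert _ _) (mem_insert _ _)
      exact le_principal_iff.1 (hle3 _ a this)
  · intro G h1 h2 h3
    refine hge _ _ h1 (le_principal_iff.2 h2) fun a ha => le_principal_iff.2 ?_
    exact h3 a (hM.prop.1 a ha) (le_principal_iff.1 (hle3 _ a ha))

lemma AnalyticAt.comp_clm {m : ℕ} {a : (Fin m → ℝ) → ℝ} (ha : AnalyticAt ℝ a 0)
    (L : (Fin m → ℝ) →L[ℝ] (Fin m → ℝ)) : AnalyticAt ℝ (fun x => a (L x)) 0 := by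
  have h : AnalyticAt ℝ a (L 0) := by rwa [map_zero]
  exact h.fun_comp (L.analyticAt 0)

lemma IsGood.comap {m : ℕ} {B : Set (Fin m → ℝ)} {F : Filter (Fin m → ℝ)} (hF : IsGood B F)
    (L : (Fin m → ℝ) ≃L[ℝ] (Fin m → ℝ)) : IsGood (L ⁻¹' B) (F.comap L) := by
  have hmap : ∀ {p : (Fin m → ℝ) → Prop}, (∀ᶠ x in F.comap L, p x) ↔ ∀ᶠ x in F, p (L.symm x) := by
    intro p
    have : F.comap L = F.map L.symm := (Filter.map_equiv_symm L.toLinearEquiv.toEquiv F).symm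
    rw [this, eventually_map]
  have hnhds : (𝓝 (0 : Fin m → ℝ)).comap L = 𝓝 0 := by
    have := L.toHomeomorph.comap_nhds_eq 0
    simpa using this
  refine ⟨hF.neBot.comap_of_surj L.surjective, ?_, preimage_mem_comap hF.mem, ?_, ?_⟩
  · rw [← hnhds]; exact comap_mono hF.le
  · intro a ha
    simp only [hmap]
    exact hF.dich _ (ha.comp_clm (L.symm : (Fin m → ℝ) →L[ℝ] (Fin m → ℝ)))
  · intro G h1 h2 h3
    rw [← map_le_iff_le_comap]
    refine hF.gen _ ?_ ?_ ?_
    · rw [map_le_iff_le_comap, hnhds]; exact h1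
    · exact h2
    · intro a ha h
      rw [eventually_map]
      refine h3 _ (ha.comp_clm (L : (Fin m → ℝ) →L[ℝ] (Fin m → ℝ))) ?_
      rw [hmap]
      simpa using h

/-- Truncation: keep the first `j` coordinates and replace the others by `0`. -/
def tau {m : ℕ} (j : ℕ) : (Fin m → ℝ) →L[ℝ] (Fin m → ℝ) :=
  ContinuousLinearMap.pi fun i => if i.1 < j then ContinuousLinearMap.proj i else 0

lemma tau_apply {m : ℕ} (j : ℕ) (x : Fin m → ℝ) (i : Fin m) :
    tau j x i = if i.1 < j then x i else 0 := by
  simp only [tau, ContinuousLinearMap.coe_pi']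
  split_ifs <;> simp

lemma tau_tau {m : ℕ} {i j : ℕ} (h : i ≤ j) (x : Fin m → ℝ) : tau i (tau j x) = tau i x := by
  funext k
  simp only [tau_apply]
  split_ifs <;> first | rfl | omega

lemma tau_self {m : ℕ} {j : ℕ} (h : m ≤ j) (x : Fin m → ℝ) : tau j x = x := by
  funext k
  rw [tau_apply, if_pos (by omega)]

/-- Germs of analytic functions depending only on the first `j` coordinates. -/
def Dep {m : ℕ} (j : ℕ) (a : (Fin m → ℝ) → ℝ) : Prop :=
  AnalyticAt ℝ a 0 ∧ ∀ x, a (tau j x) = a x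

lemma Dep.mono {m : ℕ} {i j : ℕ} (h : i ≤ j) {a : (Fin m → ℝ) → ℝ} (ha : Dep i a) : Dep j a :=
  ⟨ha.1, fun x => by rw [← ha.2, tau_tau h, ha.2]⟩

lemma Dep.coord {m : ℕ} {j : ℕ} (i : Fin m) (h : i.1 < j) : Dep j (fun x : Fin m → ℝ => x i) :=
  ⟨(ContinuousLinearMap.proj (R := ℝ) (φ := fun _ : Fin m => ℝ) i).analyticAt 0, fun x => by
    simp only [tau_apply, if_pos h]⟩

lemma Dep.const {m : ℕ} (j : ℕ) (c : ℝ) : Dep j (fun _ : Fin m → ℝ => c) :=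
  ⟨analyticAt_const, fun _ => rfl⟩

lemma Dep.add {m : ℕ} {j : ℕ} {a b : (Fin m → ℝ) → ℝ} (ha : Dep j a) (hb : Dep j b) :
    Dep j (fun x => a x + b x) := ⟨ha.1.add hb.1, fun x => by simp only [ha.2, hb.2]⟩

lemma Dep.sub {m : ℕ} {j : ℕ} {a b : (Fin m → ℝ) → ℝ} (ha : Dep j a) (hb : Dep j b) :
    Dep j (fun x => a x - b x) := ⟨ha.1.sub hb.1, fun x => by simp only [ha.2, hb.2]⟩

lemma Dep.mul {m : ℕ} {j : ℕ} {a b : (Fin m → ℝ) → ℝ} (ha : Dep j a) (hb : Dep j b) :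
    Dep j (fun x => a x * b x) := ⟨ha.1.mul hb.1, fun x => by simp only [ha.2, hb.2]⟩

lemma Dep.pow {m : ℕ} {j : ℕ} {a : (Fin m → ℝ) → ℝ} (ha : Dep j a) (k : ℕ) :
    Dep j (fun x => a x ^ k) := ⟨ha.1.pow k, fun x => by simp only [ha.2]⟩

lemma Dep.sum {m : ℕ} {j : ℕ} {ι : Type*} (s : Finset ι) {a : ι → (Fin m → ℝ) → ℝ}
    (ha : ∀ i ∈ s, Dep j (a i)) : Dep j (fun x => ∑ i ∈ s, a i x) :=
  ⟨Finset.analyticAt_fun_sum s fun i hi => (ha i hi).1,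
    fun x => Finset.sum_congr rfl fun i hi => (ha i hi).2 x⟩

lemma Dep.prod {m : ℕ} {j : ℕ} {ι : Type*} (s : Finset ι) {a : ι → (Fin m → ℝ) → ℝ}
    (ha : ∀ i ∈ s, Dep j (a i)) : Dep j (fun x => ∏ i ∈ s, a i x) :=
  ⟨Finset.analyticAt_fun_prod s fun i hi => (ha i hi).1,
    fun x => Finset.prod_congr rfl fun i hi => (ha i hi).2 x⟩

lemma Dep.comp_tau {m : ℕ} {a : (Fin m → ℝ) → ℝ} (ha : AnalyticAt ℝ a 0) (j : ℕ) :
    Dep j (fun x => a (tau j x)) :=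
  ⟨ha.comp_clm _, fun x => by simp only [tau_tau le_rfl]⟩

/-- Every analytic germ depends on the first `m` of the `m` coordinates. -/
lemma Dep.of_analyticAt {m : ℕ} {a : (Fin m → ℝ) → ℝ} (ha : AnalyticAt ℝ a 0) : Dep m a :=
  ⟨ha, fun x => by rw [tau_self le_rfl]⟩

/-! ### Normal position -/

/-- Along `F` the coordinate `x_i` satisfies a Weierstrass polynomial equation over the germs in the
previous coordinates, and modulo this equation all germs in the first `i + 1` coordinates are
polynomials in `x_i` of bounded degree. -/
def WeiAt {m : ℕ} (F : Filter (Fin m → ℝ)) (i : Fin m) : Prop :=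
  ∃ (k : ℕ) (s : Fin k → (Fin m → ℝ) → ℝ), (∀ l, Dep i (s l) ∧ s l 0 = 0) ∧
    (∀ᶠ x in F, x i ^ k = ∑ l, s l x * x i ^ (l : ℕ)) ∧
    ∃ k' : ℕ, ∀ a, Dep (i + 1) a → ∃ r : Fin k' → (Fin m → ℝ) → ℝ, (∀ l, Dep i (r l)) ∧
      ∀ᶠ x in 𝓝 0, x i ^ k = ∑ l, s l x * x i ^ (l : ℕ) → a x = ∑ l, r l x * x i ^ (l : ℕ)

/-- Noether normal position: no nonzero germ in the first `d` coordinates vanishes along `F`, and the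
other coordinates are integral over the previous ones. -/
structure IsNormal {m : ℕ} (F : Filter (Fin m → ℝ)) (d : ℕ) : Prop where
  le : d ≤ m
  triv : ∀ a, Dep d a → (∀ᶠ x in F, a x = 0) → ∀ᶠ x in 𝓝 0, a x = 0
  wei : ∀ i : Fin m, d ≤ i → WeiAt F i

/-- The shear `x ↦ x + x_i u`, where `u_i = 0`. -/
noncomputable def shear {m : ℕ} (i : Fin m) (u : Fin m → ℝ) (hu : u i = 0) :
    (Fin m → ℝ) ≃L[ℝ] (Fin m → ℝ) :=
  ContinuousLinearEquiv.equivOfInverse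
    (ContinuousLinearMap.id ℝ _ + (ContinuousLinearMap.proj (R := ℝ) (φ := fun _ : Fin m => ℝ) i).smulRight u)
    (ContinuousLinearMap.id ℝ _ - (ContinuousLinearMap.proj (R := ℝ) (φ := fun _ : Fin m => ℝ) i).smulRight u)
    (fun x => by funext k; simp [hu]) (fun x => by funext k; simp [hu])

lemma shear_apply {m : ℕ} (i : Fin m) (u : Fin m → ℝ) (hu : u i = 0) (x : Fin m → ℝ) :
    shear i u hu x = x + x i • u := by
  simp [shear, ContinuousLinearEquiv.equivOfInverse]

lemma tau_shear {m : ℕ} (i : Fin m) (u : Fin m → ℝ) (hu : ∀ k, i ≤ k → u k = 0) {j : ℕ}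
    (hj : i.1 < j) (x : Fin m → ℝ) :
    tau j (shear i u (hu i le_rfl) x) = shear i u (hu i le_rfl) (tau j x) := by
  funext k
  simp only [shear_apply, tau_apply, Pi.add_apply, Pi.smul_apply, smul_eq_mul, if_pos hj]
  split_ifs with h
  · rfl
  · rw [hu k (by rw [Fin.le_def]; omega)]; simp

lemma tau_shear_symm {m : ℕ} (i : Fin m) (u : Fin m → ℝ) (hu : ∀ k, i ≤ k → u k = 0) {j : ℕ}
    (hj : i.1 < j) (x : Fin m → ℝ) :
    tau j ((shear i u (hu i le_rfl)).symm x) = (shear i u (hu i le_rfl)).symm (tau j x) := by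
  apply (shear i u (hu i le_rfl)).injective
  rw [← tau_shear i u hu hj]
  simp

lemma WeiAt.comap {m : ℕ} {F : Filter (Fin m → ℝ)} {i i' : Fin m} (h : i < i') (hw : WeiAt F i')
    (u : Fin m → ℝ) (hu : ∀ k, i ≤ k → u k = 0) :
    WeiAt (F.comap (shear i u (hu i le_rfl))) i' := by
  set M := shear i u (hu i le_rfl) with hM
  obtain ⟨k, s, hs, hF, k', hdiv⟩ := hw
  have hii : i.1 < i'.1 := h
  have hdep : ∀ {j : ℕ} {a : (Fin m → ℝ) → ℝ}, i.1 < j → Dep j a → Dep j (fun x => a (M x)) :=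
    fun hj ha => ⟨ha.1.comp_clm (M : (Fin m → ℝ) →L[ℝ] (Fin m → ℝ)), fun x => by
      simp only [hM, ← tau_shear i u hu hj]; exact ha.2 _⟩
  have hdep' : ∀ {j : ℕ} {a : (Fin m → ℝ) → ℝ}, i.1 < j → Dep j a →
      Dep j (fun x => a (M.symm x)) :=
    fun hj ha => ⟨ha.1.comp_clm (M.symm : (Fin m → ℝ) →L[ℝ] (Fin m → ℝ)), fun x => by
      simp only [hM, ← tau_shear_symm i u hu hj]; exact ha.2 _⟩
  have hcoord : ∀ x, M x i' = x i' := fun x => by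
    rw [hM, shear_apply]; simp [hu i' h.le]
  refine ⟨k, fun l x => s l (M x), fun l => ⟨hdep hii (hs l).1, ?_⟩, ?_, k', ?_⟩
  · simp only [map_zero]; exact (hs l).2
  · have := hF.comap M
    filter_upwards [this] with x hx
    rwa [hcoord] at hx
  · intro a ha
    obtain ⟨r, hr, hra⟩ := hdiv _ (hdep' (by omega) ha)
    refine ⟨fun l x => r l (M x), fun l => hdep hii (hr l), ?_⟩
    have hM0 : Tendsto M (𝓝 0) (𝓝 0) := by simpa using M.continuous.tendsto 0
    filter_upwards [hM0.eventually hra] with x hx hk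
    rw [hcoord] at hx
    simpa using hx hk

/-- A nonzero germ becomes regular in the last coordinate it depends on after a shear. -/
lemma exists_regular_shear {m : ℕ} (i : Fin m) {h : (Fin m → ℝ) → ℝ} (hh : Dep (i + 1) h)
    (hne : ¬ ∀ᶠ x in 𝓝 0, h x = 0) :
    ∃ (u : Fin m → ℝ) (hu : ∀ k, i ≤ k → u k = 0),
      ¬ ∀ᶠ t in 𝓝 (0 : ℝ), h (shear i u (hu i le_rfl) (Pi.single i t)) = 0 := by
  obtain ⟨ε, hε, hball⟩ := Metric.eventually_nhds_iff_ball.1 hh.1.eventually_analyticAt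
  -- A small point where `h` does not vanish, with nonzero `i`-th coordinate.
  obtain ⟨y, hy, hyh, hyi⟩ : ∃ y ∈ ball (0 : Fin m → ℝ) ε, h y ≠ 0 ∧ y i ≠ 0 := by
    obtain ⟨x, hx, hxh⟩ : ∃ x ∈ ball (0 : Fin m → ℝ) ε, h x ≠ 0 := by
      by_contra hcon
      push Not at hcon
      exact hne (Filter.mem_of_superset (ball_mem_nhds 0 hε) hcon)
    have h1 : ∀ᶠ y in 𝓝 x, y ∈ ball (0 : Fin m → ℝ) ε ∧ h y ≠ 0 :=
      Filter.Eventually.and (isOpen_ball.mem_nhds hx) ((hball x hx).continuousAt.eventually_ne hxh)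
    have h2 : Tendsto (fun t : ℝ => x + t • (Pi.single i 1 : Fin m → ℝ)) (𝓝[≠] 0) (𝓝 x) := by
      have : Continuous (fun t : ℝ => x + t • (Pi.single i 1 : Fin m → ℝ)) := by fun_prop
      have := this.tendsto 0
      simp only [zero_smul, add_zero] at this
      exact this.mono_left nhdsWithin_le_nhds
    have h3 : ∀ᶠ t : ℝ in 𝓝[≠] 0, x i + t ≠ 0 := by
      by_cases hxi : x i = 0
      · filter_upwards [self_mem_nhdsWithin] with t ht
        simpa [hxi] using ht
      · have : ContinuousAt (fun t : ℝ => x i + t) 0 := by fun_prop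
        exact (this.eventually_ne (by simpa using hxi)).filter_mono nhdsWithin_le_nhds
    obtain ⟨t, ht1, ht2⟩ := ((h2.eventually h1).and h3).exists
    exact ⟨_, ht1.1, ht1.2, by simpa using ht2⟩
  refine ⟨(y i)⁻¹ • tau i y, fun k hk => ?_, ?_⟩
  · rw [Pi.smul_apply, tau_apply, if_neg (by rw [Fin.le_def] at hk; omega)]; simp
  intro hev
  have hcurve : ∀ t : ℝ, Pi.single i t + t • ((y i)⁻¹ • tau i y) =
      (t * (y i)⁻¹) • tau (i + 1) y := by
    intro t
    funext k
    simp only [Pi.add_apply, Pi.smul_apply, tau_apply, smul_eq_mul]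
    by_cases hk : k = i
    · subst hk; simp [hyi]
    · have hk' : k.1 ≠ i.1 := fun h => hk (Fin.ext h)
      by_cases hlt : k.1 < i.1
      · simp [hk, hlt, hlt.trans (Nat.lt_succ_self _), mul_assoc]
      · simp [hk, hlt, show ¬ (k.1 < i.1 + 1) by omega]
  simp only [shear_apply, Pi.single_eq_same, hcurve] at hev
  have hnorm : ‖tau (i + 1) y‖ < ε := by
    refine lt_of_le_of_lt ?_ (mem_ball_zero_iff.1 hy)
    rw [pi_norm_le_iff_of_nonneg (norm_nonneg _)]
    intro k
    rw [tau_apply]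
    split_ifs
    · exact norm_le_pi_norm y k
    · simp
  have han : AnalyticOnNhd ℝ (fun s : ℝ => h (s • tau (i + 1) y)) (Icc 0 1) := by
    intro s hs
    refine AnalyticAt.fun_comp (g := h) (hball _ ?_) ?_
    · rw [mem_ball_zero_iff, norm_smul, Real.norm_of_nonneg hs.1]
      exact (mul_le_of_le_one_left (norm_nonneg _) hs.2).trans_lt hnorm
    · exact ((ContinuousLinearMap.id ℝ ℝ).smulRight (tau (i + 1) y)).analyticAt s
  have hev' : ∀ᶠ s in 𝓝 (0 : ℝ), h (s • tau (i + 1) y) = 0 := by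
    have : Tendsto (fun s : ℝ => s * y i) (𝓝 0) (𝓝 0) := by
      have h : Continuous fun s : ℝ => s * y i := by fun_prop
      simpa using h.tendsto 0
    filter_upwards [this.eventually hev] with s hs
    rwa [mul_assoc, mul_inv_cancel₀ hyi, mul_one] at hs
  have := han.eqOn_zero_of_preconnected_of_eventuallyEq_zero isPreconnected_Icc
    (left_mem_Icc.2 zero_le_one) hev' (right_mem_Icc.2 zero_le_one)
  simp only [one_smul, Pi.zero_apply] at this
  rw [hh.2] at this
  exact hyh this

/-- The preparation step: a germ in the first `i + 1` coordinates which vanishes along `F` and is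
regular in `x_i` provides a Weierstrass polynomial. -/
lemma WeiAt.of_regular {m : ℕ} {F : Filter (Fin m → ℝ)} (hF0 : F ≤ 𝓝 0) (i : Fin m)
    {g : (Fin m → ℝ) → ℝ} (hg : Dep (i + 1) g) (hgF : ∀ᶠ x in F, g x = 0)
    (hreg : ¬ ∀ᶠ t in 𝓝 (0 : ℝ), g (Pi.single i t) = 0) : WeiAt F i := by
  have htau0 : ∀ j, Tendsto (tau (m := m) j) (𝓝 0) (𝓝 0) := fun j => by
    simpa using (tau (m := m) j).continuous.tendsto 0
  have htaui : ∀ x : Fin m → ℝ, tau (i + 1) x i = x i := fun x => by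
    rw [tau_apply, if_pos (by omega)]
  have hupd : ∀ x : Fin m → ℝ, Function.update (tau (i + 1) x) i 0 = tau i x := by
    intro x
    funext k
    by_cases hk : k = i
    · subst hk; simp [tau_apply]
    · have hk' : k.1 ≠ i.1 := fun h => hk (Fin.ext h)
      rw [Function.update_of_ne hk, tau_apply, tau_apply]
      split_ifs <;> first | rfl | omega
  -- Coefficients independent of `x_i` may be truncated to the coordinates before `x_i`.
  have hred : ∀ (k : ℕ) (r : Fin k → (Fin m → ℝ) → ℝ) (a G : (Fin m → ℝ) → ℝ),
      (∀ x, a (tau (i + 1) x) = a x) → (∀ x, G (tau (i + 1) x) = G x) →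
      (∀ l x s, r l (Function.update x i s) = r l x) →
      (∀ᶠ x in 𝓝 0, G x = 0 → a x = ∑ l, r l x * x i ^ (l : ℕ)) →
      ∀ᶠ x in 𝓝 0, G x = 0 → a x = ∑ l, r l (tau i x) * x i ^ (l : ℕ) := by
    intro k r a G ha hG hr h
    filter_upwards [(htau0 (i + 1)).eventually h] with x hx hGx
    rw [ha, hG, htaui] at hx
    rw [hx hGx]
    refine Finset.sum_congr rfl fun l _ => ?_
    rw [← hupd, hr]
  obtain ⟨k, -, r, hr, hrj, hr0, hrk⟩ := weierstrass_division i hg.1 hreg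
  let s : Fin k → (Fin m → ℝ) → ℝ := fun l x => r l (tau i x)
  have hs : ∀ l, Dep i (s l) := fun l => Dep.comp_tau (hr l) i
  have hs0 : ∀ l, s l 0 = 0 := fun l => by simp only [s, map_zero, hr0]
  have hw := hred k r (fun x => x i ^ k) g (fun x => by simp only [htaui]) hg.2 hrj hrk
  let w : (Fin m → ℝ) → ℝ := fun x => x i ^ k - ∑ l, s l x * x i ^ (l : ℕ)
  have hci : Dep (i.1 + 1) (fun x : Fin m → ℝ => x i) := Dep.coord i (by omega)
  have hwdep : Dep (i.1 + 1) w := (hci.pow k).sub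
    (Dep.sum _ fun l _ => ((hs l).mono (by omega)).mul (hci.pow _))
  have hwreg : ¬ ∀ᶠ t in 𝓝 (0 : ℝ), w (Pi.single i t) = 0 := by
    have hwt : ∀ t, w (Pi.single i t) = t ^ k := by
      intro t
      have : tau i.1 (Pi.single i t : Fin m → ℝ) = 0 := by
        funext k
        rw [tau_apply]
        split_ifs with hk
        · rw [Pi.single_eq_of_ne (fun h => by rw [h] at hk; omega)]; rfl
        · rfl
      simp only [w, s, this, hr0]
      simp
    simp only [hwt]
    intro h
    have h2 : ∀ᶠ t in 𝓝[≠] (0 : ℝ), t ^ k = 0 := h.filter_mono nhdsWithin_le_nhds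
    obtain ⟨t, ht1, ht2⟩ := (h2.and self_mem_nhdsWithin).exists
    exact pow_ne_zero k ht2 ht1
  obtain ⟨k', hdiv, -⟩ := weierstrass_division i hwdep.1 hwreg
  refine ⟨k, s, fun l => ⟨hs l, hs0 l⟩, ?_, k', ?_⟩
  · filter_upwards [hgF, hw.filter_mono hF0] with x h1 h2 using h2 h1
  · intro a ha
    obtain ⟨r', hr', hrj', hra⟩ := hdiv a ha.1
    refine ⟨fun l x => r' l (tau i x), fun l => Dep.comp_tau (hr' l) i, ?_⟩
    filter_upwards [hred k' r' a w ha.2 hwdep.2 hrj' hra] with x hx hk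
    exact hx (sub_eq_zero.2 hk)

/-- After a linear change of coordinates the germ is in normal position. Induction on the
number `j` of coordinates not known to be integral over the previous ones: as long as a nonzero germ
in the first `j` coordinates vanishes along `F`, a shear makes it regular in the last of them. -/
theorem exists_normal {m : ℕ} : ∀ (j : ℕ) (_ : j ≤ m) (B : Set (Fin m → ℝ))
    (F : Filter (Fin m → ℝ)) (_ : IsGood B F) (_ : ∀ i : Fin m, j ≤ i → WeiAt F i),
    ∃ (L : (Fin m → ℝ) ≃L[ℝ] (Fin m → ℝ)) (d : ℕ), IsNormal (F.comap L) d := by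
  intro j
  induction j with
  | zero =>
    intro _ B F hF hw
    refine ⟨ContinuousLinearEquiv.refl ℝ _, 0, ?_⟩
    have hid : F.comap (ContinuousLinearEquiv.refl ℝ (Fin m → ℝ)) = F := comap_id
    rw [hid]
    refine ⟨Nat.zero_le _, fun a ha haF => ?_, hw⟩
    have := hF.neBot
    obtain ⟨x, hx⟩ := haF.exists
    have htau : ∀ y : Fin m → ℝ, tau 0 y = 0 := fun y => by funext k; simp [tau_apply]
    refine Eventually.of_forall fun y => ?_
    rw [← ha.2, htau] at hx ⊢
    exact hx
  | succ j ih =>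
    intro hj B F hF hw
    by_cases htriv : ∀ a, Dep (j + 1) a → (∀ᶠ x in F, a x = 0) → ∀ᶠ x in 𝓝 0, a x = 0
    · refine ⟨ContinuousLinearEquiv.refl ℝ _, j + 1, ?_⟩
      have hid : F.comap (ContinuousLinearEquiv.refl ℝ (Fin m → ℝ)) = F := comap_id
      rw [hid]
      exact ⟨hj, htriv, hw⟩
    · push Not at htriv
      obtain ⟨h, hdep, hhF, hne⟩ := htriv
      let i : Fin m := ⟨j, hj⟩
      obtain ⟨u, hu, hreg⟩ := exists_regular_shear i hdep (fun hn => hne (hn.mono fun x hx => not_not.2 hx))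
      have hF' := hF.comap (shear i u (hu i le_rfl))
      obtain ⟨L, d, hL⟩ := ih (by omega) _ _ hF' (by
        intro i' hi'
        rcases Nat.lt_or_ge i.1 i'.1 with hlt | hge
        · exact WeiAt.comap hlt (hw i' hlt) u hu
        · have : i' = i := Fin.ext (le_antisymm hge hi')
          rw [this]
          refine WeiAt.of_regular hF'.le i (g := fun x => h (shear i u (hu i le_rfl) x))
            ⟨hdep.1.comp_clm (shear i u (hu i le_rfl) : (Fin m → ℝ) →L[ℝ] (Fin m → ℝ)),
              fun x => ?_⟩ (hhF.comap _) hreg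
          simp only [← tau_shear i u hu (Nat.lt_succ_self _)]
          exact hdep.2 _)
      refine ⟨L.trans (shear i u (hu i le_rfl)), d, ?_⟩
      rw [comap_comap] at hL
      exact hL

/-! ### Minimal polynomials -/

/-- A polynomial of minimal degree for `x_i` over the germs in the previous coordinates, along `F`:
`∑_{l ≤ k} c_l x_i^l` vanishes along `F`, its leading coefficient does not, and a polynomial of
smaller degree vanishes along `F` only if all its coefficients do. -/
structure IsMinPoly {m : ℕ} (F : Filter (Fin m → ℝ)) (i : Fin m) (k : ℕ)
    (c : ℕ → (Fin m → ℝ) → ℝ) : Prop where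
  dep : ∀ l, Dep i (c l)
  zero : ∀ᶠ x in F, ∑ l ∈ Finset.range (k + 1), c l x * x i ^ l = 0
  lead : ¬ ∀ᶠ x in F, c k x = 0
  min : ∀ c' : ℕ → (Fin m → ℝ) → ℝ, (∀ l, Dep i (c' l)) →
    (∀ᶠ x in F, ∑ l ∈ Finset.range k, c' l x * x i ^ l = 0) → ∀ l < k, ∀ᶠ x in F, c' l x = 0

lemma WeiAt.exists_isMinPoly {m : ℕ} {F : Filter (Fin m → ℝ)} [F.NeBot] {i : Fin m}
    (hw : WeiAt F i) : ∃ k c, IsMinPoly F i k c := by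
  classical
  let S : ℕ → Prop := fun k => ∃ c : ℕ → (Fin m → ℝ) → ℝ, (∀ l, Dep i (c l)) ∧
    (∀ᶠ x in F, ∑ l ∈ Finset.range (k + 1), c l x * x i ^ l = 0) ∧ ¬ ∀ᶠ x in F, c k x = 0
  have hS : ∃ k, S k := by
    obtain ⟨k, s, hs, hF, -⟩ := hw
    refine ⟨k, fun l => if h : l < k then fun x => - s ⟨l, h⟩ x else fun _ => 1, ?_, ?_, ?_⟩
    · intro l
      dsimp only
      split_ifs with h
      · have := (Dep.const (m := m) i 0).sub (hs ⟨l, h⟩).1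
        simpa using this
      · exact Dep.const _ _
    · filter_upwards [hF] with x hx
      rw [Finset.sum_range_succ, ← Fin.sum_univ_eq_sum_range
        (fun l => (if h : l < k then fun x => - s ⟨l, h⟩ x else fun _ => 1 : (Fin m → ℝ) → ℝ) x * x i ^ l)]
      simp [hx]
    · simp [NeBot.ne ‹_›]
  obtain ⟨c, hc, hz, hl⟩ := Nat.find_spec hS
  refine ⟨Nat.find hS, c, hc, hz, hl, ?_⟩
  intro c' hc' hz'
  by_contra hcon
  push Not at hcon
  set k := Nat.find hS with hk
  -- The largest index below `k` whose coefficient does not vanish along `F`.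
  let T := (Finset.range k).filter fun l => ¬ ∀ᶠ x in F, c' l x = 0
  have hT : T.Nonempty := by
    obtain ⟨l, hl, hcl⟩ := hcon
    exact ⟨l, Finset.mem_filter.2 ⟨Finset.mem_range.2 hl, fun h => hcl (h.mono fun x hx => not_not.2 hx)⟩⟩
  let l₀ := T.max' hT
  have hl₀ := Finset.mem_filter.1 (T.max'_mem hT)
  have hl₀k : l₀ < k := Finset.mem_range.1 hl₀.1
  refine Nat.find_min hS hl₀k ⟨c', hc', ?_, hl₀.2⟩
  have hz2 : ∀ᶠ x in F, ∀ l ∈ Finset.range k, l₀ < l → c' l x = 0 := by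
    rw [Filter.eventually_all_finset]
    intro l hl
    by_cases hll : l₀ < l
    · have : l ∉ T := fun h => absurd (T.le_max' l h) (not_le.2 hll)
      have h2 : ∀ᶠ x in F, c' l x = 0 := by
        by_contra h
        exact this (Finset.mem_filter.2 ⟨hl, h⟩)
      exact h2.mono fun x hx _ => hx
    · exact Eventually.of_forall fun x h => absurd h hll
  filter_upwards [hz', hz2] with x h1 h2
  rw [← h1]
  refine Finset.sum_subset (Finset.range_subset_range.2 hl₀k) fun l hl hl' => ?_
  rw [h2 l hl (by simpa [Nat.lt_succ_iff] using hl'), zero_mul]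

lemma IsMinPoly.pos {m : ℕ} {F : Filter (Fin m → ℝ)} {i : Fin m} {k : ℕ}
    {c : ℕ → (Fin m → ℝ) → ℝ} (h : IsMinPoly F i k c) : 0 < k := by
  rcases Nat.eq_zero_or_pos k with rfl | hk
  · exact absurd (by simpa using h.zero) h.lead
  · exact hk

/-- A polynomial in `x_i` which vanishes along `F` vanishes wherever the minimal polynomial does and
its leading coefficient does not, provided that the same is known for its coefficients. -/
lemma IsMinPoly.poly_vanish {m : ℕ} {F : Filter (Fin m → ℝ)} {i : Fin m} {k : ℕ}
    {c : ℕ → (Fin m → ℝ) → ℝ} (h : IsMinPoly F i k c) {Z : Set (Fin m → ℝ)}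
    (hZ : ∀ x ∈ Z, ∑ l ∈ Finset.range (k + 1), c l x * x i ^ l = 0 ∧ c k x ≠ 0)
    (hcoef : ∀ a, Dep i a → (∀ᶠ x in F, a x = 0) → ∀ᶠ x in 𝓝 0, x ∈ Z → a x = 0) :
    ∀ (n : ℕ) (c' : ℕ → (Fin m → ℝ) → ℝ), (∀ l, Dep i (c' l)) →
      (∀ᶠ x in F, ∑ l ∈ Finset.range n, c' l x * x i ^ l = 0) →
      ∀ᶠ x in 𝓝 0, x ∈ Z → ∑ l ∈ Finset.range n, c' l x * x i ^ l = 0 := by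
  intro n
  rcases Nat.le_total n k with hnk | hnk
  · intro c' hc' hF
    have h1 := h.min (fun l => if l < n then c' l else fun _ => 0)
      (fun l => by split_ifs; exacts [hc' l, Dep.const _ _]) (by
        filter_upwards [hF] with x hx
        refine ((Finset.sum_subset (Finset.range_subset_range.2 hnk) fun l hl hl' => ?_).symm.trans
          (Finset.sum_congr rfl fun l hl => ?_)).trans hx
        · rw [if_neg (by simpa using hl')]; simp
        · rw [if_pos (by simpa using hl)])
    have h2 : ∀ᶠ x in 𝓝 0, ∀ l ∈ Finset.range n, x ∈ Z → c' l x = 0 := by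
      rw [Filter.eventually_all_finset]
      intro l hl
      have hl' := Finset.mem_range.1 hl
      have := h1 l (hl'.trans_le hnk)
      rw [if_pos hl'] at this
      exact hcoef _ (hc' l) this
    filter_upwards [h2] with x hx hxZ
    exact Finset.sum_eq_zero fun l hl => by rw [hx l hl hxZ, zero_mul]
  · induction n, hnk using Nat.le_induction with
    | base =>
      intro c' hc' hF
      have h2 : ∀ᶠ x in 𝓝 0, ∀ l ∈ Finset.range k, x ∈ Z → c' l x = 0 := by
        rw [Filter.eventually_all_finset]
        intro l hl
        exact hcoef _ (hc' l) (h.min c' hc' hF l (Finset.mem_range.1 hl))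
      filter_upwards [h2] with x hx hxZ
      exact Finset.sum_eq_zero fun l hl => by rw [hx l hl hxZ, zero_mul]
    | succ n hnk ih =>
      intro c' hc' hF
      -- Pseudo-division by the minimal polynomial lowers the degree.
      have key : ∀ x : Fin m → ℝ, ∑ l ∈ Finset.range n, (c k x * c' l x -
            (if n - k ≤ l then c' n x * c (l - (n - k)) x else 0)) * x i ^ l =
          c k x * (∑ l ∈ Finset.range (n + 1), c' l x * x i ^ l) - c' n x * x i ^ (n - k) *
            ∑ l ∈ Finset.range (k + 1), c l x * x i ^ l := by
        intro x
        have e1 : ∀ C : ℝ, ∑ l ∈ Finset.range n,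
            (if n - k ≤ l then C * c (l - (n - k)) x else 0) * x i ^ l
            = C * x i ^ (n - k) * ∑ l ∈ Finset.range k, c l x * x i ^ l := by
          intro C
          have hn : n = (n - k) + k := by omega
          conv_lhs => rw [hn, Finset.sum_range_add]
          rw [Finset.sum_eq_zero, zero_add, Finset.mul_sum]
          · refine Finset.sum_congr rfl fun l _ => ?_
            rw [if_pos (by omega), show n - k + k - k = n - k by omega, Nat.add_sub_cancel_left, pow_add]
            ring
          · intro l hl
            rw [if_neg (by rw [Finset.mem_range] at hl; omega), zero_mul]
        have hpow : x i ^ n = x i ^ (n - k) * x i ^ k := by rw [← pow_add]; congr 1; omega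
        simp only [sub_mul, Finset.sum_sub_distrib]
        have e2 : ∑ l ∈ Finset.range n, c k x * c' l x * x i ^ l =
            c k x * ∑ l ∈ Finset.range n, c' l x * x i ^ l := by
          rw [Finset.mul_sum]
          exact Finset.sum_congr rfl fun l _ => mul_assoc _ _ _
        rw [e1, e2, Finset.sum_range_succ _ n, Finset.sum_range_succ _ k, hpow]
        ring
      have h1 := ih (fun l x => c k x * c' l x -
          (if n - k ≤ l then c' n x * c (l - (n - k)) x else 0)) (fun l => by
        refine ((h.dep k).mul (hc' l)).sub ?_
        split_ifs
        · exact (hc' n).mul (h.dep _)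
        · exact Dep.const _ _) (by
        filter_upwards [hF, h.zero] with x h1 h2
        rw [key, h1, h2]; simp)
      filter_upwards [h1] with x hx hxZ
      have := hx hxZ
      rw [key, (hZ x hxZ).1, mul_zero, sub_zero] at this
      exact (mul_eq_zero.1 this).resolve_left (hZ x hxZ).2

/-- The triangular system of minimal polynomials cuts out the germ described by `F`, away from the
zeros of the leading coefficients. -/
theorem IsNormal.vanish {m : ℕ} {F : Filter (Fin m → ℝ)} {d : ℕ}
    (hF0 : F ≤ 𝓝 0) (hN : IsNormal F d) {k : Fin m → ℕ} {c : Fin m → ℕ → (Fin m → ℝ) → ℝ}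
    (hc : ∀ i : Fin m, d ≤ i → IsMinPoly F i (k i) (c i)) {Z : Set (Fin m → ℝ)}
    (hZ : ∀ x ∈ Z, ∀ i : Fin m, d ≤ i →
      ∑ l ∈ Finset.range (k i + 1), c i l x * x i ^ l = 0 ∧ c i (k i) x ≠ 0) :
    ∀ j ≤ m, ∀ a, Dep j a → (∀ᶠ x in F, a x = 0) → ∀ᶠ x in 𝓝 0, x ∈ Z → a x = 0 := by
  intro j
  induction j with
  | zero =>
    intro _ a ha haF
    exact (hN.triv a (ha.mono (Nat.zero_le _)) haF).mono fun x hx _ => hx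
  | succ j ih =>
    intro hj a ha haF
    by_cases hd : j < d
    · exact (hN.triv a (ha.mono hd) haF).mono fun x hx _ => hx
    push Not at hd
    let i : Fin m := ⟨j, hj⟩
    have hpoly := (hc i hd).poly_vanish (Z := Z) (fun x hx => hZ x hx i hd) (ih (by omega))
    obtain ⟨K, s, hs, hF, k', hdiv⟩ := hN.wei i hd
    have hw : ∀ᶠ x in 𝓝 0, x ∈ Z → x i ^ K = ∑ l, s l x * x i ^ (l : ℕ) := by
      have key : ∀ x : Fin m → ℝ, ∑ l ∈ Finset.range (K + 1),
          (if h : l < K then fun x => - s ⟨l, h⟩ x else fun _ => 1 : (Fin m → ℝ) → ℝ) x * x i ^ l =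
          x i ^ K - ∑ l, s l x * x i ^ (l : ℕ) := by
        intro x
        rw [Finset.sum_range_succ, ← Fin.sum_univ_eq_sum_range
          (fun l => (if h : l < K then fun x => - s ⟨l, h⟩ x else fun _ => 1 :
            (Fin m → ℝ) → ℝ) x * x i ^ l)]
        simp
        ring
      have := hpoly (K + 1)
        (fun l => if h : l < K then fun x => - s ⟨l, h⟩ x else fun _ => 1) (fun l => by
          split_ifs with h
          · have := (Dep.const (m := m) i 0).sub (hs ⟨l, h⟩).1
            simpa using this
          · exact Dep.const _ _) (by
          filter_upwards [hF] with x hx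
          rw [key, hx, sub_self])
      filter_upwards [this] with x hx hxZ
      have := hx hxZ
      rw [key] at this
      exact sub_eq_zero.1 this
    obtain ⟨r, hr, hra⟩ := hdiv a ha
    have key : ∀ x : Fin m → ℝ, ∑ l ∈ Finset.range k',
        (if h : l < k' then r ⟨l, h⟩ else fun _ => 0 : (Fin m → ℝ) → ℝ) x * x i ^ l =
        ∑ l, r l x * x i ^ (l : ℕ) := by
      intro x
      rw [← Fin.sum_univ_eq_sum_range (fun l => (if h : l < k' then r ⟨l, h⟩ else fun _ => 0 :
          (Fin m → ℝ) → ℝ) x * x i ^ l)]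
      simp
    have := hpoly k' (fun l => if h : l < k' then r ⟨l, h⟩ else fun _ => 0) (fun l => by
        split_ifs with h
        · exact hr _
        · exact Dep.const _ _) (by
      filter_upwards [haF, hF, hra.filter_mono hF0] with x h1 h2 h3
      rw [key, ← h3 h2, h1])
    filter_upwards [hw, hra, this] with x h1 h2 h3 hxZ
    rw [h2 (h1 hxZ), ← key]
    exact h3 hxZ

/-! ### Norms -/

/-- The germs along `F` of the analytic functions of the first `j` coordinates. -/
def depRing {m : ℕ} (F : Filter (Fin m → ℝ)) (j : ℕ) : Subring (Germ F ℝ) where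
  carrier := {u | ∃ a : (Fin m → ℝ) → ℝ, Dep j a ∧ u = (a : Germ F ℝ)}
  mul_mem' := by
    rintro _ _ ⟨a, ha, rfl⟩ ⟨b, hb, rfl⟩
    exact ⟨_, ha.mul hb, rfl⟩
  one_mem' := ⟨_, Dep.const j 1, rfl⟩
  add_mem' := by
    rintro _ _ ⟨a, ha, rfl⟩ ⟨b, hb, rfl⟩
    exact ⟨_, ha.add hb, rfl⟩
  zero_mem' := ⟨_, Dep.const j 0, rfl⟩
  neg_mem' := by
    rintro _ ⟨a, ha, rfl⟩
    refine ⟨_, (Dep.const j 0).sub ha, ?_⟩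
    simp only [zero_sub]
    rfl

lemma depRing_mono {m : ℕ} (F : Filter (Fin m → ℝ)) {i j : ℕ} (h : i ≤ j) :
    depRing F i ≤ depRing F j := fun _ ⟨a, ha, hu⟩ => ⟨a, ha.mono h, hu⟩

lemma WeiAt.isIntegral {m : ℕ} {F : Filter (Fin m → ℝ)} (hF0 : F ≤ 𝓝 0)
    {i : Fin m} (hw : WeiAt F i) {a : (Fin m → ℝ) → ℝ} (ha : Dep (i + 1) a) :
    IsIntegral (depRing F i) (a : Germ F ℝ) := by
  classical
  obtain ⟨k, s, hs, hF, k', hdiv⟩ := hw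
  let S : Subalgebra (depRing F i) (Germ F ℝ) :=
    { (depRing F (i + 1)).toSubsemiring with
      algebraMap_mem' := fun r => depRing_mono F (Nat.le_succ _) r.2 }
  refine IsIntegral.of_mem_of_fg S ?_ _ ⟨a, ha, rfl⟩
  have hc : Dep (i + 1) (fun x : Fin m → ℝ => x i) := Dep.coord i (Nat.lt_succ_self _)
  refine ⟨Finset.univ.image fun l : Fin k' => ((fun x => x i ^ (l : ℕ) : (Fin m → ℝ) → ℝ) : Germ F ℝ),
    le_antisymm (Submodule.span_le.2 ?_) ?_⟩
  · intro u hu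
    simp only [Finset.coe_image, Finset.coe_univ, image_univ, mem_range] at hu
    obtain ⟨l, rfl⟩ := hu
    exact ⟨_, hc.pow l, rfl⟩
  · rintro u ⟨b, hb, rfl⟩
    obtain ⟨r, hr, hrb⟩ := hdiv b hb
    have : (b : Germ F ℝ) = ∑ l, (⟨(r l : Germ F ℝ), r l, hr l, rfl⟩ : depRing F i) •
        ((fun x => x i ^ (l : ℕ) : (Fin m → ℝ) → ℝ) : Germ F ℝ) := by
      have h1 : (b : Germ F ℝ) = ((∑ l, r l * (fun x => x i ^ (l : ℕ)) : (Fin m → ℝ) → ℝ) : Germ F ℝ) := by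
        refine Germ.coe_eq.2 ?_
        filter_upwards [hF, hrb.filter_mono hF0] with x h1 h2
        rw [h2 h1]
        simp [Finset.sum_apply]
      rw [h1]
      exact map_sum (Germ.coeRingHom F (R := ℝ)) _ _
    rw [this]
    refine Submodule.sum_mem _ fun l _ => Submodule.smul_mem _ _ (Submodule.subset_span ?_)
    exact Finset.mem_coe.2 (Finset.mem_image_of_mem _ (Finset.mem_univ l))

/-- One step of taking norms: a germ in the first `i + 1` coordinates which is nonzero along `F`
divides, along `F`, a nonzero germ in the first `i` coordinates. -/
lemma WeiAt.exists_dvd {m : ℕ} {B : Set (Fin m → ℝ)} {F : Filter (Fin m → ℝ)} (hG : IsGood B F)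
    {i : Fin m} (hw : WeiAt F i) {a : (Fin m → ℝ) → ℝ} (ha : Dep (i + 1) a)
    (ha0 : ¬ ∀ᶠ x in F, a x = 0) :
    ∃ b, Dep i b ∧ (¬ ∀ᶠ x in F, b x = 0) ∧ ∃ h, Dep (i + 1) h ∧ ∀ᶠ x in F, b x = h x * a x := by
  have := hG.neBot
  have hnz : (a : Germ F ℝ) ∈ nonZeroDivisors (Germ F ℝ) := by
    rw [mem_nonZeroDivisors_iff_right]
    intro u
    refine Germ.inductionOn u fun v hv => Germ.coe_eq.2 ?_
    have h1 : ∀ᶠ x in F, v x * a x = 0 := Germ.coe_eq.1 hv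
    filter_upwards [h1, (hG.dich a ha.1).resolve_left ha0] with x h1 h2
    exact (mul_eq_zero.1 h1).resolve_right h2
  have hinteg := (hw.isIntegral hG.le ha).isAlgebraic
  obtain ⟨q, hq0, hq⟩ := hinteg.exists_nonzero_coeff_and_aeval_eq_zero hnz
  obtain ⟨b, hb, hbq⟩ := (q.coeff 0).2
  refine ⟨b, hb, fun h => hq0 ?_, ?_⟩
  · apply Subtype.ext
    rw [hbq]
    exact Germ.coe_eq.2 h
  have hmem : ∀ p : Polynomial (depRing F i), Polynomial.aeval (a : Germ F ℝ) p ∈ depRing F (i + 1) := by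
    intro p
    rw [Polynomial.aeval_eq_sum_range]
    refine sum_mem fun l _ => ?_
    have ha' : (a : Germ F ℝ) ∈ depRing F (i + 1) := ⟨a, ha, rfl⟩
    exact mul_mem (depRing_mono F (Nat.le_succ _) (p.coeff l).2) (pow_mem ha' l)
  obtain ⟨h, hh, hhq⟩ := hmem q.divX
  refine ⟨fun x => 0 - h x, (Dep.const _ 0).sub hh, ?_⟩
  rw [← Polynomial.divX_mul_X_add q, map_add, map_mul, Polynomial.aeval_X, Polynomial.aeval_C,
    hhq] at hq
  have h2 : ((h * a + b : (Fin m → ℝ) → ℝ) : Germ F ℝ) = ((0 : (Fin m → ℝ) → ℝ) : Germ F ℝ) := by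
    rw [show algebraMap (depRing F i) (Germ F ℝ) (q.coeff 0) = (b : Germ F ℝ) from hbq] at hq
    exact hq
  filter_upwards [Germ.coe_eq.1 h2] with x hx
  simp only [Pi.add_apply, Pi.mul_apply, Pi.zero_apply] at hx
  linarith

/-- A germ which is nonzero along `F` divides a nonzero germ in the first `d` coordinates. -/
lemma IsNormal.exists_dvd {m : ℕ} {B : Set (Fin m → ℝ)} {F : Filter (Fin m → ℝ)} (hG : IsGood B F)
    {d : ℕ} (hN : IsNormal F d) {a : (Fin m → ℝ) → ℝ} (ha : AnalyticAt ℝ a 0)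
    (ha0 : ¬ ∀ᶠ x in F, a x = 0) :
    ∃ b, Dep d b ∧ (¬ ∀ᶠ x in F, b x = 0) ∧
      ∃ h : (Fin m → ℝ) → ℝ, AnalyticAt ℝ h 0 ∧ ∀ᶠ x in F, b x = h x * a x := by
  have key : ∀ j, d ≤ j → j ≤ m → ∃ b, Dep j b ∧ (¬ ∀ᶠ x in F, b x = 0) ∧
      ∃ h : (Fin m → ℝ) → ℝ, AnalyticAt ℝ h 0 ∧ ∀ᶠ x in F, b x = h x * a x := by
    intro j hdj hjm
    induction hjm using Nat.decreasingInduction with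
    | self => exact ⟨a, Dep.of_analyticAt ha, ha0, fun _ => 1, analyticAt_const, by simp⟩
    | of_succ j hj ih =>
      obtain ⟨b, hb, hb0, h, hh, hbh⟩ := ih (by omega)
      obtain ⟨b', hb', hb0', h', hh', hbh'⟩ := (hN.wei ⟨j, hj⟩ hdj).exists_dvd hG hb hb0
      refine ⟨b', hb', hb0', fun x => h' x * h x, hh'.1.mul hh, ?_⟩
      filter_upwards [hbh, hbh'] with x h1 h2
      rw [h2, h1, mul_assoc]
  exact key d le_rfl hN.le

/-! ### Étale covers -/

lemma analyticAt_det {m : ℕ} {A : (Fin m → ℝ) → Matrix (Fin m) (Fin m) ℝ} {x₀ : Fin m → ℝ}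
    (hA : ∀ i j, AnalyticAt ℝ (fun x => A x i j) x₀) : AnalyticAt ℝ (fun x => (A x).det) x₀ := by
  simp only [Matrix.det_apply']
  exact Finset.analyticAt_fun_sum _ fun σ _ =>
    analyticAt_const.mul (Finset.analyticAt_fun_prod _ fun i _ => hA _ _)

lemma analyticAt_adjugate_mulVec {m : ℕ} {A : (Fin m → ℝ) → Matrix (Fin m) (Fin m) ℝ}
    {x₀ : Fin m → ℝ} (hA : ∀ i j, AnalyticAt ℝ (fun x => A x i j) x₀) (u : Fin m → ℝ) :
    AnalyticAt ℝ (fun x => (A x).adjugate.mulVec u) x₀ := by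
  refine AnalyticAt.pi fun i => ?_
  simp only [Matrix.mulVec, dotProduct, Matrix.adjugate_apply]
  refine Finset.analyticAt_fun_sum _ fun j _ => AnalyticAt.mul (analyticAt_det fun a b => ?_)
    analyticAt_const
  by_cases h : a = j
  · subst h; simp only [Matrix.updateRow_self]; exact analyticAt_const
  · simp only [Matrix.updateRow_ne h]; exact hA a b

lemma closure_eq_zero {m : ℕ} {M : Set (Fin m → ℝ)} {φ : (Fin m → ℝ) → ℝ} {x : Fin m → ℝ}
    (hφ : ContinuousAt φ x) (h : ∀ y ∈ M, φ y = 0) (hx : x ∈ closure M) : φ x = 0 := by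
  have := mem_closure_iff_nhdsWithin_neBot.1 hx
  exact tendsto_nhds_unique_of_eventuallyEq (hφ.tendsto.mono_left nhdsWithin_le_nhds)
    (tendsto_const_nhds (x := (0 : ℝ))) (by filter_upwards [self_mem_nhdsWithin] with y hy using h y hy)

lemma closure_nonneg {m : ℕ} {M : Set (Fin m → ℝ)} {φ : (Fin m → ℝ) → ℝ} {x : Fin m → ℝ}
    (hφ : ContinuousAt φ x) (h : ∀ y ∈ M, 0 ≤ φ y) (hx : x ∈ closure M) : 0 ≤ φ x := by
  have := mem_closure_iff_nhdsWithin_neBot.1 hx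
  exact ge_of_tendsto (hφ.tendsto.mono_left nhdsWithin_le_nhds)
    (by filter_upwards [self_mem_nhdsWithin] with y hy using h y hy)

/-- The Weierstrass polynomial of `x_i` forces `x_i = 0` above the origin. -/
lemma WeiAt.exists_proper {m : ℕ} {F : Filter (Fin m → ℝ)} {i : Fin m} (hw : WeiAt F i) :
    ∃ w : (Fin m → ℝ) → ℝ, AnalyticAt ℝ w 0 ∧ (∀ᶠ x in F, w x = 0) ∧
      ∀ x, tau i x = 0 → w x = 0 → x i = 0 := by
  obtain ⟨k, s, hs, hF, -⟩ := hw
  have hc : Dep m (fun x : Fin m → ℝ => x i) := Dep.coord i i.2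
  refine ⟨fun x => x i ^ k - ∑ l, s l x * x i ^ (l : ℕ), ?_, ?_, ?_⟩
  · exact (hc.pow k).1.sub (Finset.analyticAt_fun_sum _ fun l _ => (hs l).1.1.mul (hc.pow l).1)
  · filter_upwards [hF] with x hx
    rw [hx, sub_self]
  · intro x hx h
    have h0 : ∀ l, s l x = 0 := fun l => by rw [← (hs l).1.2, hx, (hs l).2]
    simp only [h0, zero_mul, Finset.sum_const_zero, sub_zero] at h
    exact eq_zero_of_pow_eq_zero h

lemma IsMinPoly.dep_poly {m : ℕ} {F : Filter (Fin m → ℝ)} {i : Fin m} {k : ℕ}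
    {c : ℕ → (Fin m → ℝ) → ℝ} (h : IsMinPoly F i k c) :
    Dep (i + 1) (fun x => ∑ l ∈ Finset.range (k + 1), c l x * x i ^ l) :=
  Dep.sum _ fun l _ => ((h.dep l).mono (Nat.le_succ _)).mul
    ((Dep.coord i (Nat.lt_succ_self _)).pow l)

lemma tau_add_smul_single {m : ℕ} {j : ℕ} {k : Fin m} (h : j ≤ k) (x : Fin m → ℝ) (t : ℝ) :
    tau j (x + t • (Pi.single k 1 : Fin m → ℝ)) = tau j x := by
  funext l
  simp only [tau_apply]
  split_ifs with hl
  · have : l ≠ k := fun h' => by rw [h'] at hl; omega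
    simp [this]
  · rfl

lemma Dep.fderiv_single {m : ℕ} {j : ℕ} {a : (Fin m → ℝ) → ℝ} (ha : Dep j a) {k : Fin m}
    (h : j ≤ k) (x : Fin m → ℝ) : fderiv ℝ a x (Pi.single k 1) = 0 := by
  by_cases hd : DifferentiableAt ℝ a x
  · have h1 : HasDerivAt (fun t : ℝ => x + t • (Pi.single k 1 : Fin m → ℝ)) (Pi.single k 1) 0 := by
      have := ((hasDerivAt_id (0 : ℝ)).smul_const (Pi.single k 1 : Fin m → ℝ)).const_add x
      simpa using this
    have h2 : HasDerivAt (fun t : ℝ => a (x + t • (Pi.single k 1 : Fin m → ℝ)))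
        (fderiv ℝ a x (Pi.single k 1)) 0 := by
      refine HasFDerivAt.comp_hasDerivAt (0 : ℝ) (l := a) ?_ h1
      simpa using hd.hasFDerivAt
    have h3 : (fun t : ℝ => a (x + t • (Pi.single k 1 : Fin m → ℝ))) = fun _ => a x := by
      funext t
      rw [← ha.2, tau_add_smul_single h, ha.2]
    rw [h3] at h2
    exact h2.unique (hasDerivAt_const _ _)
  · rw [fderiv_zero_of_not_differentiableAt hd]; rfl

/-- By minimality, the minimal polynomial is separable: its derivative is nonzero along `F`. -/
lemma IsMinPoly.fderiv_ne {m : ℕ} {F : Filter (Fin m → ℝ)} (hF0 : F ≤ 𝓝 0) {i : Fin m} {k : ℕ}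
    {c : ℕ → (Fin m → ℝ) → ℝ} (h : IsMinPoly F i k c) :
    ¬ ∀ᶠ x in F, fderiv ℝ (fun x => ∑ l ∈ Finset.range (k + 1), c l x * x i ^ l) x
      (Pi.single i 1) = 0 := by
  set p : (Fin m → ℝ) → ℝ := fun x => ∑ l ∈ Finset.range (k + 1), c l x * x i ^ l with hp
  intro hcon
  have hder : ∀ᶠ x in F, fderiv ℝ p x (Pi.single i 1) =
      ∑ l ∈ Finset.range k, ((l + 1 : ℝ) * c (l + 1) x) * x i ^ l := by
    have hd : ∀ᶠ x in F, DifferentiableAt ℝ p x :=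
      (h.dep_poly.1.eventually_analyticAt.filter_mono hF0).mono fun x hx => hx.differentiableAt
    filter_upwards [hd] with x hd
    have h1 : HasDerivAt (fun t : ℝ => x + t • (Pi.single i 1 : Fin m → ℝ)) (Pi.single i 1) 0 := by
      have := ((hasDerivAt_id (0 : ℝ)).smul_const (Pi.single i 1 : Fin m → ℝ)).const_add x
      simpa using this
    have h2 : HasDerivAt (fun t : ℝ => p (x + t • (Pi.single i 1 : Fin m → ℝ)))
        (fderiv ℝ p x (Pi.single i 1)) 0 := by
      refine HasFDerivAt.comp_hasDerivAt (0 : ℝ) (l := p) ?_ h1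
      simpa using hd.hasFDerivAt
    have h3 : (fun t : ℝ => p (x + t • (Pi.single i 1 : Fin m → ℝ))) =
        fun t => ∑ l ∈ Finset.range (k + 1), c l x * (x i + t) ^ l := by
      funext t
      simp only [hp]
      refine Finset.sum_congr rfl fun l _ => ?_
      rw [← (h.dep l).2, tau_add_smul_single le_rfl, (h.dep l).2]
      simp
    rw [h3] at h2
    have h4 : HasDerivAt (fun t : ℝ => ∑ l ∈ Finset.range (k + 1), c l x * (x i + t) ^ l)
        (∑ l ∈ Finset.range (k + 1), c l x * (l * x i ^ (l - 1))) 0 := by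
      refine HasDerivAt.fun_sum fun l _ => ?_
      have := (((hasDerivAt_id (0 : ℝ)).const_add (x i)).pow l).const_mul (c l x)
      simpa using this
    rw [h2.unique h4, Finset.sum_range_succ']
    simp only [Nat.cast_add, Nat.cast_one, Nat.add_sub_cancel, Nat.cast_zero, zero_mul, mul_zero,
      add_zero]
    exact Finset.sum_congr rfl fun l _ => by ring
  have hk := h.pos
  have h5 := h.min (fun l x => (l + 1 : ℝ) * c (l + 1) x)
    (fun l => (Dep.const _ _).mul (h.dep _)) (by
      filter_upwards [hcon, hder] with x h1 h2
      rw [← h2, h1]) (k - 1) (by omega)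
  refine h.lead ?_
  filter_upwards [h5] with x hx
  rw [show k - 1 + 1 = k by omega] at hx
  refine (mul_eq_zero.1 hx).resolve_left ?_
  positivity

/-- The set `M`, near `0`, is an étale cover of its projection to the first `d` coordinates,
away from the zeros of the discriminant `N`; the filter `F` consists of the neighbourhoods of `0` in
`M`. The vector `V u x / δ x` is the lift to `x` of the direction `u` under this cover. -/
structure IsCover {m : ℕ} (F : Filter (Fin m → ℝ)) (d : ℕ) (M : Set (Fin m → ℝ))
    (N δ : (Fin m → ℝ) → ℝ) (V : (Fin m → ℝ) → (Fin m → ℝ) → (Fin m → ℝ)) : Prop where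
  eq : F = 𝓝 0 ⊓ 𝓟 M
  dep : Dep d N
  ne : ¬ ∀ᶠ x in F, N x = 0
  zero : N 0 = 0
  compact : IsCompact (closure M)
  proper : ∀ ε > 0, ∃ η > 0, ∀ x ∈ closure M, ‖tau d x‖ < η → ‖x‖ < ε
  closed : ∃ η > 0, ∀ x ∈ closure M, ‖tau d x‖ < η → N x ≠ 0 → x ∈ M
  anδ : AnalyticAt ℝ δ 0
  anV : ∀ u, AnalyticAt ℝ (V u) 0
  δne : ∀ x ∈ M, δ x ≠ 0
  sect : ∀ x ∈ M, ∃ (g : (Fin m → ℝ) → (Fin m → ℝ)) (g' : (Fin m → ℝ) →L[ℝ] (Fin m → ℝ)),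
    HasFDerivAt g g' (tau d x) ∧ g (tau d x) = x ∧ (∀ u, δ x • g' u = V u x) ∧
    ∀ᶠ y in 𝓝 (tau d x), tau d y = y → g y ∈ M ∧ tau d (g y) = y

/-- A germ in normal position is an étale cover of an affine space, off a discriminant. -/
theorem exists_isCover {m : ℕ} {ι : Type} [Fintype ι] {g : ι → (Fin m → ℝ) → ℝ}
    (hg : ∀ i, AnalyticAt ℝ (g i) 0) {i₀ : ι} (hi₀ : g i₀ 0 = 0) {F : Filter (Fin m → ℝ)}
    (hG : IsGood {x | ∀ i, 0 < g i x} F) {d : ℕ} (hN : IsNormal F d) :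
    ∃ M N δ V, IsCover F d M N δ V := by
  classical
  have hne := hG.neBot
  have hF0 := hG.le
  have hmp : ∀ i : Fin m, ∃ (k : ℕ) (c : ℕ → (Fin m → ℝ) → ℝ), d ≤ i → IsMinPoly F i k c := by
    intro i
    by_cases hi : d ≤ i
    · obtain ⟨k, c, h⟩ := (hN.wei i hi).exists_isMinPoly
      exact ⟨k, c, fun _ => h⟩
    · exact ⟨0, fun _ _ => 0, fun h => absurd h hi⟩
  choose k c hc using hmp
  have hww : ∀ i : Fin m, ∃ w : (Fin m → ℝ) → ℝ, AnalyticAt ℝ w 0 ∧ (∀ᶠ x in F, w x = 0) ∧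
      (d ≤ i → ∀ x, tau i x = 0 → w x = 0 → x i = 0) := by
    intro i
    by_cases hi : d ≤ i
    · obtain ⟨w, h1, h2, h3⟩ := (hN.wei i hi).exists_proper
      exact ⟨w, h1, h2, fun _ => h3⟩
    · exact ⟨fun _ => 0, analyticAt_const, by simp, fun h => absurd h hi⟩
  choose w hwan hwF hw0 using hww
  let p : Fin m → (Fin m → ℝ) → ℝ := fun i x => ∑ l ∈ Finset.range (k i + 1), c i l x * x i ^ l
  let q : Fin m → (Fin m → ℝ) → ℝ := fun i => if d ≤ i then p i else fun x => x i
  have hq : ∀ i : Fin m, Dep (i + 1) (q i) := by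
    intro i
    simp only [q]
    split_ifs with hi
    · exact (hc i hi).dep_poly
    · exact Dep.coord i (Nat.lt_succ_self _)
  let Ψ : (Fin m → ℝ) → (Fin m → ℝ) := fun x i => q i x
  have hΨ : AnalyticAt ℝ Ψ 0 := AnalyticAt.pi fun i => (hq i).1
  let J : (Fin m → ℝ) → Matrix (Fin m) (Fin m) ℝ := fun x =>
    LinearMap.toMatrix' (fderiv ℝ Ψ x : (Fin m → ℝ) →ₗ[ℝ] (Fin m → ℝ))
  have hJ : ∀ i j, AnalyticAt ℝ (fun x => J x i j) 0 := by
    intro i j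
    have : (fun x => J x i j) = fun x => ((ContinuousLinearMap.proj (R := ℝ)
        (φ := fun _ : Fin m => ℝ) i).comp (ContinuousLinearMap.apply ℝ (Fin m → ℝ)
          (Pi.single j 1 : Fin m → ℝ))) (fderiv ℝ Ψ x) := by
      funext x
      simp [J, LinearMap.toMatrix'_apply]
    rw [this]
    exact AnalyticAt.fun_comp (ContinuousLinearMap.analyticAt _ _) hΨ.fderiv
  let δ : (Fin m → ℝ) → ℝ := fun x => (J x).det
  have hδ : AnalyticAt ℝ δ 0 := analyticAt_det hJ
  let V : (Fin m → ℝ) → (Fin m → ℝ) → (Fin m → ℝ) := fun u x => (J x).adjugate.mulVec u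
  -- The Jacobian matrix is lower triangular, so its determinant is nonzero along `F`.
  have hΨan := hΨ.eventually_analyticAt
  have hδF : ∀ᶠ x in F, δ x ≠ 0 := by
    have h1 : ∀ᶠ x in F, ∀ i, fderiv ℝ (q i) x (Pi.single i 1) ≠ 0 := by
      rw [eventually_all]
      intro i
      by_cases hi : d ≤ i
      · have h2 := (hc i hi).fderiv_ne hF0
        have h3 : AnalyticAt ℝ (fun x => fderiv ℝ (p i) x (Pi.single i 1)) 0 :=
          AnalyticAt.fun_comp (g := fun A : (Fin m → ℝ) →L[ℝ] ℝ =>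
            ContinuousLinearMap.apply ℝ ℝ (Pi.single i 1 : Fin m → ℝ) A)
            (ContinuousLinearMap.analyticAt _ _) (hc i hi).dep_poly.1.fderiv
        have h4 := (hG.dich _ h3).resolve_left h2
        simpa only [q, if_pos hi] using h4
      · refine Eventually.of_forall fun x => ?_
        simp only [q, if_neg hi]
        have : fderiv ℝ (fun x : Fin m → ℝ => x i) x =
            ContinuousLinearMap.proj (R := ℝ) (φ := fun _ : Fin m => ℝ) i :=
          (ContinuousLinearMap.proj (R := ℝ) (φ := fun _ : Fin m => ℝ) i).fderiv
        rw [this]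
        simp
    filter_upwards [h1, hΨan.filter_mono hF0] with x hx han
    have hent : ∀ i j, J x i j = fderiv ℝ (q i) x (Pi.single j 1) := by
      intro i j
      have hd : ∀ i, DifferentiableAt ℝ (q i) x := fun i =>
        differentiableAt_pi.1 han.differentiableAt i
      have : fderiv ℝ Ψ x = ContinuousLinearMap.pi fun i => fderiv ℝ (q i) x := fderiv_pi hd
      simp [J, LinearMap.toMatrix'_apply, this]
    have htri : (J x).IsLowerTriangular := by
      intro i j hij
      rw [hent]
      exact (hq i).fderiv_single (Nat.succ_le_of_lt (show i.1 < j.1 from hij)) x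
    simp only [δ]
    rw [Matrix.det_of_isLowerTriangular _ htri]
    exact Finset.prod_ne_zero_iff.2 fun i _ => by rw [hent]; exact hx i
  let Θ : (Fin m → ℝ) → ℝ := fun x =>
    δ x * (∏ i : Fin m, (if d ≤ i then c i (k i) else fun _ => 1) x) * ∏ i, g i x
  have hlc : ∀ i : Fin m, AnalyticAt ℝ (if d ≤ i then c i (k i) else fun _ => 1) 0 := by
    intro i
    split_ifs with hi
    · exact ((hc i hi).dep _).1
    · exact analyticAt_const
  have hΘ : AnalyticAt ℝ Θ 0 := (hδ.mul (Finset.analyticAt_fun_prod _ fun i _ => hlc i)).mul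
    (Finset.analyticAt_fun_prod _ fun i _ => hg i)
  have hΘF : ∀ᶠ x in F, Θ x ≠ 0 := by
    have h1 : ∀ᶠ x in F, ∀ i : Fin m, (if d ≤ i then c i (k i) else fun _ => 1) x ≠ 0 := by
      rw [eventually_all]
      intro i
      by_cases hi : d ≤ i
      · simp only [if_pos hi]
        exact (hG.dich _ ((hc i hi).dep _).1).resolve_left (hc i hi).lead
      · simp [if_neg hi]
    filter_upwards [h1, hδF, hG.mem] with x h1 h2 h3
    exact mul_ne_zero (mul_ne_zero h2 (Finset.prod_ne_zero_iff.2 fun i _ => h1 i))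
      (Finset.prod_ne_zero_iff.2 fun i _ => (h3 i).ne')
  obtain ⟨N, hNd, hNF, h, hh, hNh⟩ := hN.exists_dvd hG hΘ
    (fun h => (h.and hΘF).exists.elim fun x hx => hx.2 hx.1)
  let M₀ : Set (Fin m → ℝ) := {x | (∀ i : Fin m, d ≤ i → p i x = 0) ∧ Θ x ≠ 0 ∧ ∀ i, 0 < g i x}
  have hM₀F : M₀ ∈ F := by
    have h1 : ∀ᶠ x in F, ∀ i : Fin m, d ≤ i → p i x = 0 := by
      rw [eventually_all]
      intro i
      by_cases hi : d ≤ i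
      · exact (hc i hi).zero.mono fun x hx _ => hx
      · exact Eventually.of_forall fun x h => absurd h hi
    filter_upwards [h1, hΘF, hG.mem] with x h1 h2 h3 using ⟨h1, h2, h3⟩
  have hFM₀ : F = 𝓝 0 ⊓ 𝓟 M₀ := by
    refine le_antisymm (le_inf hF0 (le_principal_iff.2 hM₀F)) (hG.gen _ inf_le_left ?_ ?_)
    · exact mem_inf_of_right (mem_principal.2 fun x hx => hx.2.2)
    · intro a ha haF
      rw [eventually_inf_principal]
      refine hN.vanish hF0 hc (Z := M₀) ?_ m le_rfl a (Dep.of_analyticAt ha) haF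
      intro x hx i hi
      refine ⟨hx.1 i hi, ?_⟩
      have h1 := Finset.prod_ne_zero_iff.1 (right_ne_zero_of_mul (left_ne_zero_of_mul hx.2.1)) i
        (Finset.mem_univ i)
      rwa [if_pos hi] at h1
  -- A radius on whose ball everything is analytic and the relations along `F` hold on `M₀`.
  have hgood : ∀ᶠ x in 𝓝 (0 : Fin m → ℝ), AnalyticAt ℝ Ψ x ∧ ContinuousAt Θ x ∧ ContinuousAt N x ∧
      ContinuousAt h x ∧ (∀ i, ContinuousAt (g i) x) ∧ (∀ i, ContinuousAt (w i) x) ∧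
      (x ∈ M₀ → N x = h x * Θ x ∧ ∀ i, w i x = 0) := by
    have e1 : ∀ᶠ x in 𝓝 (0 : Fin m → ℝ), ∀ i, ContinuousAt (g i) x :=
      eventually_all.2 fun i => (hg i).eventually_analyticAt.mono fun x hx => hx.continuousAt
    have e2 : ∀ᶠ x in 𝓝 (0 : Fin m → ℝ), ∀ i, ContinuousAt (w i) x :=
      eventually_all.2 fun i => (hwan i).eventually_analyticAt.mono fun x hx => hx.continuousAt
    have e3 : ∀ᶠ x in 𝓝 (0 : Fin m → ℝ), x ∈ M₀ → N x = h x * Θ x ∧ ∀ i, w i x = 0 := by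
      rw [← eventually_inf_principal, ← hFM₀]
      exact hNh.and (eventually_all.2 hwF)
    filter_upwards [hΨan, hΘ.eventually_analyticAt, hNd.1.eventually_analyticAt,
      hh.eventually_analyticAt, e1, e2, e3] with x h1 h2 h3 h4 h5 h6 h7
    exact ⟨h1, h2.continuousAt, h3.continuousAt, h4.continuousAt, h5, h6, h7⟩
  obtain ⟨ε₁, hε₁, hball⟩ := Metric.eventually_nhds_iff_ball.1 hgood
  obtain ⟨ε₀, hε₀, hεlt⟩ := exists_between hε₁
  let M : Set (Fin m → ℝ) := M₀ ∩ ball 0 ε₀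
  have hin : ∀ x ∈ closure M, x ∈ ball (0 : Fin m → ℝ) ε₁ := by
    intro x hx
    have h1 : x ∈ closedBall (0 : Fin m → ℝ) ε₀ :=
      closure_minimal (inter_subset_right.trans ball_subset_closedBall) isClosed_closedBall hx
    exact closedBall_subset_ball hεlt h1
  have hMb : ∀ x ∈ M, x ∈ ball (0 : Fin m → ℝ) ε₁ := fun x hx => hin x (subset_closure hx)
  have hcompact : IsCompact (closure M) :=
    (isCompact_closedBall (0 : Fin m → ℝ) ε₀).of_isClosed_subset isClosed_closure
      (closure_minimal (inter_subset_right.trans ball_subset_closedBall) isClosed_closedBall)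
  have hclw : ∀ x ∈ closure M, ∀ i, w i x = 0 := fun x hx i =>
    closure_eq_zero ((hball x (hin x hx)).2.2.2.2.2.1 i)
      (fun y hy => ((hball y (hMb y hy)).2.2.2.2.2.2 hy.1).2 i) hx
  have hinj : ∀ x ∈ closure M, tau d x = 0 → x = 0 := by
    intro x hx h0
    have key : ∀ j, tau j x = 0 := by
      intro j
      induction j with
      | zero => funext i; simp [tau_apply]
      | succ j ih =>
        funext i
        rw [tau_apply]
        split_ifs with hij
        · by_cases hi : i.1 < j
          · have := congrFun ih i
            rwa [tau_apply, if_pos hi] at this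
          · have hij : j = i.1 := by omega
            subst hij
            by_cases hd : d ≤ i.1
            · exact hw0 i hd x ih (hclw x hx i)
            · have := congrFun h0 i
              rwa [tau_apply, if_pos (by omega)] at this
        · rfl
    have := key m
    rwa [tau_self le_rfl] at this
  have hproper : ∀ ε > 0, ∃ η > 0, ∀ x ∈ closure M, ‖tau d x‖ < η → ‖x‖ < ε := by
    intro ε hε
    have hK : IsCompact (closure M \ ball 0 ε) := hcompact.diff isOpen_ball
    rcases (closure M \ ball (0 : Fin m → ℝ) ε).eq_empty_or_nonempty with he | hne
    · refine ⟨1, one_pos, fun x hx _ => ?_⟩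
      by_contra hcon
      have : x ∈ closure M \ ball (0 : Fin m → ℝ) ε := ⟨hx, by simpa using hcon⟩
      rw [he] at this
      exact this
    · obtain ⟨y, hy, hmin⟩ := hK.exists_isMinOn hne (f := fun x => ‖tau d x‖)
        (Continuous.continuousOn (by fun_prop))
      refine ⟨‖tau d y‖, norm_pos_iff.2 fun h0 => ?_, fun x hx hlt => ?_⟩
      · have := hinj y hy.1 h0
        exact hy.2 (by rw [this]; exact mem_ball_self hε)
      · by_contra hcon
        exact absurd hlt (not_lt.2 (hmin ⟨hx, by simpa using hcon⟩))
  have hq_eq : ∀ x i, Ψ x i = if d ≤ i.1 then p i x else x i := by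
    intro x i
    simp only [Ψ, q]
    split_ifs <;> rfl
  have hNeq : ∀ x ∈ closure M, N x = h x * Θ x := by
    intro x hx
    have hb := hball x (hin x hx)
    have := closure_eq_zero (φ := fun x => N x - h x * Θ x) (hb.2.2.1.sub (hb.2.2.2.1.mul hb.2.1))
      (fun y hy => sub_eq_zero.2 ((hball y (hMb y hy)).2.2.2.2.2.2 hy.1).1) hx
    exact sub_eq_zero.1 this
  have hpcont : ∀ x ∈ ball (0 : Fin m → ℝ) ε₁, ∀ i : Fin m, d ≤ i → ContinuousAt (p i) x := by
    intro x hx i hi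
    have h1 := continuousAt_pi.1 (hball x hx).1.continuousAt i
    simpa only [hq_eq, if_pos hi] using h1
  refine ⟨M, N, δ, V, ?_, hNd, hNF, ?_, hcompact, hproper, ?_, hδ,
    fun u => analyticAt_adjugate_mulVec hJ u,
    fun x hx => left_ne_zero_of_mul (left_ne_zero_of_mul hx.1.2.1), ?_⟩
  · rw [hFM₀]
    refine le_antisymm (le_inf inf_le_left ?_) (inf_le_inf_left _ (principal_mono.2 inter_subset_left))
    rw [le_principal_iff]
    exact inter_mem (mem_inf_of_right (mem_principal_self _))
      (mem_inf_of_left (ball_mem_nhds _ hε₀))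
  · have h1 : Tendsto N F (𝓝 (N 0)) := hNd.1.continuousAt.tendsto.mono_left hF0
    have h2 : Tendsto (fun x => h x * Θ x) F (𝓝 (h 0 * Θ 0)) :=
      (hh.continuousAt.mul hΘ.continuousAt).tendsto.mono_left hF0
    have h3 := tendsto_nhds_unique_of_eventuallyEq h1 h2 hNh
    have h4 : Θ 0 = 0 := by
      simp only [Θ]
      rw [Finset.prod_eq_zero (Finset.mem_univ i₀) hi₀, mul_zero]
    rw [h3, h4, mul_zero]
  · obtain ⟨η, hη, hpr⟩ := hproper ε₀ hε₀
    refine ⟨η, hη, fun x hx hlt hNx => ?_⟩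
    have hb := hball x (hin x hx)
    rw [hNeq x hx] at hNx
    have hΘx := right_ne_zero_of_mul hNx
    refine ⟨⟨fun i hi => ?_, hΘx, fun i => ?_⟩, by simpa using hpr x hx hlt⟩
    · exact closure_eq_zero (hpcont x (hin x hx) i hi) (fun y hy => hy.1.1 i hi) hx
    · refine lt_of_le_of_ne (closure_nonneg (hb.2.2.2.2.1 i) (fun y hy => (hy.1.2.2 i).le) hx) ?_
      exact (Finset.prod_ne_zero_iff.1 (right_ne_zero_of_mul hΘx) i (Finset.mem_univ i)).symm
  · intro x hx
    have hb := hball x (hMb x hx)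
    have hδx : δ x ≠ 0 := left_ne_zero_of_mul (left_ne_zero_of_mul hx.1.2.1)
    have hdet : (fderiv ℝ Ψ x).det ≠ 0 := by
      have : δ x = (fderiv ℝ Ψ x).det := LinearMap.det_toMatrix' _
      rwa [← this]
    let A := (fderiv ℝ Ψ x).toContinuousLinearEquivOfDetNeZero hdet
    have hA : (A : (Fin m → ℝ) →L[ℝ] (Fin m → ℝ)) = fderiv ℝ Ψ x :=
      ContinuousLinearMap.coe_toContinuousLinearEquivOfDetNeZero _ _
    have hst : HasStrictFDerivAt Ψ (A : (Fin m → ℝ) →L[ℝ] (Fin m → ℝ)) x := by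
      rw [hA]; exact hb.1.hasStrictFDerivAt
    have hΨx : Ψ x = tau d x := by
      funext i
      rw [hq_eq, tau_apply]
      by_cases hi : d ≤ i.1
      · rw [if_pos hi, if_neg (by omega)]; exact hx.1.1 i hi
      · rw [if_neg hi, if_pos (by omega)]
    let G := hst.localInverse Ψ A x
    have hG1 : HasFDerivAt G (A.symm : (Fin m → ℝ) →L[ℝ] (Fin m → ℝ)) (tau d x) := by
      rw [← hΨx]; exact hst.to_localInverse.hasFDerivAt
    have hG2 : G (tau d x) = x := by rw [← hΨx]; exact hst.localInverse_apply_image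
    have hG3 : ∀ᶠ y in 𝓝 (tau d x), Ψ (G y) = y := by
      rw [← hΨx]; exact hst.eventually_right_inverse
    refine ⟨G, A.symm, hG1, hG2, fun u => ?_, ?_⟩
    · have h1 : (J x).mulVec (A.symm u) = u := by
        simp only [J]
        rw [LinearMap.toMatrix'_mulVec]
        have : fderiv ℝ Ψ x (A.symm u) = A (A.symm u) := by rw [← hA]; rfl
        simpa using this
      have h2 : (J x).adjugate.mulVec ((J x).mulVec (A.symm u)) = δ x • A.symm u := by
        rw [Matrix.mulVec_mulVec, Matrix.adjugate_mul, Matrix.smul_mulVec, Matrix.one_mulVec]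
      rw [h1] at h2
      exact h2.symm
    · have hcont : Tendsto G (𝓝 (tau d x)) (𝓝 x) := by
        have := hG1.continuousAt.tendsto
        rwa [hG2] at this
      have e1 : ∀ᶠ z in 𝓝 x, Θ z ≠ 0 := hb.2.1.eventually_ne hx.1.2.1
      have e2 : ∀ᶠ z in 𝓝 x, ∀ i, 0 < g i z :=
        eventually_all.2 fun i => (hb.2.2.2.2.1 i).eventually_const_lt (hx.1.2.2 i)
      have e3 : ∀ᶠ z in 𝓝 x, z ∈ ball (0 : Fin m → ℝ) ε₀ := isOpen_ball.mem_nhds hx.2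
      filter_upwards [hG3, hcont.eventually e1, hcont.eventually e2, hcont.eventually e3]
        with y h1 h2 h3 h4 hy
      have h5 : ∀ i, (if d ≤ i.1 then p i (G y) else G y i) = y i := fun i => by
        rw [← hq_eq, h1]
      refine ⟨⟨⟨fun i hi => ?_, h2, h3⟩, h4⟩, ?_⟩
      · have := h5 i
        rw [if_pos hi] at this
        rw [this, ← hy, tau_apply, if_neg (by omega)]
      · funext i
        rw [tau_apply]
        split_ifs with hi
        · have := h5 i
          rwa [if_neg (by omega)] at this
        · rw [← hy, tau_apply, if_neg hi]

/-! ### Dimension one -/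

/-- The infinitesimal rotation in the plane of the coordinates `i₀`, `i₁`. -/
def rotGen {m : ℕ} (i₀ i₁ : Fin m) : (Fin m → ℝ) →L[ℝ] (Fin m → ℝ) :=
  ContinuousLinearMap.pi fun i =>
    if i = i₀ then - ContinuousLinearMap.proj i₁ else
      if i = i₁ then ContinuousLinearMap.proj i₀ else 0

lemma rotGen_apply {m : ℕ} (i₀ i₁ : Fin m) (x : Fin m → ℝ) (i : Fin m) :
    rotGen i₀ i₁ x i = if i = i₀ then - x i₁ else if i = i₁ then x i₀ else 0 := by
  simp only [rotGen, ContinuousLinearMap.coe_pi']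
  split_ifs <;> simp

/-- The derivative of `b` along the rotation, at the projection to the first `d` coordinates. -/
noncomputable def rotDeriv {m : ℕ} (d : ℕ) (i₀ i₁ : Fin m) (b : (Fin m → ℝ) → ℝ)
    (x : Fin m → ℝ) : ℝ :=
  fderiv ℝ b (tau d x) (rotGen i₀ i₁ (tau d x))

lemma rotDeriv_analyticAt {m : ℕ} (d : ℕ) (i₀ i₁ : Fin m) {b : (Fin m → ℝ) → ℝ}
    (hb : AnalyticAt ℝ b 0) : AnalyticAt ℝ (rotDeriv d i₀ i₁ b) 0 := by
  have h1 : AnalyticAt ℝ (fun x => fderiv ℝ b x (rotGen i₀ i₁ x)) 0 := by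
    have h2 : ContDiffAt ℝ ⊤ (fun x => fderiv ℝ b x (rotGen i₀ i₁ x)) 0 :=
      ContDiffAt.clm_apply hb.fderiv.contDiffAt (ContinuousLinearMap.contDiff _).contDiffAt
    exact h2.analyticAt
  exact h1.comp_clm (tau d)

/-- If `d ≥ 2`, a germ in the first `d` coordinates whose zeros contain those of the discriminant
is invariant under rotation, along `F`: the compact part of `M` over a small circle contains a point
where the square of the germ is maximal, and `M` has a section over the circle near this point. -/
lemma IsCover.rotDeriv_eq_zero {m : ℕ} {B : Set (Fin m → ℝ)} {F : Filter (Fin m → ℝ)}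
    (hG : IsGood B F) {d : ℕ} {M : Set (Fin m → ℝ)} {N δ : (Fin m → ℝ) → ℝ}
    {V : (Fin m → ℝ) → (Fin m → ℝ) → (Fin m → ℝ)} (hC : IsCover F d M N δ V)
    {i₀ i₁ : Fin m} (h01 : i₀ ≠ i₁) (h0 : i₀.1 < d) (h1 : i₁.1 < d) {b : (Fin m → ℝ) → ℝ}
    (hb : Dep d b) (hbN : ∀ x, N x = 0 → b x = 0) (hbF : ¬ ∀ᶠ x in F, b x = 0) :
    ∀ᶠ x in F, rotDeriv d i₀ i₁ b x = 0 := by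
  have hne := hG.neBot
  refine (hG.dich _ (rotDeriv_analyticAt d i₀ i₁ hb.1)).resolve_right fun hcon => ?_
  have hbF' := (hG.dich b hb.1).resolve_left hbF
  have hMF : ∀ᶠ x in F, x ∈ M := by rw [hC.eq]; exact mem_inf_of_right (mem_principal_self _)
  have hcon' : ∀ᶠ x in 𝓝 0, x ∈ M → rotDeriv d i₀ i₁ b x ≠ 0 := by
    rw [hC.eq, eventually_inf_principal] at hcon; exact hcon
  obtain ⟨ε, hε, hball⟩ := Metric.eventually_nhds_iff_ball.1
    (hcon'.and hb.1.eventually_analyticAt)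
  obtain ⟨η₁, hη₁, hpr⟩ := hC.proper ε hε
  obtain ⟨η₂, hη₂, hcl⟩ := hC.closed
  set η := min (min η₁ η₂) ε with hη
  have hηpos : 0 < η := lt_min (lt_min hη₁ hη₂) hε
  have hsmall : ∀ᶠ x in F, ‖x‖ < η / 2 := by
    have : ∀ᶠ x in 𝓝 (0 : Fin m → ℝ), ‖x‖ < η / 2 := by
      filter_upwards [ball_mem_nhds (0 : Fin m → ℝ) (half_pos hηpos)] with x hx
      simpa using hx
    exact this.filter_mono hG.le
  obtain ⟨x, hxM, hbx, hxη⟩ := (hMF.and (hbF'.and hsmall)).exists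
  let K : Set (Fin m → ℝ) := closure M ∩ {y | y i₀ ^ 2 + y i₁ ^ 2 = x i₀ ^ 2 + x i₁ ^ 2 ∧
    ∀ i : Fin m, i.1 < d → i ≠ i₀ → i ≠ i₁ → y i = x i}
  have hclosed : IsClosed {y : Fin m → ℝ | y i₀ ^ 2 + y i₁ ^ 2 = x i₀ ^ 2 + x i₁ ^ 2 ∧
      ∀ i : Fin m, i.1 < d → i ≠ i₀ → i ≠ i₁ → y i = x i} := by
    have h2 : IsClosed {y : Fin m → ℝ |
        ∀ i : Fin m, i.1 < d → i ≠ i₀ → i ≠ i₁ → y i = x i} := by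
      simp only [Set.ofPred_forall]
      exact isClosed_iInter fun i => isClosed_iInter fun _ => isClosed_iInter fun _ =>
        isClosed_iInter fun _ => isClosed_eq (by fun_prop) (by fun_prop)
    exact IsClosed.inter (isClosed_eq (by fun_prop) (by fun_prop)) h2
  have hK : IsCompact K := hC.compact.inter_right hclosed
  have hxK : x ∈ K := ⟨subset_closure hxM, rfl, fun _ _ _ _ => rfl⟩
  have hKη : ∀ y ∈ K, ‖tau d y‖ < η := by
    intro y hy
    rw [pi_norm_lt_iff hηpos]
    have hxi : ∀ i, |x i| < η / 2 := fun i => (norm_le_pi_norm x i).trans_lt hxη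
    have h2 : ∀ i, x i ^ 2 ≤ (η / 2) ^ 2 := fun i => by
      rw [← sq_abs]
      exact pow_le_pow_left₀ (abs_nonneg _) (hxi i).le 2
    have h3 := h2 i₀
    have h4 := h2 i₁
    have h5 := hy.2.1
    intro i
    rw [tau_apply]
    split_ifs with hi
    · by_cases e0 : i = i₀
      · subst e0
        refine abs_lt_of_sq_lt_sq ?_ hηpos.le
        nlinarith [sq_nonneg (y i₁)]
      by_cases e1 : i = i₁
      · subst e1
        refine abs_lt_of_sq_lt_sq ?_ hηpos.le
        nlinarith [sq_nonneg (y i₀)]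
      rw [hy.2.2 i hi e0 e1]
      exact (hxi i).trans (half_lt_self hηpos)
    · simpa using hηpos
  have hKb : ∀ y ∈ K, y ∈ ball (0 : Fin m → ℝ) ε := fun y hy => by
    simpa using hpr y hy.1 ((hKη y hy).trans_le ((min_le_left _ _).trans (min_le_left _ _)))
  obtain ⟨z, hzK, hmax⟩ := hK.exists_isMaxOn ⟨x, hxK⟩ (f := fun y => b y ^ 2)
    (fun y hy => ((hball y (hKb y hy)).2.continuousAt.pow 2).continuousWithinAt)
  have hbz : b z ≠ 0 := by
    intro h
    have h2 : b x ^ 2 ≤ b z ^ 2 := hmax hxK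
    rw [h] at h2
    have : 0 < b x ^ 2 := by positivity
    linarith
  have hzM : z ∈ M := hcl z hzK.1
    ((hKη z hzK).trans_le ((min_le_left _ _).trans (min_le_right _ _))) fun h => hbz (hbN z h)
  refine (hball z (hKb z hzK)).1 hzM ?_
  obtain ⟨g, g', hg, hgz, -, hsec⟩ := hC.sect z hzM
  -- The circle through the projection of `z`.
  let y : ℝ → (Fin m → ℝ) := fun φ i =>
    if i = i₀ then Real.cos φ * tau d z i₀ - Real.sin φ * tau d z i₁ else
      if i = i₁ then Real.sin φ * tau d z i₀ + Real.cos φ * tau d z i₁ else tau d z i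
  have hy0 : y 0 = tau d z := by
    funext i
    simp only [y]
    split_ifs with e0 e1
    · subst e0; simp
    · subst e1; simp
    · rfl
  have hyd : HasDerivAt y (rotGen i₀ i₁ (tau d z)) 0 := by
    rw [hasDerivAt_pi]
    intro i
    simp only [y, rotGen_apply]
    split_ifs with e0 e1
    · have := ((Real.hasDerivAt_cos 0).mul_const (tau d z i₀)).fun_sub
        ((Real.hasDerivAt_sin 0).mul_const (tau d z i₁))
      simpa using this
    · have := ((Real.hasDerivAt_sin 0).mul_const (tau d z i₀)).fun_add
        ((Real.hasDerivAt_cos 0).mul_const (tau d z i₁))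
      simpa using this
    · exact hasDerivAt_const _ _
  have hyt : ∀ φ, tau d (y φ) = y φ := by
    intro φ
    funext i
    rw [tau_apply]
    split_ifs with hi
    · rfl
    · have e0 : i ≠ i₀ := fun h => hi (h ▸ h0)
      have e1 : i ≠ i₁ := fun h => hi (h ▸ h1)
      simp only [y, if_neg e0, if_neg e1, tau_apply, if_neg hi]
  have hbτ : AnalyticAt ℝ b (tau d z) := by
    refine (hball _ ?_).2
    simpa using (hKη z hzK).trans_le (min_le_right _ _)
  have hder : HasDerivAt (fun φ => b (y φ)) (rotDeriv d i₀ i₁ b z) 0 := by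
    refine HasFDerivAt.comp_hasDerivAt (0 : ℝ) (l := b) ?_ hyd
    rw [hy0]
    exact hbτ.differentiableAt.hasFDerivAt
  have hloc : IsLocalMax (fun φ => b (y φ) ^ 2) 0 := by
    have hyc : Tendsto y (𝓝 0) (𝓝 (tau d z)) := by
      have := hyd.continuousAt.tendsto
      rwa [hy0] at this
    filter_upwards [hyc.eventually hsec] with φ hφ
    obtain ⟨hφM, hφτ⟩ := hφ (hyt φ)
    have hco : ∀ i : Fin m, i.1 < d → g (y φ) i = y φ i := fun i hi => by
      have := congrFun hφτ i
      rwa [tau_apply, if_pos hi] at this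
    have hgK : g (y φ) ∈ K := by
      refine ⟨subset_closure hφM, ?_, fun i hi e0 e1 => ?_⟩
      · rw [hco i₀ h0, hco i₁ h1, ← hzK.2.1]
        simp only [y, if_true, if_neg h01.symm, tau_apply, if_pos h0, if_pos h1]
        linear_combination (z i₀ ^ 2 + z i₁ ^ 2) * Real.sin_sq_add_cos_sq φ
      · rw [hco i hi]
        simp only [y, if_neg e0, if_neg e1, tau_apply, if_pos hi]
        exact hzK.2.2 i hi e0 e1
    have h2 : b (g (y φ)) ^ 2 ≤ b z ^ 2 := hmax hgK
    rw [← hb.2 (g (y φ)), hφτ] at h2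
    rw [hy0, hb.2]
    exact h2
  have h3 := hloc.hasDerivAt_eq_zero (hder.pow 2)
  rw [hy0, hb.2] at h3
  simp only [Nat.cast_ofNat, Nat.add_one_sub_one, pow_one, mul_eq_zero, OfNat.ofNat_ne_zero,
    false_or] at h3
  exact h3.resolve_left hbz

/-- A good germ is a curve: for `d ≥ 2` both `N` and `N x₀` would be invariant under the rotation of the
first two coordinates, and for `d = 0` the discriminant would vanish. -/
theorem IsCover.eq_one {m : ℕ} {B : Set (Fin m → ℝ)} {F : Filter (Fin m → ℝ)}
    (hG : IsGood B F) {d : ℕ} (hN : IsNormal F d) {M : Set (Fin m → ℝ)} {N δ : (Fin m → ℝ) → ℝ}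
    {V : (Fin m → ℝ) → (Fin m → ℝ) → (Fin m → ℝ)} (hC : IsCover F d M N δ V) : d = 1 := by
  have hne := hG.neBot
  rcases Nat.lt_or_ge d 2 with hd | hd
  · interval_cases d
    · refine absurd (Eventually.of_forall fun x => ?_) hC.ne
      rw [← hC.dep.2, show tau 0 x = 0 by funext i; simp [tau_apply], hC.zero]
    · rfl
  exfalso
  have hm := hN.le
  let i₀ : Fin m := ⟨0, by omega⟩
  let i₁ : Fin m := ⟨1, by omega⟩
  have h01 : i₀ ≠ i₁ := fun h => by simpa [i₀, i₁] using congrArg Fin.val h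
  have h0 : i₀.1 < d := by simp only [i₀]; omega
  have h1 : i₁.1 < d := by simp only [i₁]; omega
  have hcoord : ∀ i : Fin m, i.1 < d → ∀ᶠ x in F, x i ≠ 0 := by
    intro i hi
    have hdep : Dep d (fun x : Fin m → ℝ => x i) := Dep.coord i hi
    refine (hG.dich _ hdep.1).resolve_left fun h => ?_
    have h2 := hN.triv _ hdep h
    have h3 : Tendsto (fun t : ℝ => (Pi.single i t : Fin m → ℝ)) (𝓝[≠] 0) (𝓝 0) := by
      have h4 : Continuous (fun t : ℝ => (Pi.single i t : Fin m → ℝ)) :=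
        (ContinuousLinearMap.single ℝ (fun _ : Fin m => ℝ) i).continuous
      have := h4.tendsto 0
      rw [Pi.single_zero] at this
      exact this.mono_left nhdsWithin_le_nhds
    obtain ⟨t, ht, ht0⟩ := ((h3.eventually h2).and self_mem_nhdsWithin).exists
    exact ht0 (by simpa using ht)
  have hNF := (hG.dich N hC.dep.1).resolve_left hC.ne
  have hD1 := hC.rotDeriv_eq_zero hG h01 h0 h1 hC.dep (fun _ h => h) hC.ne
  -- The same for `N x₀`, whose derivative along the rotation is then `-N x₁`.
  have hD2 := hC.rotDeriv_eq_zero hG h01 h0 h1 (hC.dep.mul (Dep.coord i₀ h0))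
    (fun x h => by rw [h, zero_mul]) (fun h => by
      obtain ⟨x, hx1, hx2, hx3⟩ := (h.and (hNF.and (hcoord i₀ h0))).exists
      exact mul_ne_zero hx2 hx3 hx1)
  have han : ∀ᶠ x in F, AnalyticAt ℝ N (tau d x) := by
    have : Tendsto (tau (m := m) d) (𝓝 0) (𝓝 0) := by
      simpa using (tau (m := m) d).continuous.tendsto 0
    exact (this.eventually hC.dep.1.eventually_analyticAt).filter_mono hG.le
  obtain ⟨x, hx1, hx2, hx3, hx4, hx5⟩ :=
    (hD1.and (hD2.and (hNF.and ((hcoord i₁ h1).and han)))).exists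
  have hmul : fderiv ℝ (fun x : Fin m → ℝ => N x * x i₀) (tau d x) =
      N (tau d x) • ContinuousLinearMap.proj (R := ℝ) (φ := fun _ : Fin m => ℝ) i₀ +
        (tau d x i₀) • fderiv ℝ N (tau d x) := by
    have h2 := (ContinuousLinearMap.proj (R := ℝ) (φ := fun _ : Fin m => ℝ) i₀).hasFDerivAt
      (x := tau d x)
    exact (hx5.differentiableAt.hasFDerivAt.mul h2).fderiv
  simp only [rotDeriv] at hx1 hx2
  rw [hmul] at hx2
  simp only [add_apply, smul_apply, smul_eq_mul, hx1,
    mul_zero, add_zero, ContinuousLinearMap.proj_apply, rotGen_apply, if_true, hC.dep.2,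
    tau_apply, if_pos h1, mul_neg, neg_eq_zero, mul_eq_zero] at hx2
  exact hx2.elim hx3 hx4

/-! ### Curve selection -/

/-- A germ of analytic curve through `0`, described by the filter `F` of its points other than `0`,
and an analytic vector field `w` which is tangent to it and points away from `0`. The tangency is
expressed by `flow`: a function `ψ` which decreases in the direction `w` on the part of the curve
where `T₁, T₂ > 0` stays at least as large when a point of this part moves to `0`. -/
structure IsCurve {m : ℕ} (F : Filter (Fin m → ℝ)) (w : (Fin m → ℝ) → (Fin m → ℝ)) : Prop where
  neBot : F.NeBot
  le : F ≤ 𝓝 0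
  dich : ∀ a : (Fin m → ℝ) → ℝ, AnalyticAt ℝ a 0 → (∀ᶠ x in F, a x = 0) ∨ ∀ᶠ x in F, a x ≠ 0
  an : AnalyticAt ℝ w 0
  outward : ∃ l : (Fin m → ℝ) → ℝ, AnalyticAt ℝ l 0 ∧ l 0 = 0 ∧
    ∀ᶠ x in F, 0 < l x * fderiv ℝ l x (w x)
  flow : ∀ T₁ T₂ ψ : (Fin m → ℝ) → ℝ, AnalyticAt ℝ T₁ 0 → AnalyticAt ℝ T₂ 0 →
    (¬ ∀ᶠ x in F, T₁ x = 0) → (¬ ∀ᶠ x in F, T₂ x = 0) →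
    (∀ᶠ x in F, 0 < T₁ x → 0 < T₂ x → DifferentiableAt ℝ ψ x ∧ fderiv ℝ ψ x (w x) < 0) →
    ∀ᶠ x₀ in F, 0 < T₁ x₀ → 0 < T₂ x₀ → ∃ᶠ x in F, 0 < T₁ x ∧ 0 < T₂ x ∧ ψ x₀ ≤ ψ x

lemma tau_one {m : ℕ} (hm : 0 < m) (x : Fin m → ℝ) :
    tau 1 x = Pi.single (⟨0, hm⟩ : Fin m) (x ⟨0, hm⟩) := by
  funext i
  rw [tau_apply]
  split_ifs with h
  · have : i = ⟨0, hm⟩ := Fin.ext (by simpa using h)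
    subst this; simp
  · have : i ≠ ⟨0, hm⟩ := fun h' => h (by rw [h']; exact Nat.one_pos)
    simp [this]

/-- A one-dimensional cover is a curve. The vector field is the lift of the first coordinate
direction, multiplied by `x₀ δ²`, which makes it analytic and outward. -/
theorem IsCover.isCurve {m : ℕ} {B : Set (Fin m → ℝ)} {F : Filter (Fin m → ℝ)}
    (hG : IsGood B F) (hm : 0 < m) {M : Set (Fin m → ℝ)} {N δ : (Fin m → ℝ) → ℝ}
    {V : (Fin m → ℝ) → (Fin m → ℝ) → (Fin m → ℝ)} (hC : IsCover F 1 M N δ V) :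
    IsCurve F (fun x => (x ⟨0, hm⟩ * δ x) • V (Pi.single ⟨0, hm⟩ 1) x) := by
  set i₀ : Fin m := ⟨0, hm⟩ with hi₀
  set u : Fin m → ℝ := Pi.single i₀ 1 with hu
  have hne := hG.neBot
  have hMF : ∀ᶠ x in F, x ∈ M := by rw [hC.eq]; exact mem_inf_of_right (mem_principal_self _)
  have hNF := (hG.dich N hC.dep.1).resolve_left hC.ne
  have hFM : ∀ {P : (Fin m → ℝ) → Prop}, (∀ᶠ x in F, P x) → ∀ᶠ x in 𝓝 0, x ∈ M → P x := by
    intro P h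
    rwa [hC.eq, eventually_inf_principal] at h
  have hcoordc : AnalyticAt ℝ (fun x : Fin m → ℝ => x i₀) 0 :=
    (Dep.coord (j := m) i₀ i₀.2).1
  have hτ : ∀ x : Fin m → ℝ, tau 1 x = Pi.single i₀ (x i₀) := tau_one hm
  have hτn : ∀ x : Fin m → ℝ, ‖tau 1 x‖ = |x i₀| := fun x => by
    rw [hτ]; exact (Pi.norm_single (G := fun _ : Fin m => ℝ) _).trans (Real.norm_eq_abs _)
  have hx0 : ∀ᶠ x in F, x i₀ ≠ 0 := by
    filter_upwards [hNF] with x hx h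
    refine hx ?_
    rw [← hC.dep.2, hτ, h, Pi.single_zero, hC.zero]
  have hsingle : Continuous (fun t : ℝ => (Pi.single i₀ t : Fin m → ℝ)) :=
    (ContinuousLinearMap.single ℝ (fun _ : Fin m => ℝ) i₀).continuous
  -- The zeros of the discriminant on the line are isolated.
  have hNpunct : ∃ η > 0, ∀ x : Fin m → ℝ, |x i₀| < η → x i₀ ≠ 0 → N x ≠ 0 := by
    have han : AnalyticAt ℝ (fun t : ℝ => N (Pi.single i₀ t)) 0 := by
      refine AnalyticAt.fun_comp (g := N) ?_
        ((ContinuousLinearMap.single ℝ (fun _ : Fin m => ℝ) i₀).analyticAt 0)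
      simpa using hC.dep.1
    have hNs : ∀ x : Fin m → ℝ, N (Pi.single i₀ (x i₀)) = N x := fun x => by
      rw [← hτ, hC.dep.2]
    rcases han.eventually_eq_zero_or_eventually_ne_zero with h | h
    · refine absurd ?_ hC.ne
      have h1 : Tendsto (fun x : Fin m → ℝ => x i₀) F (𝓝 0) := by
        have : Continuous (fun x : Fin m → ℝ => x i₀) := continuous_apply i₀
        exact (this.tendsto 0).mono_left hG.le
      filter_upwards [h1.eventually h] with x hx
      rwa [hNs] at hx
    · rw [eventually_nhdsWithin_iff, Metric.eventually_nhds_iff_ball] at h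
      obtain ⟨η, hη, h⟩ := h
      refine ⟨η, hη, fun x hx hx0 => ?_⟩
      rw [← hNs]
      exact h _ (by simpa using hx) hx0
  obtain ⟨η₃, hη₃, hN3⟩ := hNpunct
  obtain ⟨η₂, hη₂, hcl⟩ := hC.closed
  refine ⟨hG.neBot, hG.le, hG.dich, ?_, ⟨fun x => x i₀, hcoordc, rfl, ?_⟩, ?_⟩
  · exact (hcoordc.mul hC.anδ).smul (hC.anV u)
  · filter_upwards [hMF, hx0] with x hxM hx0
    have hfd : fderiv ℝ (fun x : Fin m → ℝ => x i₀) x =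
        ContinuousLinearMap.proj (R := ℝ) (φ := fun _ : Fin m => ℝ) i₀ :=
      (ContinuousLinearMap.proj (R := ℝ) (φ := fun _ : Fin m => ℝ) i₀).fderiv
    obtain ⟨g, g', hg, hgx, hV, hsec⟩ := hC.sect x hxM
    -- The first coordinate of the section is the parameter.
    have hg0 : g' u i₀ = 1 := by
      have h1 : HasDerivAt (fun t : ℝ => (Pi.single i₀ t : Fin m → ℝ)) u (x i₀) := by
        have := (ContinuousLinearMap.single ℝ (fun _ : Fin m => ℝ) i₀).hasDerivAt (x := x i₀)
        exact this
      have h2 : HasDerivAt (fun t : ℝ => g (Pi.single i₀ t)) (g' u) (x i₀) :=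
        HasFDerivAt.comp_hasDerivAt (x i₀) (l := g) (by rw [← hτ]; exact hg) h1
      have h3 := (hasDerivAt_pi.1 h2) i₀
      have h4 : (fun t : ℝ => g (Pi.single i₀ t) i₀) =ᶠ[𝓝 (x i₀)] fun t => t := by
        have h5 : Tendsto (fun t : ℝ => (Pi.single i₀ t : Fin m → ℝ)) (𝓝 (x i₀)) (𝓝 (tau 1 x)) := by
          rw [hτ]; exact hsingle.tendsto _
        filter_upwards [h5.eventually hsec] with t ht
        have h6 := (ht (by rw [hτ]; simp)).2
        have := congrFun h6 i₀
        rw [hτ] at this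
        simpa using this
      exact (h3.congr_of_eventuallyEq h4.symm).unique (hasDerivAt_id' _)
    have hV0 : V u x i₀ = δ x := by rw [← hV u]; simp [hg0]
    rw [hfd]
    simp only [ContinuousLinearMap.proj_apply, Pi.smul_apply, smul_eq_mul, hV0]
    have := hC.δne x hxM
    have : x i₀ * (x i₀ * δ x * δ x) = (x i₀ * δ x) ^ 2 := by ring
    rw [this]
    positivity
  · intro T₁ T₂ ψ hT₁ hT₂ hT₁F hT₂F hψ
    have e1 := hFM ((hG.dich T₁ hT₁).resolve_left hT₁F)
    have e2 := hFM ((hG.dich T₂ hT₂).resolve_left hT₂F)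
    obtain ⟨ε, hε, hball⟩ := Metric.eventually_nhds_iff_ball.1
      (e1.and (e2.and ((hFM hψ).and (hT₁.eventually_analyticAt.and hT₂.eventually_analyticAt))))
    obtain ⟨η₁, hη₁, hpr⟩ := hC.proper ε hε
    set η := min (min η₁ η₂) η₃ with hη
    have hηpos : 0 < η := lt_min (lt_min hη₁ hη₂) hη₃
    have hsmall : ∀ᶠ x in F, |x i₀| < η := by
      have : Continuous (fun x : Fin m → ℝ => |x i₀|) := by fun_prop
      have := (this.tendsto 0).mono_left hG.le
      simp only [Pi.zero_apply, abs_zero] at this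
      exact this.eventually_lt_const hηpos
    have hclM : ∀ x ∈ closure M, |x i₀| < η → x i₀ ≠ 0 → x ∈ M := by
      intro x hx h1 h2
      refine hcl x hx ?_ (hN3 x (h1.trans_le (min_le_right _ _)) h2)
      rw [hτn]
      exact h1.trans_le ((min_le_left _ _).trans (min_le_right _ _))
    have hclb : ∀ x ∈ closure M, |x i₀| < η → x ∈ ball (0 : Fin m → ℝ) ε := by
      intro x hx h1
      have := hpr x hx (by rw [hτn]; exact h1.trans_le ((min_le_left _ _).trans (min_le_left _ _)))
      simpa using this
    filter_upwards [hMF, hx0, hsmall] with x₀ hx₀M ht₀ hx₀η hT₁x₀ hT₂x₀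
    set t₀ := x₀ i₀ with ht₀def
    let A : Set ℝ := {r | ∃ x ∈ M, x i₀ = (1 - r) * t₀ ∧ 0 < T₁ x ∧ 0 < T₂ x ∧ ψ x₀ ≤ ψ x}
    have hrb : ∀ r ∈ Icc (0 : ℝ) 1, |(1 - r) * t₀| < η := by
      intro r hr
      rw [abs_mul, abs_of_nonneg (by linarith [hr.2])]
      exact (mul_le_of_le_one_left (abs_nonneg _) (by linarith [hr.1])).trans_lt hx₀η
    have hA : ∀ R < 1, Icc 0 R ⊆ A := by
      intro R hR
      refine IsClosed.Icc_subset_of_forall_exists_gt ?_ ⟨x₀, hx₀M, by simp [ht₀def], hT₁x₀, hT₂x₀, le_rfl⟩ ?_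
      · let K : Set (Fin m → ℝ) := {x | x ∈ M ∧ (∃ r ∈ Icc 0 R, x i₀ = (1 - r) * t₀) ∧
          0 < T₁ x ∧ 0 < T₂ x ∧ ψ x₀ ≤ ψ x}
        have hKcl : IsClosed K := by
          refine isClosed_of_closure_subset fun x hx => ?_
          have hxM : x ∈ closure M := closure_mono (fun y hy => hy.1) hx
          obtain ⟨r, hr, hxr⟩ : ∃ r ∈ Icc 0 R, x i₀ = (1 - r) * t₀ := by
            have hc : IsClosed ((fun x : Fin m → ℝ => x i₀) ⁻¹'
                ((fun r : ℝ => (1 - r) * t₀) '' Icc 0 R)) :=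
              ((isCompact_Icc.image (by fun_prop)).isClosed).preimage (by fun_prop)
            have : x ∈ _ := closure_minimal (s := K) (fun y hy => by
              obtain ⟨r, hr, h⟩ := hy.2.1
              exact ⟨r, hr, h.symm⟩) hc hx
            obtain ⟨r, hr, h⟩ := this
            exact ⟨r, hr, h.symm⟩
          have hxη : |x i₀| < η := by rw [hxr]; exact hrb r ⟨hr.1, hr.2.trans hR.le⟩
          have hxM' := hclM x hxM hxη (by
            rw [hxr]; exact mul_ne_zero (by linarith [hr.2]) ht₀)
          obtain ⟨b1, b2, b3, b4, b5⟩ := hball x (hclb x hxM hxη)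
          have hp1 : 0 < T₁ x := lt_of_le_of_ne
            (closure_nonneg b4.continuousAt (fun y hy => hy.2.2.1.le) hx) (b1 hxM').symm
          have hp2 : 0 < T₂ x := lt_of_le_of_ne
            (closure_nonneg b5.continuousAt (fun y hy => hy.2.2.2.1.le) hx) (b2 hxM').symm
          have hψx := (b3 hxM' hp1 hp2).1.continuousAt
          have := closure_nonneg (φ := fun y => ψ y - ψ x₀) (hψx.sub continuousAt_const)
            (fun y hy => sub_nonneg.2 hy.2.2.2.2) hx
          exact ⟨hxM', ⟨r, hr, hxr⟩, hp1, hp2, sub_nonneg.1 this⟩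
        have hKc : IsCompact K := hC.compact.of_isClosed_subset hKcl
          fun x hx => subset_closure hx.1
        have : A ∩ Icc 0 R = (fun x : Fin m → ℝ => 1 - x i₀ / t₀) '' K := by
          ext r
          constructor
          · rintro ⟨⟨x, h1, h2, h3⟩, hr⟩
            refine ⟨x, ⟨h1, ⟨r, hr, h2⟩, h3⟩, ?_⟩
            simp only [h2]
            field_simp
            ring
          · rintro ⟨x, ⟨h1, ⟨r', hr', h2⟩, h3⟩, rfl⟩
            have : 1 - x i₀ / t₀ = r' := by
              rw [h2]; field_simp; ring
            simp only [this]
            exact ⟨⟨x, h1, h2, h3⟩, hr'⟩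
        rw [this]
        exact (hKc.image (by fun_prop)).isClosed
      · rintro r ⟨⟨x, hxM, hxr, hp1, hp2, hψx⟩, hr⟩ r' hr'
        have hr1 : r < 1 := hr.2.trans hR
        have hxη : |x i₀| < η := by rw [hxr]; exact hrb r ⟨hr.1, hr1.le⟩
        obtain ⟨b1, b2, b3, b4, b5⟩ := hball x (hclb x (subset_closure hxM) hxη)
        obtain ⟨hd, hneg⟩ := b3 hxM hp1 hp2
        obtain ⟨g, g', hg, hgx, hV, hsec⟩ := hC.sect x hxM
        let y : ℝ → (Fin m → ℝ) := fun s => Pi.single i₀ ((1 - s) * t₀)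
        have hyr : y r = tau 1 x := by rw [hτ, hxr]
        have hyd : HasDerivAt y (-t₀ • u) r := by
          have h1 : HasDerivAt (fun s : ℝ => (1 - s) * t₀) (-t₀) r := by
            have := ((hasDerivAt_id r).const_sub 1).mul_const t₀
            simpa using this
          have h2 := ((ContinuousLinearMap.single ℝ (fun _ : Fin m => ℝ) i₀).hasFDerivAt
            (x := (1 - r) * t₀)).comp_hasDerivAt r h1
          refine h2.congr_deriv ?_
          funext k
          by_cases hk : k = i₀
          · subst hk; simp [hu]
          · simp [hu, hk]
        have hyc : Tendsto y (𝓝 r) (𝓝 (tau 1 x)) := by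
          have := hyd.continuousAt.tendsto
          rwa [hyr] at this
        have hXd : HasDerivAt (fun s => g (y s)) (g' (-t₀ • u)) r :=
          HasFDerivAt.comp_hasDerivAt r (l := g) (by rw [hyr]; exact hg) hyd
        have hXr : g (y r) = x := by rw [hyr, hgx]
        have hXc : Tendsto (fun s => g (y s)) (𝓝 r) (𝓝 x) := by
          have := hXd.continuousAt.tendsto
          rwa [hXr] at this
        have hψd : HasDerivAt (fun s => ψ (g (y s))) (fderiv ℝ ψ x (g' (-t₀ • u))) r :=
          HasFDerivAt.comp_hasDerivAt r (l := ψ) (by rw [hXr]; exact hd.hasFDerivAt) hXd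
        have hpos : 0 < fderiv ℝ ψ x (g' (-t₀ • u)) := by
          have hδx := hC.δne x hxM
          rw [← hV u, smul_smul, map_smul, smul_eq_mul, hxr] at hneg
          rw [map_smul, map_smul, smul_eq_mul]
          have h2 : (1 - r) * t₀ * δ x * δ x * fderiv ℝ ψ x (g' u) =
              (1 - r) * (δ x) ^ 2 * (t₀ * fderiv ℝ ψ x (g' u)) := by ring
          rw [h2] at hneg
          have h3 : 0 < (1 - r) * (δ x) ^ 2 := mul_pos (by linarith) (by positivity)
          have h4 := neg_of_mul_neg_right hneg h3.le
          linarith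
        have hslope := (hasDerivAt_iff_tendsto_slope.1 hψd).eventually_const_lt hpos
        have hle : 𝓝[>] r ≤ 𝓝[≠] r := nhdsWithin_mono r fun s hs => ne_of_gt hs
        have q1 : ∀ᶠ s in 𝓝 r, 0 < T₁ (g (y s)) :=
          hXc.eventually (b4.continuousAt.eventually_const_lt hp1)
        have q2 : ∀ᶠ s in 𝓝 r, 0 < T₂ (g (y s)) :=
          hXc.eventually (b5.continuousAt.eventually_const_lt hp2)
        obtain ⟨s, hs1, ⟨hs2, hs3, hs4⟩, hs5⟩ := ((hslope.filter_mono hle).and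
          (((q1.and (q2.and (hyc.eventually hsec))).filter_mono nhdsWithin_le_nhds).and
            (Ioc_mem_nhdsGT hr'))).exists
        obtain ⟨hsM, hsτ⟩ := hs4 (by rw [hτ]; simp [y])
        refine ⟨s, ⟨g (y s), hsM, ?_, hs2, hs3, ?_⟩, hs5⟩
        · have := congrFun hsτ i₀
          rw [hτ] at this
          simpa [y] using this
        · rw [slope_def_field] at hs1
          have h1 : 0 < s - r := sub_pos.2 hs5.1
          have h2 := (div_pos_iff_of_pos_right h1).1 hs1
          rw [hXr] at h2
          linarith
    intro hcon
    obtain ⟨ε', hε', hball'⟩ := Metric.eventually_nhds_iff_ball.1 (hFM hcon)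
    obtain ⟨η', hη', hpr'⟩ := hC.proper ε' hε'
    have h1 : ∀ᶠ r in 𝓝[<] (1 : ℝ), |(1 - r) * t₀| < η' := by
      have h2 : Continuous (fun r : ℝ => |(1 - r) * t₀|) := by fun_prop
      have h3 := (h2.tendsto 1).mono_left (nhdsWithin_le_nhds (s := Iio 1))
      simp only [sub_self, zero_mul, abs_zero] at h3
      exact h3.eventually_lt_const hη'
    obtain ⟨r, hr1, hr2⟩ := (h1.and (Ico_mem_nhdsLT (zero_lt_one (α := ℝ)))).exists
    obtain ⟨x, hxM, hxr, h3⟩ := hA r hr2.2 (right_mem_Icc.2 hr2.1)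
    refine hball' x ?_ hxM h3
    have := hpr' x (subset_closure hxM) (by rw [hτn, hxr]; exact hr1)
    simpa using this

lemma IsCurve.map {m : ℕ} {F : Filter (Fin m → ℝ)} {w : (Fin m → ℝ) → (Fin m → ℝ)}
    (h : IsCurve F w) (L : (Fin m → ℝ) ≃L[ℝ] (Fin m → ℝ)) :
    IsCurve (F.map L) (fun x => L (w (L.symm x))) := by
  have hL0 : Tendsto L (𝓝 0) (𝓝 0) := by simpa using L.continuous.tendsto 0
  have hcomp : ∀ {a : (Fin m → ℝ) → ℝ}, AnalyticAt ℝ a 0 → AnalyticAt ℝ (fun x => a (L x)) 0 :=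
    fun ha => ha.comp_clm (L : (Fin m → ℝ) →L[ℝ] (Fin m → ℝ))
  have hfd : ∀ (a : (Fin m → ℝ) → ℝ) x v, fderiv ℝ (fun x => a (L x)) x v = fderiv ℝ a (L x) (L v) :=
    fun a x v => by
      have := L.comp_right_fderiv (f := a) (x := x)
      exact congrArg (fun A : (Fin m → ℝ) →L[ℝ] ℝ => A v) this
  refine ⟨h.neBot.map _, (map_mono h.le).trans hL0, fun a ha => ?_, ?_, ?_, ?_⟩
  · exact h.dich _ (hcomp ha)
  · have h1 : AnalyticAt ℝ (fun x => w (L.symm x)) 0 :=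
      AnalyticAt.fun_comp (by simpa using h.an)
        ((L.symm : (Fin m → ℝ) →L[ℝ] (Fin m → ℝ)).analyticAt 0)
    exact AnalyticAt.fun_comp
      ((L : (Fin m → ℝ) →L[ℝ] (Fin m → ℝ)).analyticAt (w (L.symm 0))) h1
  · obtain ⟨l, hl, hl0, hl'⟩ := h.outward
    refine ⟨fun x => l (L.symm x), hl.comp_clm (L.symm : (Fin m → ℝ) →L[ℝ] (Fin m → ℝ)),
      by simpa using hl0, ?_⟩
    rw [eventually_map]
    filter_upwards [hl'] with x hx
    rw [← hfd]
    simpa using hx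
  · intro T₁ T₂ ψ h1 h2 h3 h4 h5
    rw [eventually_map] at h3 h4 h5 ⊢
    simp only [frequently_map]
    refine h.flow (fun x => T₁ (L x)) (fun x => T₂ (L x)) (fun x => ψ (L x)) (hcomp h1) (hcomp h2)
      h3 h4 ?_
    filter_upwards [h5] with x hx p1 p2
    obtain ⟨q1, q2⟩ := hx p1 p2
    refine ⟨DifferentiableAt.comp x (g := ψ) q1 L.differentiableAt, ?_⟩
    rw [hfd]
    simpa using q2

/-- Curve selection: a semianalytic germ at `0` with `0` in its closure contains a germ of curve. -/
theorem exists_isCurve {m : ℕ} {ι : Type} [Fintype ι] {g : ι → (Fin m → ℝ) → ℝ}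
    (hg : ∀ i, AnalyticAt ℝ (g i) 0) {i₀ : ι} (hi₀ : g i₀ 0 = 0) {Q : Set ((Fin m → ℝ) → ℝ)}
    (hQ : ∀ a ∈ Q, AnalyticAt ℝ a 0) (h : ∃ᶠ x in 𝓝 0, (∀ i, 0 < g i x) ∧ ∀ a ∈ Q, a x = 0) :
    ∃ F w, IsCurve F w ∧ (∀ᶠ x in F, ∀ i, 0 < g i x) ∧ ∀ a ∈ Q, ∀ᶠ x in F, a x = 0 := by
  obtain ⟨F, hF, hFQ⟩ := exists_isGood {x | ∀ i, 0 < g i x} Q hQ h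
  obtain ⟨L, d, hN⟩ := exists_normal m le_rfl _ F hF (fun i hi => absurd i.2 (not_lt.2 hi))
  have hF' : IsGood {x | ∀ i, 0 < g i (L x)} (F.comap L) := hF.comap L
  obtain ⟨M, N, δ, V, hC⟩ := exists_isCover (g := fun i x => g i (L x))
    (fun i => (hg i).comp_clm (L : (Fin m → ℝ) →L[ℝ] (Fin m → ℝ))) (i₀ := i₀) (by simpa using hi₀) hF' hN
  have hd := hC.eq_one hF' hN
  subst hd
  have hcurve := (hC.isCurve hF' hN.le).map L
  rw [map_comap_of_surjective L.surjective] at hcurve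
  exact ⟨F, _, hcurve, hF.mem, hFQ⟩

/-! ### Growth along a germ of curve -/

lemma analyticAt_fderiv_apply {m : ℕ} {E : Type*} [NormedAddCommGroup E] [NormedSpace ℝ E]
    [FiniteDimensional ℝ E] {a : (Fin m → ℝ) → E}
    {w : (Fin m → ℝ) → (Fin m → ℝ)} (ha : AnalyticAt ℝ a 0) (hw : AnalyticAt ℝ w 0) :
    AnalyticAt ℝ (fun x => fderiv ℝ a x (w x)) 0 := by
  have h1 : ContDiffAt ℝ ⊤ (fun x => fderiv ℝ a x) 0 := ha.fderiv.contDiffAt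
  have h2 : ContDiffAt ℝ ⊤ (fun x => fderiv ℝ a x (w x)) 0 := h1.clm_apply hw.contDiffAt
  exact h2.analyticAt

/-- A set `{T₁ > 0, T₂ > 0}` misses the germ of curve as soon as it carries a function which
decreases along `w` and becomes arbitrarily small near `0`. -/
lemma IsCurve.not_pos {m : ℕ} {F : Filter (Fin m → ℝ)} {w : (Fin m → ℝ) → (Fin m → ℝ)}
    (h : IsCurve F w) {T₁ T₂ : (Fin m → ℝ) → ℝ} (ψ : (Fin m → ℝ) → ℝ)
    (hT₁ : AnalyticAt ℝ T₁ 0) (hT₂ : AnalyticAt ℝ T₂ 0)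
    (hψ : ∀ᶠ x in F, 0 < T₁ x → 0 < T₂ x → DifferentiableAt ℝ ψ x ∧ fderiv ℝ ψ x (w x) < 0)
    (hlow : ∀ᶠ x₀ in F, 0 < T₁ x₀ → 0 < T₂ x₀ →
      ∀ᶠ x in F, 0 < T₁ x → 0 < T₂ x → ψ x < ψ x₀) :
    ∀ᶠ x in F, 0 < T₁ x → ¬ 0 < T₂ x := by
  by_cases h1 : ∀ᶠ x in F, T₁ x = 0
  · filter_upwards [h1] with x hx h2
    exact absurd hx h2.ne'
  by_cases h2 : ∀ᶠ x in F, T₂ x = 0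
  · filter_upwards [h2] with x hx _ h3
    exact absurd hx h3.ne'
  filter_upwards [h.flow T₁ T₂ ψ hT₁ hT₂ h1 h2 hψ, hlow] with x₀ hx hl p1 p2
  refine hx p1 p2 ?_
  filter_upwards [hl p1 p2] with x hx h3
  exact absurd (hx h3.1 h3.2.1) (not_lt.2 h3.2.2)

/-- An analytic function vanishing at `0` has increasing absolute value along the curve. -/
lemma IsCurve.mul_deriv_pos {m : ℕ} {F : Filter (Fin m → ℝ)} {w : (Fin m → ℝ) → (Fin m → ℝ)}
    (h : IsCurve F w) {a : (Fin m → ℝ) → ℝ} (ha : AnalyticAt ℝ a 0) (ha0 : a 0 = 0) :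
    ∀ᶠ x in F, a x ≠ 0 → 0 < a x * fderiv ℝ a x (w x) := by
  have hne := h.neBot
  rcases h.dich a ha with hz | hnz
  · filter_upwards [hz] with x hx h'
    exact absurd hx h'
  have hDa := analyticAt_fderiv_apply ha h.an
  have hT := ha.mul hDa
  have hda : ∀ᶠ x in F, DifferentiableAt ℝ a x :=
    (ha.eventually_analyticAt.filter_mono h.le).mono fun x hx => hx.differentiableAt
  obtain ⟨l, hl, hl0, hlw⟩ := h.outward
  have hdl : ∀ᶠ x in F, DifferentiableAt ℝ l x :=
    (hl.eventually_analyticAt.filter_mono h.le).mono fun x hx => hx.differentiableAt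
  have hl1 : ∀ᶠ x in F, |l x| < 1 := by
    have := (hl.continuousAt.abs).tendsto.mono_left h.le
    rw [hl0, abs_zero] at this
    exact this.eventually_lt_const one_pos
  have hone : AnalyticAt ℝ (fun _ : Fin m → ℝ => (1 : ℝ)) 0 := analyticAt_const
  rcases h.dich _ hT with hTz | hTnz
  · -- If `a` were constant along the curve, `a ^ 2 * (1 - l ^ 2)` would be decreasing.
    have := h.not_pos (T₁ := fun _ => 1) (T₂ := fun _ => 1) (fun x => a x ^ 2 * (1 - l x ^ 2))
      hone hone ?_ ?_
    · obtain ⟨x, hx⟩ := this.exists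
      exact absurd one_pos (hx one_pos)
    · filter_upwards [hTz, hnz, hda, hdl, hlw, hl1] with x h1 h2 h3 h4 h5 h6 _ _
      have ha2 := HasFDerivAt.fun_mul h3.hasFDerivAt h3.hasFDerivAt
      have hl2 := HasFDerivAt.fun_mul h4.hasFDerivAt h4.hasFDerivAt
      have hd := HasFDerivAt.fun_mul ha2 (HasFDerivAt.const_sub hl2 1)
      simp only [← pow_two] at hd
      refine ⟨hd.differentiableAt, ?_⟩
      rw [hd.fderiv]
      simp only [Pi.mul_apply] at h1
      have : 0 < a x ^ 2 * (l x * fderiv ℝ l x (w x)) := by positivity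
      simp
      linear_combination 2 * (1 - l x ^ 2) * h1 + 2 * this
    · filter_upwards [hnz, hl1] with x₀ h2 h6 _ _
      have hpos : 0 < a x₀ ^ 2 * (1 - l x₀ ^ 2) := by
        have := (sq_lt_one_iff_abs_lt_one _).2 h6
        have : 0 < 1 - l x₀ ^ 2 := by linarith
        positivity
      have ht : ContinuousAt (fun x => a x ^ 2 * (1 - l x ^ 2)) 0 :=
        (ha.continuousAt.pow 2).mul (continuousAt_const.sub (hl.continuousAt.pow 2))
      have ht := ht.tendsto.mono_left h.le
      simp only [ha0, ne_eq, OfNat.ofNat_ne_zero, not_false_eq_true, zero_pow, zero_mul] at ht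
      filter_upwards [ht.eventually_lt_const hpos] with x hx _ _ using hx
  · have := h.not_pos (T₁ := fun x => -(a x * fderiv ℝ a x (w x))) (T₂ := fun _ => 1)
      (fun x => a x ^ 2) hT.neg hone ?_ ?_
    · filter_upwards [this, hTnz] with x h1 h2 _
      have h3 : ¬ 0 < -(a x * fderiv ℝ a x (w x)) := fun h4 => h1 h4 one_pos
      exact lt_of_le_of_ne (by linarith [not_lt.1 h3]) (Ne.symm h2)
    · filter_upwards [hda] with x h3 h4 _
      have hd := HasFDerivAt.fun_mul h3.hasFDerivAt h3.hasFDerivAt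
      simp only [← pow_two] at hd
      refine ⟨hd.differentiableAt, ?_⟩
      rw [hd.fderiv]
      simp
      linarith
    · filter_upwards [hnz] with x₀ h2 _ _
      have hpos : 0 < a x₀ ^ 2 := by positivity
      have ht := (ha.continuousAt.pow 2).tendsto.mono_left h.le
      simp only [Pi.pow_apply, ha0, ne_eq, OfNat.ofNat_ne_zero, not_false_eq_true, zero_pow] at ht
      filter_upwards [ht.eventually_lt_const hpos] with x hx _ _ using hx

/-- Along the curve the bounded quotient `a / b` moves slower than `κ * log |b|`, since otherwise
`κ * log |b| - a / b` would not tend to `-∞`. -/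
lemma IsCurve.wronskian_le {m : ℕ} {F : Filter (Fin m → ℝ)} {w : (Fin m → ℝ) → (Fin m → ℝ)}
    (h : IsCurve F w) {a b : (Fin m → ℝ) → ℝ} (ha : AnalyticAt ℝ a 0) (hb : AnalyticAt ℝ b 0)
    (hb0 : b 0 = 0) {κ : ℝ} (hκ : 0 < κ) :
    ∀ᶠ x in F, |a x| ≤ |b x| →
      b x * fderiv ℝ a x (w x) - a x * fderiv ℝ b x (w x) ≤ κ * (b x * fderiv ℝ b x (w x)) := by
  rcases h.dich b hb with hz | hnz
  · filter_upwards [hz] with x hx h'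
    rw [hx, abs_zero, abs_nonpos_iff] at h'
    simp [hx, h']
  have hDa := analyticAt_fderiv_apply ha h.an
  have hDb := analyticAt_fderiv_apply hb h.an
  have hda : ∀ᶠ x in F, DifferentiableAt ℝ a x :=
    (ha.eventually_analyticAt.filter_mono h.le).mono fun x hx => hx.differentiableAt
  have hdb : ∀ᶠ x in F, DifferentiableAt ℝ b x :=
    (hb.eventually_analyticAt.filter_mono h.le).mono fun x hx => hx.differentiableAt
  have hquot : ∀ x, b x ≠ 0 → 0 < 4 * b x ^ 2 - a x ^ 2 → |a x / b x| < 2 := by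
    intro x h1 h2
    rw [abs_div, div_lt_iff₀ (abs_pos.2 h1)]
    refine lt_of_pow_lt_pow_left₀ 2 (by positivity) ?_
    rw [mul_pow, sq_abs, sq_abs]
    linarith
  have key := h.not_pos
    (T₁ := fun x => b x * fderiv ℝ a x (w x) - a x * fderiv ℝ b x (w x)
      - κ * (b x * fderiv ℝ b x (w x)))
    (T₂ := fun x => 4 * b x ^ 2 - a x ^ 2) (fun x => κ * Real.log (b x) - a x / b x)
    (((hb.mul hDa).sub (ha.mul hDb)).sub (analyticAt_const.mul (hb.mul hDb)))
    ((analyticAt_const.mul (hb.pow 2)).sub (ha.pow 2)) ?_ ?_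
  · filter_upwards [key, hnz] with x h1 h2 h3
    by_contra h4
    refine h1 (by linarith [not_le.1 h4]) ?_
    have h5 := sq_le_sq.2 h3
    have : 0 < b x ^ 2 := by positivity
    linarith
  · filter_upwards [hnz, hda, hdb] with x h1 h2 h3 h4 _
    have hinv : HasFDerivAt (fun y => (b y)⁻¹) (-(b x ^ 2)⁻¹ • fderiv ℝ b x) x :=
      (hasDerivAt_inv h1).comp_hasFDerivAt x h3.hasFDerivAt
    have hd := HasFDerivAt.fun_sub (HasFDerivAt.const_mul (HasFDerivAt.log h3.hasFDerivAt h1) κ)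
      (HasFDerivAt.fun_mul h2.hasFDerivAt hinv)
    simp only [← div_eq_mul_inv] at hd
    refine ⟨hd.differentiableAt, ?_⟩
    rw [hd.fderiv]
    have h5 : 0 < b x ^ 2 := by positivity
    have h6 := div_pos h4 h5
    simp only [sub_apply, add_apply, smul_apply, smul_eq_mul]
    rw [← neg_pos]
    refine h6.trans_eq ?_
    field_simp
    ring
  · refine Eventually.of_forall fun x₀ _ _ => ?_
    have hbt : Tendsto b F (𝓝[≠] 0) := by
      refine tendsto_nhdsWithin_iff.2 ⟨?_, hnz⟩
      have := hb.continuousAt.tendsto.mono_left h.le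
      rwa [hb0] at this
    have hlog := (Real.tendsto_log_nhdsNE_zero.comp hbt).eventually_lt_atBot
      ((κ * Real.log (b x₀) - a x₀ / b x₀ - 2) / κ)
    filter_upwards [hlog, hnz] with x h1 h2 _ h3
    have h4 := (abs_lt.1 (hquot x h2 h3)).1
    simp only [Function.comp_apply, lt_div_iff₀ hκ] at h1
    linarith

/-- Along the curve, a complex-valued analytic function `φ` with `φ 0 = 0` moves almost radially:
`conj φ * dφ(w)` lies in a narrow sector around the positive real axis. -/
lemma IsCurve.sector {m : ℕ} {F : Filter (Fin m → ℝ)} {w : (Fin m → ℝ) → (Fin m → ℝ)}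
    (h : IsCurve F w) {φ : (Fin m → ℝ) → ℂ} (hφ : AnalyticAt ℝ φ 0) (hφ0 : φ 0 = 0) {κ : ℝ}
    (hκ : 0 < κ) :
    ∀ᶠ x in F, 0 ≤ ((starRingEnd ℂ) (φ x) * fderiv ℝ φ x (w x)).re ∧
      (φ x ≠ 0 → 0 < ((starRingEnd ℂ) (φ x) * fderiv ℝ φ x (w x)).re) ∧
      |((starRingEnd ℂ) (φ x) * fderiv ℝ φ x (w x)).im| ≤
        κ * ((starRingEnd ℂ) (φ x) * fderiv ℝ φ x (w x)).re := by
  set a : (Fin m → ℝ) → ℝ := fun x => (φ x).re with ha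
  set b : (Fin m → ℝ) → ℝ := fun x => (φ x).im with hb
  have haa : AnalyticAt ℝ a 0 := (Complex.reCLM.analyticAt _).comp hφ
  have hba : AnalyticAt ℝ b 0 := (Complex.imCLM.analyticAt _).comp hφ
  have ha0 : a 0 = 0 := by simp [ha, hφ0]
  have hb0 : b 0 = 0 := by simp [hb, hφ0]
  have hd : ∀ᶠ x in F, DifferentiableAt ℝ φ x :=
    (hφ.eventually_analyticAt.filter_mono h.le).mono fun x hx => hx.differentiableAt
  have hneg : ∀ (c : (Fin m → ℝ) → ℝ) (x v : Fin m → ℝ),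
      fderiv ℝ (fun y => -c y) x v = -fderiv ℝ c x v := fun c x v => by
    rw [fderiv_fun_neg]; rfl
  filter_upwards [hd, h.mul_deriv_pos haa ha0, h.mul_deriv_pos hba hb0,
    h.wronskian_le haa hba hb0 hκ, h.wronskian_le haa.fun_neg hba hb0 hκ,
    h.wronskian_le hba haa ha0 hκ, h.wronskian_le hba.fun_neg haa ha0 hκ] with
    x hd p1 p2 q1 q2 q3 q4
  simp only [hneg, abs_neg] at q2 q4
  have hDa : (fderiv ℝ φ x (w x)).re = fderiv ℝ a x (w x) := by
    have := (Complex.reCLM.hasFDerivAt.comp x hd.hasFDerivAt).fderiv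
    exact (congrArg (fun A : (Fin m → ℝ) →L[ℝ] ℝ => A (w x)) this).symm
  have hDb : (fderiv ℝ φ x (w x)).im = fderiv ℝ b x (w x) := by
    have := (Complex.imCLM.hasFDerivAt.comp x hd.hasFDerivAt).fderiv
    exact (congrArg (fun A : (Fin m → ℝ) →L[ℝ] ℝ => A (w x)) this).symm
  have hne : φ x ≠ 0 → a x ≠ 0 ∨ b x ≠ 0 := by
    intro h1
    by_contra! h2
    exact h1 (Complex.ext h2.1 h2.2)
  have p1' : 0 ≤ a x * fderiv ℝ a x (w x) := by
    by_cases h1 : a x = 0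
    · simp [h1]
    · exact (p1 h1).le
  have p2' : 0 ≤ b x * fderiv ℝ b x (w x) := by
    by_cases h1 : b x = 0
    · simp [h1]
    · exact (p2 h1).le
  have hre : ((starRingEnd ℂ) (φ x) * fderiv ℝ φ x (w x)).re =
      a x * fderiv ℝ a x (w x) + b x * fderiv ℝ b x (w x) := by
    rw [Complex.mul_re, Complex.conj_re, Complex.conj_im, hDa, hDb]
    ring
  have him : ((starRingEnd ℂ) (φ x) * fderiv ℝ φ x (w x)).im =
      a x * fderiv ℝ b x (w x) - b x * fderiv ℝ a x (w x) := by
    rw [Complex.mul_im, Complex.conj_re, Complex.conj_im, hDa, hDb]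
    ring
  rw [hre, him]
  refine ⟨by linarith, fun h1 => ?_, ?_⟩
  · rcases hne h1 with h2 | h2
    · linarith [p1 h2]
    · linarith [p2 h2]
  · have k1 := mul_nonneg hκ.le p1'
    have k2 := mul_nonneg hκ.le p2'
    rw [abs_le]
    rcases le_total |a x| |b x| with h1 | h1
    · have := q1 h1
      have := q2 h1
      constructor <;> linarith
    · have := q3 h1
      have := q4 h1
      constructor <;> linarith

/-! ### Gradient parallel to position -/

/-- Curve selection with one additional weak inequality. -/
lemma exists_isCurve_nonneg {m : ℕ} {g G : (Fin m → ℝ) → ℝ} (hg : AnalyticAt ℝ g 0)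
    (hG : AnalyticAt ℝ G 0) (hg0 : g 0 = 0) {Q : Set ((Fin m → ℝ) → ℝ)}
    (hQ : ∀ a ∈ Q, AnalyticAt ℝ a 0)
    (h : ∃ᶠ x in 𝓝 0, 0 < g x ∧ 0 ≤ G x ∧ ∀ a ∈ Q, a x = 0) :
    ∃ F w, IsCurve F w ∧ (∀ᶠ x in F, 0 < g x ∧ 0 ≤ G x) ∧ ∀ a ∈ Q, ∀ᶠ x in F, a x = 0 := by
  have h' : ∃ᶠ x in 𝓝 0, ((∀ i : Bool, 0 < (bif i then g else G) x) ∧ ∀ a ∈ Q, a x = 0) ∨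
      ((∀ _ : Unit, 0 < g x) ∧ ∀ a ∈ insert G Q, a x = 0) := by
    refine h.mono fun x ⟨h1, h2, h3⟩ => ?_
    rcases h2.lt_or_eq with h4 | h4
    · exact Or.inl ⟨fun i => by cases i <;> assumption, h3⟩
    · exact Or.inr ⟨fun _ => h1, fun a ha => ha.elim (fun e => by rw [e, ← h4]) (h3 a)⟩
  rcases frequently_or_distrib.1 h' with h1 | h1
  · obtain ⟨F, w, hF, h2, h3⟩ := exists_isCurve (g := fun i : Bool => bif i then g else G)
      (fun i => by cases i <;> assumption) (i₀ := true) hg0 hQ h1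
    exact ⟨F, w, hF, h2.mono fun x hx => ⟨hx true, (hx false).le⟩, h3⟩
  · obtain ⟨F, w, hF, h2, h3⟩ := exists_isCurve (g := fun _ : Unit => g) (fun _ => hg) (i₀ := ())
      hg0 (fun a (ha : a ∈ insert G Q) => ha.elim (fun e => by rw [e]; exact hG) (hQ a)) h1
    refine ⟨F, w, hF, ?_, fun a ha => h3 a (mem_insert_of_mem _ ha)⟩
    filter_upwards [h2, h3 G (mem_insert _ _)] with x hx hy
    exact ⟨hx (), hy.ge⟩

lemma abs_arg_lt_of_abs_im_lt_re {c : ℂ} (h : |c.im| < c.re) :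
    |Complex.arg c| < Real.pi / 4 := by
  have hre : 0 < c.re := (abs_nonneg _).trans_lt h
  have h1 := abs_lt.1 (Complex.abs_arg_lt_pi_div_two_iff.2 (Or.inl hre))
  have h2 := abs_lt.1 h
  rw [← Real.arctan_tan h1.1 h1.2, Complex.tan_arg, ← Real.arctan_one, abs_lt, ← Real.arctan_neg,
    Real.arctan_strictMono.lt_iff_lt, Real.arctan_strictMono.lt_iff_lt, lt_div_iff₀ hre,
    div_lt_iff₀ hre]
  constructor <;> linarith

/-- If `W * P` is a positive multiple of `A` and both `P` and `A` are close to the positive real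
axis, so is `W`. -/
lemma abs_im_lt_re_of_mul_eq {W P A : ℂ} {r : ℝ} (hr : 0 < r) (h : (r : ℂ) * A = W * P)
    (hP : 0 < P.re) (hP' : |P.im| ≤ 1 / 4 * P.re) (hA : 0 < A.re) (hA' : |A.im| ≤ 1 / 4 * A.re) :
    |W.im| < W.re := by
  have hPA : 0 < A.re * P.re := mul_pos hA hP
  have h1 : |A.im| * P.re ≤ 1 / 4 * (A.re * P.re) := by
    have := mul_le_mul_of_nonneg_right hA' hP.le
    linarith
  have h2 : |P.im| * A.re ≤ 1 / 4 * (A.re * P.re) := by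
    have := mul_le_mul_of_nonneg_right hP' hA.le
    linarith
  have h3 : |A.im * P.im| ≤ 1 / 4 * (A.re * P.re) := by
    rw [abs_mul]
    have := mul_le_mul hA' hP' (abs_nonneg _) (by linarith)
    nlinarith
  have h4 : |A.im * P.re| ≤ 1 / 4 * (A.re * P.re) := by rwa [abs_mul, abs_of_pos hP]
  have h5 : |P.im * A.re| ≤ 1 / 4 * (A.re * P.re) := by rwa [abs_mul, abs_of_pos hA]
  have hre := congrArg Complex.re h
  have him := congrArg Complex.im h
  simp only [Complex.mul_re, Complex.mul_im, Complex.ofReal_re, Complex.ofReal_im, zero_mul,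
    sub_zero, add_zero] at hre him
  set D := P.re ^ 2 + P.im ^ 2 with hD
  have hDpos : 0 < D := by positivity
  have k1 : D * W.re = r * (A.re * P.re + A.im * P.im) := by
    rw [hD]; linear_combination -P.re * hre - P.im * him
  have k2 : D * W.im = r * (A.im * P.re - P.im * A.re) := by
    rw [hD]; linear_combination -P.re * him + P.im * hre
  refine lt_of_mul_lt_mul_left ?_ hDpos.le
  rw [← abs_of_pos hDpos, ← abs_mul, abs_of_pos hDpos, k1, k2, abs_mul, abs_of_pos hr]
  refine mul_lt_mul_of_pos_left ?_ hr
  rw [abs_le] at h3 h4 h5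
  rw [abs_lt]
  constructor <;> linarith

/-- Along a germ of curve on which the gradient of `f` is parallel to `z` and `f ≠ 0`, the number
`Df(z)(z) * conj (f z)` has argument less than `π / 4`: differentiating along the curve, both
`conj f * Df(z)(w)` and `⟪z, w⟫` are almost positive real. Here `φ` is `f` in real coordinates. -/
lemma IsCurve.abs_im_lt_re {m n : ℕ} {F : Filter (Fin m → ℝ)} {w : (Fin m → ℝ) → (Fin m → ℝ)}
    (h : IsCurve F w) (e : (Fin m → ℝ) ≃L[ℝ] EuclideanSpace ℂ (Fin n)) {φ : (Fin m → ℝ) → ℂ}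
    (hφ : AnalyticAt ℝ φ 0) (hφ0 : φ 0 = 0) (hne : ∀ᶠ x in F, φ x ≠ 0)
    (hpar : ∀ᶠ x in F, ∀ v, fderiv ℝ φ x v * inner ℂ (e x) (e x) =
      fderiv ℝ φ x x * inner ℂ (e x) (e v)) :
    ∀ᶠ x in F, |(fderiv ℝ φ x x * (starRingEnd ℂ) (φ x)).im| <
      (fderiv ℝ φ x x * (starRingEnd ℂ) (φ x)).re := by
  let c : Fin n → ((Fin m → ℝ) →L[ℝ] ℂ) := fun j =>
    ((EuclideanSpace.proj j : EuclideanSpace ℂ (Fin n) →L[ℂ] ℂ).restrictScalars ℝ).comp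
      (e : (Fin m → ℝ) →L[ℝ] EuclideanSpace ℂ (Fin n))
  have hc : ∀ j x, c j x = e x j := fun j x => rfl
  have hsec : ∀ᶠ x in F, ∀ j, 0 ≤ ((starRingEnd ℂ) (c j x) * c j (w x)).re ∧
      (c j x ≠ 0 → 0 < ((starRingEnd ℂ) (c j x) * c j (w x)).re) ∧
      |((starRingEnd ℂ) (c j x) * c j (w x)).im| ≤
        1 / 4 * ((starRingEnd ℂ) (c j x) * c j (w x)).re := by
    refine eventually_all.2 fun j => ?_
    have := h.sector (φ := fun x => c j x) ((c j).analyticAt 0) (map_zero _)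
      (κ := 1 / 4) (by norm_num)
    simpa only [ContinuousLinearMap.fderiv] using this
  filter_upwards [hne, hpar, hsec, h.sector hφ hφ0 (κ := 1 / 4) (by norm_num)] with
    x hx hpar hsec ⟨_, hA, hA'⟩
  have hx0 : e x ≠ 0 := by
    intro h1
    have : x = 0 := e.injective (by rw [h1, map_zero])
    exact hx (by rw [this, hφ0])
  have hinner : inner ℂ (e x) (e (w x)) = ∑ j, (starRingEnd ℂ) (c j x) * c j (w x) := by
    simp only [PiLp.inner_apply, hc]
    refine Finset.sum_congr rfl fun j _ => ?_
    simp [mul_comm]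
  refine abs_im_lt_re_of_mul_eq (r := ‖e x‖ ^ 2) (P := inner ℂ (e x) (e (w x)))
    (A := (starRingEnd ℂ) (φ x) * fderiv ℝ φ x (w x)) (by positivity) ?_ ?_ ?_ (hA hx) hA'
  · have := hpar (w x)
    rw [inner_self_eq_norm_sq_to_K] at this
    push_cast
    linear_combination (starRingEnd ℂ) (φ x) * this
  · rw [hinner, Complex.re_sum]
    obtain ⟨j, hj⟩ : ∃ j, e x j ≠ 0 := by
      by_contra! h1
      exact hx0 (by ext j; exact h1 j)
    exact Finset.sum_pos' (fun j _ => (hsec j).1) ⟨j, Finset.mem_univ _, (hsec j).2.1 hj⟩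
  · rw [hinner, Complex.re_sum, Complex.im_sum, Finset.mul_sum]
    exact (Finset.abs_sum_le_sum_abs _ _).trans (Finset.sum_le_sum fun j _ => (hsec j).2.2)

/-- There are no points `z → 0` at which `f ≠ 0`, the gradient of `f` is parallel to `z`, and
`Df(z)(z) * conj (f z)` lies on a fixed side outside the sector `|Im| < Re`. -/
lemma not_frequently_bad {m n : ℕ} (e : (Fin m → ℝ) ≃L[ℝ] EuclideanSpace ℂ (Fin n))
    {φ : (Fin m → ℝ) → ℂ} (hφ : AnalyticAt ℝ φ 0) (hφ0 : φ 0 = 0) {s : ℝ} (hs : |s| ≤ 1) :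
    ¬ ∃ᶠ x in 𝓝 0, φ x ≠ 0 ∧
      (∀ v, fderiv ℝ φ x v * inner ℂ (e x) (e x) = fderiv ℝ φ x x * inner ℂ (e x) (e v)) ∧
      (fderiv ℝ φ x x * (starRingEnd ℂ) (φ x)).re ≤
        s * (fderiv ℝ φ x x * (starRingEnd ℂ) (φ x)).im := by
  intro hfreq
  let R : Fin m → (Fin m → ℝ) → ℂ := fun k x =>
    fderiv ℝ φ x (Pi.single k 1) * inner ℂ (e x) (e x) -
      fderiv ℝ φ x x * inner ℂ (e x) (e (Pi.single k 1))
  have hea : AnalyticAt ℝ (fun x => e x) 0 :=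
    (e : (Fin m → ℝ) →L[ℝ] EuclideanSpace ℂ (Fin n)).analyticAt 0
  have hinn : ∀ v : (Fin m → ℝ) → (Fin m → ℝ), AnalyticAt ℝ v 0 →
      AnalyticAt ℝ (fun x => inner ℂ (e x) (e (v x))) 0 := by
    intro v hv
    have h1 : AnalyticAt ℝ (fun x => e (v x)) 0 :=
      AnalyticAt.fun_comp ((e : (Fin m → ℝ) →L[ℝ] EuclideanSpace ℂ (Fin n)).analyticAt _) hv
    exact (hea.contDiffAt (n := ⊤)).inner ℂ (h1.contDiffAt (n := ⊤)) |>.analyticAt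
  have hdx : AnalyticAt ℝ (fun x => fderiv ℝ φ x x) 0 := analyticAt_fderiv_apply hφ analyticAt_id
  have hR : ∀ k, AnalyticAt ℝ (R k) 0 := fun k =>
    ((analyticAt_fderiv_apply hφ analyticAt_const).mul (hinn _ analyticAt_id)).sub
      (hdx.mul (hinn _ analyticAt_const))
  have hre : ∀ {ψ : (Fin m → ℝ) → ℂ}, AnalyticAt ℝ ψ 0 → AnalyticAt ℝ (fun x => (ψ x).re) 0 :=
    fun hψ => (Complex.reCLM.analyticAt _).comp hψ
  have him : ∀ {ψ : (Fin m → ℝ) → ℂ}, AnalyticAt ℝ ψ 0 → AnalyticAt ℝ (fun x => (ψ x).im) 0 :=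
    fun hψ => (Complex.imCLM.analyticAt _).comp hψ
  have hconj : AnalyticAt ℝ (fun x => (starRingEnd ℂ) (φ x)) 0 :=
    ((Complex.conjCLE : ℂ →L[ℝ] ℂ).analyticAt _).comp hφ
  have hW := hdx.fun_mul hconj
  let Q : Set ((Fin m → ℝ) → ℝ) :=
    range (fun k x => (R k x).re) ∪ range (fun k x => (R k x).im)
  obtain ⟨F, w, hF, h1, h2⟩ := exists_isCurve_nonneg
    (g := fun x => (φ x).re ^ 2 + (φ x).im ^ 2)
    (G := fun x => s * (fderiv ℝ φ x x * (starRingEnd ℂ) (φ x)).im -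
      (fderiv ℝ φ x x * (starRingEnd ℂ) (φ x)).re) (Q := Q)
    (((hre hφ).pow 2).add ((him hφ).pow 2)) ((analyticAt_const.mul (him hW)).sub (hre hW))
    (by simp [hφ0])
    (by
      rintro a (⟨k, rfl⟩ | ⟨k, rfl⟩)
      · exact hre (hR k)
      · exact him (hR k))
    (by
      refine hfreq.mono fun x ⟨p1, p2, p3⟩ => ⟨?_, sub_nonneg.2 p3, ?_⟩
      · have := Complex.normSq_pos.2 p1
        rw [Complex.normSq_apply] at this
        linarith
      · have : ∀ k, R k x = 0 := fun k => sub_eq_zero.2 (p2 _)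
        rintro a (⟨k, rfl⟩ | ⟨k, rfl⟩) <;> simp [this])
  have hne := hF.neBot
  have hφne : ∀ᶠ x in F, φ x ≠ 0 := by
    filter_upwards [h1] with x hx h3
    simp [h3] at hx
  have hpar : ∀ᶠ x in F, ∀ v, fderiv ℝ φ x v * inner ℂ (e x) (e x) =
      fderiv ℝ φ x x * inner ℂ (e x) (e v) := by
    have hR0 : ∀ᶠ x in F, ∀ k, R k x = 0 := by
      refine eventually_all.2 fun k => ?_
      filter_upwards [h2 _ (Or.inl ⟨k, rfl⟩), h2 _ (Or.inr ⟨k, rfl⟩)] with x p1 p2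
      exact Complex.ext p1 p2
    filter_upwards [hR0] with x hx v
    have key : ∀ k, fderiv ℝ φ x (Pi.single k 1) * inner ℂ (e x) (e x) =
      fderiv ℝ φ x x * inner ℂ (e x) (e (Pi.single k 1)) := fun k => sub_eq_zero.1 (hx k)
    rw [pi_eq_sum_univ' v]
    simp only [map_sum, map_smul, inner_sum, Finset.sum_mul, Finset.mul_sum]
    refine Finset.sum_congr rfl fun k _ => ?_
    rw [inner_smul_right_eq_smul, smul_mul_assoc, key, mul_smul_comm]
  obtain ⟨x, hx1, hx2⟩ := ((hF.abs_im_lt_re e hφ hφ0 hφne hpar).and h1).exists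
  have h3 := hx2.2
  have h4 : s * (fderiv ℝ φ x x * (starRingEnd ℂ) (φ x)).im ≤
      |(fderiv ℝ φ x x * (starRingEnd ℂ) (φ x)).im| := by
    refine (le_abs_self _).trans ?_
    rw [abs_mul]
    exact mul_le_of_le_one_left (abs_nonneg _) hs
  linarith

lemma fderiv_eq_of_gradLog_eq {n : ℕ} {f : EuclideanSpace ℂ (Fin n) → ℂ}
    {z : EuclideanSpace ℂ (Fin n)} (hfz : f z ≠ 0) {lam : ℂ} (h : gradLog f z = lam • z)
    (v : EuclideanSpace ℂ (Fin n)) :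
    fderiv ℂ f z v = f z * (starRingEnd ℂ) lam * inner ℂ z v := by
  have h1 : gradient f z = ((starRingEnd ℂ) (f z) * lam) • z := by
    rw [mul_smul, ← h, gradLog, smul_inv_smul₀]
    simpa using hfz
  rw [← inner_gradient_left, h1, inner_smul_left]
  simp

theorem stmt_12 (n : ℕ) (hn : 1 ≤ n)
    (U : Set (EuclideanSpace ℂ (Fin n))) (hU : IsOpen U)
    (h0U : (0 : EuclideanSpace ℂ (Fin n)) ∈ U)
    (f : EuclideanSpace ℂ (Fin n) → ℂ) (hf : DifferentiableOn ℂ f U) (hf0 : f 0 = 0) :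
    ∃ ε₀ > (0 : ℝ), ∀ z ∈ U, 0 < ‖z‖ → ‖z‖ ≤ ε₀ → f z ≠ 0 →
      LinearIndependent ℂ ![z, gradLog f z] ∨
      ∃ lam : ℂ, lam ≠ 0 ∧ gradLog f z = lam • z ∧ |Complex.arg lam| < Real.pi / 4 := by
  let e : (Fin (Module.finrank ℝ (EuclideanSpace ℂ (Fin n))) → ℝ) ≃L[ℝ] EuclideanSpace ℂ (Fin n) :=
    ContinuousLinearEquiv.ofFinrankEq (by simp)
  let φ := fun x => f (e x)
  have he0 : Tendsto e (𝓝 0) (𝓝 0) := by simpa using e.continuous.tendsto 0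
  have hUn : U ∈ 𝓝 0 := hU.mem_nhds h0U
  have hd : ∀ᶠ x in 𝓝 0, DifferentiableAt ℂ f (e x) := by
    filter_upwards [he0 hUn] with x hx
    exact hf.differentiableAt (hU.mem_nhds hx)
  have hφ : AnalyticAt ℝ φ 0 := by
    let E := EuclideanSpace.equiv (Fin n) ℂ
    have h1 : AnalyticAt ℂ (fun y => f (E.symm y)) 0 := by
      refine analyticAt_of_differentiable_pi ?_
      have hE : Tendsto E.symm (𝓝 0) (𝓝 0) := by simpa using E.symm.continuous.tendsto 0
      filter_upwards [hE hUn] with y hy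
      exact (hf.differentiableAt (hU.mem_nhds hy)).comp y E.symm.differentiableAt
    have h2 := h1.restrictScalars (𝕜 := ℝ)
    let L := ((E : EuclideanSpace ℂ (Fin n) →L[ℂ] (Fin n → ℂ)).restrictScalars ℝ).comp
      (e : (Fin (Module.finrank ℝ (EuclideanSpace ℂ (Fin n))) → ℝ) →L[ℝ] EuclideanSpace ℂ (Fin n))
    have h3 : AnalyticAt ℝ (fun x => f (E.symm (L x))) 0 :=
      AnalyticAt.fun_comp (g := fun y => f (E.symm y)) (f := L) (by rw [map_zero]; exact h2)
        (L.analyticAt 0)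
    simpa [L, φ] using h3
  have hφ0 : φ 0 = 0 := by simp [φ, hf0]
  have hfd : ∀ᶠ x in 𝓝 0, ∀ v, fderiv ℝ φ x v = fderiv ℂ f (e x) (e v) := by
    filter_upwards [hd] with x hx v
    have h1 := (hx.hasFDerivAt.restrictScalars ℝ).comp x e.hasFDerivAt
    exact congrArg (fun A => A v) h1.fderiv
  have g1 := not_frequently.1 (not_frequently_bad e hφ hφ0 (s := 1) (by simp))
  have g2 := not_frequently.1 (not_frequently_bad e hφ hφ0 (s := -1) (by simp))
  have hes : Tendsto e.symm (𝓝 0) (𝓝 0) := by simpa using e.symm.continuous.tendsto 0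
  obtain ⟨ε, hε, hball⟩ := Metric.eventually_nhds_iff_ball.1
    (hes.eventually (hfd.and (g1.and g2)))
  refine ⟨ε / 2, half_pos hε, fun z _ hz hzε hfz => ?_⟩
  obtain ⟨b1, b2, b3⟩ := hball z (by simpa using hzε.trans_lt (half_lt_self hε))
  simp only [φ, e.apply_symm_apply] at b1 b2 b3
  by_cases hli : LinearIndependent ℂ ![z, gradLog f z]
  · exact Or.inl hli
  right
  rw [LinearIndependent.pair_iff' (norm_pos_iff.1 hz)] at hli
  push Not at hli
  obtain ⟨lam, hlam⟩ := hli
  have hDf := fderiv_eq_of_gradLog_eq hfz hlam.symm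
  simp only [b1, e.apply_symm_apply, hDf] at b2 b3
  have hW : f z * (starRingEnd ℂ) lam * inner ℂ z z * (starRingEnd ℂ) (f z) =
      ((Complex.normSq (f z) * ‖z‖ ^ 2 : ℝ) : ℂ) * (starRingEnd ℂ) lam := by
    have h1 : inner ℂ z z = ((‖z‖ ^ 2 : ℝ) : ℂ) := by
      rw [inner_self_eq_norm_sq_to_K]
      push_cast
      rfl
    rw [h1, Complex.ofReal_mul, Complex.normSq_eq_conj_mul_self]
    ring
  have hr : 0 < Complex.normSq (f z) * ‖z‖ ^ 2 := mul_pos (Complex.normSq_pos.2 hfz) (by positivity)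
  simp only [hW, Complex.re_ofReal_mul, Complex.im_ofReal_mul, Complex.conj_re, Complex.conj_im]
    at b2 b3
  have key : |lam.im| < lam.re := by
    rw [abs_lt]
    constructor
    · by_contra h1
      refine b2 ⟨hfz, fun v => by ring, ?_⟩
      nlinarith [not_lt.1 h1]
    · by_contra h1
      refine b3 ⟨hfz, fun v => by ring, ?_⟩
      nlinarith [not_lt.1 h1]
  refine ⟨lam, ?_, hlam.symm, abs_arg_lt_of_abs_im_lt_re key⟩
  rintro rfl
  simp at key
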